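/- If A is a connected skew shape with N boxes that is not an equitable ribbon, then there exists an equitable ribbon R with N boxes such that s_R − s_A is Schur-positive and supp(A) is strictly contained in supp(R). Consequently, every connected skew shape that is maximal among connected skew shapes of size N in the Schur-positivity order, or in the support-containment order, is an equitable ribbon. -/

import Mathlib

/-- A skew shape `outer / inner`: the boxes of the Young diagram of `outer`
that are not boxes of the Young diagram of `inner`. -/
structure SkewShape where
  outer : YoungDiagram
  inner : YoungDiagram
  inner_le : inner ≤ outer

namespace SkewShape

/-- The set of boxes of a skew shape. -/
def cells (A : SkewShape) : Finset (ℕ × ℕ) := A.outer.cells \ A.inner.cells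

/-- The size of a skew shape is its number of boxes. -/
def size (A : SkewShape) : ℕ := A.cells.card

/-- The length of row `i` of a skew shape. -/
def rowLen (A : SkewShape) (i : ℕ) : ℕ := (A.cells.filter fun c => c.1 = i).card

/-- The length of column `j` of a skew shape. -/
def colLen (A : SkewShape) (j : ℕ) : ℕ := (A.cells.filter fun c => c.2 = j).card

/-- The set of indices of nonempty rows. -/
def rowSet (A : SkewShape) : Finset ℕ := A.cells.image Prod.fst

/-- The set of indices of nonempty columns. -/
def colSet (A : SkewShape) : Finset ℕ := A.cells.image Prod.snd

/-- The number of nonempty rows. -/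
def numRows (A : SkewShape) : ℕ := A.rowSet.card

/-- The number of nonempty columns. -/
def numCols (A : SkewShape) : ℕ := A.colSet.card

/-- `rows A`: the multiset of lengths of the nonempty rows of `A`
(equivalently, that sequence sorted into weakly decreasing order). -/
def rows (A : SkewShape) : Multiset ℕ := A.rowSet.val.map A.rowLen

/-- `cols A`: the multiset of lengths of the nonempty columns of `A`. -/
def cols (A : SkewShape) : Multiset ℕ := A.colSet.val.map A.colLen

/-- A skew shape is disconnected if its boxes can be split into two nonempty
parts such that no box of one part shares a row or a column with a box of the
other part. -/
def Disconnected (A : SkewShape) : Prop :=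
  ∃ B C : Finset (ℕ × ℕ), B.Nonempty ∧ C.Nonempty ∧ B ∪ C = A.cells ∧ B ∩ C = ∅ ∧
    ∀ b ∈ B, ∀ c ∈ C, b.1 ≠ c.1 ∧ b.2 ≠ c.2

/-- A skew shape is connected if it is nonempty and not disconnected. -/
def Connected (A : SkewShape) : Prop := A.cells.Nonempty ∧ ¬ A.Disconnected

/-- A ribbon is a connected skew shape containing no 2×2 block of boxes. -/
def Ribbon (A : SkewShape) : Prop :=
  A.Connected ∧ ∀ i j : ℕ, ¬ ((i, j) ∈ A.cells ∧ (i, j + 1) ∈ A.cells ∧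
    (i + 1, j) ∈ A.cells ∧ (i + 1, j + 1) ∈ A.cells)

/-- The lengths of any two nonempty rows differ by at most one. -/
def RowEquitable (A : SkewShape) : Prop :=
  ∀ i ∈ A.rowSet, ∀ i' ∈ A.rowSet, A.rowLen i ≤ A.rowLen i' + 1

/-- The lengths of any two nonempty columns differ by at most one. -/
def ColEquitable (A : SkewShape) : Prop :=
  ∀ j ∈ A.colSet, ∀ j' ∈ A.colSet, A.colLen j ≤ A.colLen j' + 1

/-- Equitable: both row equitable and column equitable. -/
def Equitable (A : SkewShape) : Prop := A.RowEquitable ∧ A.ColEquitable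

/-- A filling of a skew shape is semistandard if its entries are positive
integers, weakly increasing along rows and strictly increasing down columns. -/
def IsSsyt (A : SkewShape) (T : ℕ × ℕ → ℕ) : Prop :=
  (∀ c ∈ A.cells, 1 ≤ T c) ∧
  (∀ i j j', (i, j) ∈ A.cells → (i, j') ∈ A.cells → j ≤ j' → T (i, j) ≤ T (i, j')) ∧
  (∀ i i' j, (i, j) ∈ A.cells → (i', j) ∈ A.cells → i < i' → T (i, j) < T (i', j))

end SkewShape

/-- `c` comes weakly before `d` in the reverse reading order (right to left
along rows, rows top to bottom). -/
def ReadsBefore (c d : ℕ × ℕ) : Prop := c.1 < d.1 ∨ (c.1 = d.1 ∧ d.2 ≤ c.2)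

instance : DecidableRel ReadsBefore := fun c d => by unfold ReadsBefore; infer_instance

namespace SkewShape

/-- The number of boxes of `A` filled with the entry `k` by the filling `T`. -/
def content (A : SkewShape) (T : ℕ × ℕ → ℕ) (k : ℕ) : ℕ :=
  (A.cells.filter fun c => T c = k).card

/-- A Littlewood--Richardson filling: a semistandard filling such that every
prefix of the reverse reading word contains at least as many `k`'s as
`(k+1)`'s, for every positive `k`. -/
def IsLR (A : SkewShape) (T : ℕ × ℕ → ℕ) : Prop :=
  A.IsSsyt T ∧ ∀ d ∈ A.cells, ∀ k : ℕ,
    (A.cells.filter fun c => T c = k + 2 ∧ ReadsBefore c d).card ≤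
    (A.cells.filter fun c => T c = k + 1 ∧ ReadsBefore c d).card

end SkewShape

/-- The `i`-th largest part (0-indexed) of a multiset of natural numbers,
i.e. the `i`-th entry of the multiset sorted into weakly decreasing order. -/
def part (lam : Multiset ℕ) (i : ℕ) : ℕ := (lam.sort (· ≥ ·)).getD i 0

namespace SkewShape

/-- The support of a skew shape `A`: the set of partitions `lam` (multisets of
positive integers) for which there exists an LR filling of `A` of content `lam`. -/
def supp (A : SkewShape) : Set (Multiset ℕ) :=
  {lam | 0 ∉ lam ∧ ∃ T : ℕ × ℕ → ℕ, A.IsLR T ∧ ∀ i : ℕ, A.content T (i + 1) = part lam i}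

/-- The set of LR fillings of `A` of content `lam` (normalized to vanish
outside the boxes of `A`). -/
def LRset (A : SkewShape) (lam : Multiset ℕ) : Set ((ℕ × ℕ) → ℕ) :=
  {T | A.IsLR T ∧ (∀ c, c ∉ A.cells → T c = 0) ∧ ∀ i : ℕ, A.content T (i + 1) = part lam i}

/-- `s_A − s_B` is Schur-positive: for every partition, the number of LR
fillings of `B` of that content is at most the number for `A`. -/
def SchurPosDiff (A B : SkewShape) : Prop :=
  ∀ lam : Multiset ℕ, (B.LRset lam).ncard ≤ (A.LRset lam).ncard

end SkewShape

/-- The sum of the `k` largest parts of a multiset of natural numbers. -/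
def psum (lam : Multiset ℕ) (k : ℕ) : ℕ := ((lam.sort (· ≥ ·)).take k).sum

/-- Dominance order: `DomLe lam mu` means `lam ⊴ mu`, i.e. for every `k` the
sum of the `k` largest parts of `lam` is at most that of `mu`. -/
def DomLe (lam mu : Multiset ℕ) : Prop := ∀ k : ℕ, psum lam k ≤ psum mu k

/-- The conjugate (transpose) of a partition given as a multiset: its parts
are the numbers `#{x ∈ lam | x ≥ j}` for `j = 1, 2, …`. -/
def conj (lam : Multiset ℕ) : Multiset ℕ :=
  ((Finset.range lam.sum).val.map fun j => Multiset.card (lam.filter fun x => j + 1 ≤ x)).filter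
    fun y => y ≠ 0

/-!
Reading the boxes of a connected skew shape `A` from right to left and top to bottom turns its
Littlewood–Richardson fillings into ballot words. Such a word weakly descends inside a row and
strictly ascends at the end of a row, because consecutive rows of a connected shape overlap. These
conditions mention only the row ends, and for a ribbon they are all the conditions: the fillings
of `A` inject into those of the ribbon with the same row lengths, by a content-preserving map.

A ballot word is determined by the matrix counting each letter in each row, and for these matrices
row lengths can be made more equal: moving one letter between adjacent rows at a minimal cut
keeps the ballot and overlap conditions, and cascades of such moves inject the words for one
sequence of row lengths into those for a more balanced one. Transposing words exchanges rows and
columns, so alternating both steps ends at an equitable ribbon `R`, which dominates `A`.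

If also `supp R ⊆ supp A`, then `A` has a filling of each of the contents of `R`. The most balanced
content of the row pattern of `R` forces the rows of `A` to be balanced. The transposed content does
the same for the columns and also has the largest possible first part, so that every row of `A` is
filled with ones but for its rightmost box. This excludes `2 × 2` blocks, so `A` is an equitable
ribbon.
-/

namespace RibbonMaximality

/-! ### Moving a letter between two rows -/

section Argmin

variable {ι : Type*} [Fintype ι] [Nonempty ι]

/-- The minimum value of a function on a finite nonempty type. -/
def minValue (f : ι → ℕ) : ℕ := Finset.univ.inf' Finset.univ_nonempty f

lemma minValue_le (f : ι → ℕ) (t : ι) : minValue f ≤ f t :=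
  Finset.inf'_le _ (Finset.mem_univ t)

lemma le_minValue_iff {f : ι → ℕ} {k : ℕ} : k ≤ minValue f ↔ ∀ t, k ≤ f t := by
  simp [minValue]

lemma exists_eq_minValue (f : ι → ℕ) : ∃ t, f t = minValue f := by
  obtain ⟨t, -, ht⟩ := Finset.exists_mem_eq_inf' Finset.univ_nonempty f
  exact ⟨t, ht.symm⟩

lemma minValue_eq_of_forall_le {f : ι → ℕ} {t : ι} (h : ∀ s, f t ≤ f s) : minValue f = f t :=
  le_antisymm (minValue_le f t) (le_minValue_iff.2 h)

variable [LinearOrder ι]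

/-- The first point at which a function on a finite linear order attains its minimum. -/
def firstArgmin (f : ι → ℕ) : ι :=
  (Finset.univ.filter fun t => f t = minValue f).min'
    ((exists_eq_minValue f).imp fun _ ht => by simpa using ht)

/-- The last point at which a function on a finite linear order attains its minimum. -/
def lastArgmin (f : ι → ℕ) : ι :=
  (Finset.univ.filter fun t => f t = minValue f).max'
    ((exists_eq_minValue f).imp fun _ ht => by simpa using ht)

lemma apply_firstArgmin (f : ι → ℕ) : f (firstArgmin f) = minValue f := by
  have := Finset.min'_mem (Finset.univ.filter fun t => f t = minValue f)
    ((exists_eq_minValue f).imp fun _ ht => by simpa using ht)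
  exact (Finset.mem_filter.1 this).2

lemma apply_lastArgmin (f : ι → ℕ) : f (lastArgmin f) = minValue f :=
  apply_firstArgmin (ι := ιᵒᵈ) f

lemma firstArgmin_le {f : ι → ℕ} {t : ι} (h : f t ≤ minValue f) : firstArgmin f ≤ t :=
  Finset.min'_le _ _ (by simpa using h.antisymm (minValue_le f t))

lemma le_lastArgmin {f : ι → ℕ} {t : ι} (h : f t ≤ minValue f) : t ≤ lastArgmin f :=
  firstArgmin_le (ι := ιᵒᵈ) h

lemma minValue_lt_of_lt_firstArgmin {f : ι → ℕ} {t : ι} (h : t < firstArgmin f) :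
    minValue f < f t :=
  lt_of_not_ge fun h' => h.not_ge (firstArgmin_le h')

lemma minValue_lt_of_lastArgmin_lt {f : ι → ℕ} {t : ι} (h : lastArgmin f < t) :
    minValue f < f t :=
  lt_of_not_ge fun h' => h.not_ge (le_lastArgmin h')

lemma firstArgmin_eq {f : ι → ℕ} {t : ι} (h : f t = minValue f)
    (h' : ∀ s < t, minValue f < f s) : firstArgmin f = t :=
  (firstArgmin_le h.le).antisymm <| le_of_not_gt fun hlt =>
    (h' _ hlt).ne' (apply_firstArgmin f)

lemma lastArgmin_eq {f : ι → ℕ} {t : ι} (h : f t = minValue f)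
    (h' : ∀ s, t < s → minValue f < f s) : lastArgmin f = t :=
  firstArgmin_eq (ι := ιᵒᵈ) h h'

lemma minValue_add_indicator_Ioi (f : ι → ℕ) (t : ι) :
    minValue (fun s => f s + if t < s then 1 else 0) =
      minValue f + if t < firstArgmin f then 1 else 0 := by
  refine le_antisymm ?_ (le_minValue_iff.2 fun s => ?_)
  · exact apply_firstArgmin f ▸ minValue_le (fun s => f s + if t < s then 1 else 0) _
  · have hle := minValue_le f s
    by_cases hs : s < firstArgmin f
    · have := minValue_lt_of_lt_firstArgmin hs
      split_ifs <;> omega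
    · have : t < firstArgmin f → t < s := fun h => h.trans_le (not_lt.1 hs)
      split_ifs <;> grind

lemma minValue_add_indicator_Iio (f : ι → ℕ) (t : ι) :
    minValue (fun s => f s + if s < t then 1 else 0) =
      minValue f + if lastArgmin f < t then 1 else 0 :=
  minValue_add_indicator_Ioi (ι := ιᵒᵈ) f t

lemma lastArgmin_lt_iff_firstArgmin_add_indicator_Iio_lt (f : ι → ℕ) (t : ι) :
    lastArgmin f < t ↔ firstArgmin (fun s => f s + if s < t then 1 else 0) < t := by
  have hmin := minValue_add_indicator_Iio f t
  constructor <;> intro h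
  · refine (firstArgmin_le ?_).trans_lt h
    rw [hmin, apply_lastArgmin f]
  · by_contra hlt
    have hfirst := apply_firstArgmin fun s => f s + if s < t then 1 else 0
    rw [hmin, if_pos h, if_neg hlt] at hfirst
    have := minValue_le f (firstArgmin fun s => f s + if s < t then 1 else 0)
    omega

end Argmin

section TwoRows

variable {ι : Type*} [Fintype ι] [LinearOrder ι]

/-- For rows given by the multiplicities of their letters: the number of letters below `t` in the
upper row `u` plus the number of letters above `t` in the lower row `v`. -/
def cut (u v : ι → ℕ) (t : ι) : ℕ :=
  ∑ s, ((if s < t then u s else 0) + if t < s then v s else 0)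

lemma cut_orderDual (u v : ι → ℕ) (t : ι) : cut (ι := ιᵒᵈ) v u t = cut u v t :=
  Finset.sum_congr rfl fun _ _ => add_comm _ _

lemma cut_mono {u u' v v' : ι → ℕ} (hu : u ≤ u') (hv : v ≤ v') (t : ι) :
    cut u v t ≤ cut u' v' t := by
  refine Finset.sum_le_sum fun s _ => ?_
  have hus : u s ≤ u' s := hu s
  have hvs : v s ≤ v' s := hv s
  split_ifs <;> omega

lemma cut_add_single_left (u v : ι → ℕ) (t s : ι) :
    cut (u + Pi.single t 1) v s = cut u v s + if t < s then 1 else 0 := by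
  have h : (if t < s then 1 else 0) = ∑ x, if x = t then if t < s then 1 else 0 else 0 := by simp
  rw [h, cut, cut, ← Finset.sum_add_distrib]
  refine Finset.sum_congr rfl fun x _ => ?_
  by_cases hx : x = t
  · subst hx
    simp only [Pi.add_apply, Pi.single_eq_same, if_true]
    split_ifs <;> omega
  · simp [hx]

lemma cut_add_single_right (u v : ι → ℕ) (t s : ι) :
    cut u (v + Pi.single t 1) s = cut u v s + if s < t then 1 else 0 := by
  rw [← cut_orderDual u, ← cut_orderDual u]
  exact cut_add_single_left (ι := ιᵒᵈ) v u t s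

lemma cut_add_apply_of_covBy {u v : ι → ℕ} {s t : ι} (h : s ⋖ t) :
    cut u v t + v t = cut u v s + u s := by
  have hu : u s = ∑ x, if x = s then u s else 0 := by simp
  have hv : v t = ∑ x, if x = t then v t else 0 := by simp
  rw [hu, hv, cut, cut, ← Finset.sum_add_distrib, ← Finset.sum_add_distrib]
  refine Finset.sum_congr rfl fun x _ => ?_
  have hlt : x < t ↔ x < s ∨ x = s :=
    ⟨fun hx => (h.le_of_lt hx).lt_or_eq, fun hx => hx.elim (·.trans h.lt) (· ▸ h.lt)⟩
  have hgt : s < x ↔ t < x ∨ x = t :=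
    ⟨fun hx => (h.ge_of_gt hx).lt_or_eq.imp_right Eq.symm,
      fun hx => hx.elim h.lt.trans (· ▸ h.lt)⟩
  have := h.lt
  grind

lemma sum_le_cut_add_apply {u : ι → ℕ} (v : ι → ℕ) {t : ι} (h : ∀ s, t < s → u s = 0) :
    ∑ s, u s ≤ cut u v t + u t := by
  have hut : u t = ∑ s, if s = t then u t else 0 := by simp
  rw [hut, cut, ← Finset.sum_add_distrib]
  refine Finset.sum_le_sum fun s _ => ?_
  rcases lt_trichotomy s t with hs | rfl | hs
  · rw [if_pos hs, if_neg hs.ne]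
    omega
  · simp
  · simp [h s hs]

variable [Nonempty ι]

/-- The size of a largest matching of letters of `u` with strictly greater letters of `v`, expressed
as a minimal cut. -/
abbrev overlap (u v : ι → ℕ) : ℕ := minValue (cut u v)

lemma overlap_orderDual (u v : ι → ℕ) : overlap (ι := ιᵒᵈ) v u = overlap u v :=
  congrArg minValue <| funext <| cut_orderDual u v

lemma firstArgmin_cut_orderDual (u v : ι → ℕ) :
    firstArgmin (cut (ι := ιᵒᵈ) v u) = OrderDual.toDual (lastArgmin (cut u v)) :=
  congrArg (firstArgmin (ι := ιᵒᵈ)) <| funext <| cut_orderDual u v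

lemma overlap_mono {u u' v v' : ι → ℕ} (hu : u ≤ u') (hv : v ≤ v') :
    overlap u v ≤ overlap u' v' :=
  le_minValue_iff.2 fun t => (minValue_le _ t).trans (cut_mono hu hv t)

lemma overlap_le_sum_left (u v : ι → ℕ) : overlap u v ≤ ∑ t, u t := by
  obtain ⟨t, ht⟩ := Finite.exists_max (id : ι → ι)
  refine (minValue_le _ t).trans (Finset.sum_le_sum fun s _ => ?_)
  rw [if_neg (show ¬t < s from (ht s).not_gt)]
  split_ifs <;> simp

lemma overlap_le_sum_right (u v : ι → ℕ) : overlap u v ≤ ∑ t, v t :=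
  overlap_orderDual u v ▸ overlap_le_sum_left (ι := ιᵒᵈ) v u

lemma overlap_add_single_left (u v : ι → ℕ) (t : ι) :
    overlap (u + Pi.single t 1) v = overlap u v + if t < firstArgmin (cut u v) then 1 else 0 := by
  rw [overlap, funext (cut_add_single_left u v t), minValue_add_indicator_Ioi]

lemma overlap_add_single_right (u v : ι → ℕ) (t : ι) :
    overlap u (v + Pi.single t 1) = overlap u v + if lastArgmin (cut u v) < t then 1 else 0 := by
  rw [overlap, funext (cut_add_single_right u v t), minValue_add_indicator_Iio]

lemma overlap_add_single_right' (u v : ι → ℕ) (t : ι) :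
    overlap u (v + Pi.single t 1) =
      overlap u v + if firstArgmin (cut u (v + Pi.single t 1)) < t then 1 else 0 := by
  simp_rw [overlap_add_single_right, lastArgmin_lt_iff_firstArgmin_add_indicator_Iio_lt,
    ← cut_add_single_right]

lemma overlap_add_single_left' (u v : ι → ℕ) (t : ι) :
    overlap (u + Pi.single t 1) v =
      overlap u v + if t < lastArgmin (cut (u + Pi.single t 1) v) then 1 else 0 := by
  have h := overlap_add_single_right' (ι := ιᵒᵈ) v u t
  rw [overlap_orderDual u v] at h
  rw [← overlap_orderDual (u + Pi.single t 1) v]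
  refine h.trans ?_
  congr 2
  exact congrArg (t < ·) (firstArgmin_cut_orderDual (u + Pi.single t 1) v)

lemma overlap_pos_iff {u v : ι → ℕ} : 0 < overlap u v ↔ ∃ s t, s < t ∧ 0 < u s ∧ 0 < v t := by
  constructor
  · intro h
    by_contra! hno
    by_cases hu : ∃ s, 0 < u s
    · obtain ⟨s, hs, hmin⟩ := WellFounded.has_min wellFounded_lt {s | 0 < u s} hu
      refine (h.trans_le (minValue_le _ s)).ne' (Finset.sum_eq_zero fun x _ => ?_)
      have hbelow : x < s → u x = 0 := fun hx => Nat.eq_zero_of_not_pos fun h => hmin x h hx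
      have habove : s < x → v x = 0 := fun hx => Nat.eq_zero_of_le_zero (hno s x hx hs)
      grind
    · exact (h.trans_le (overlap_le_sum_left u v)).ne'
        (Finset.sum_eq_zero fun s _ => by simpa using fun h => hu ⟨s, h⟩)
  · rintro ⟨s, t, hst, hs, ht⟩
    refine le_minValue_iff.2 fun x => Finset.sum_pos' (fun _ _ => Nat.zero_le _) ?_
    rcases lt_or_ge s x with hx | hx
    · exact ⟨s, Finset.mem_univ s, by rw [if_pos hx]; omega⟩
    · exact ⟨t, Finset.mem_univ t, by rw [if_pos (hx.trans_lt hst)]; omega⟩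

lemma sum_le_overlap_add_overlap {u v w : ι → ℕ}
    (h : lastArgmin (cut u v) < firstArgmin (cut v w)) :
    ∑ t, v t ≤ overlap u v + overlap v w := by
  rw [overlap, overlap, ← apply_lastArgmin (cut u v), ← apply_firstArgmin (cut v w), cut, cut,
    ← Finset.sum_add_distrib]
  refine Finset.sum_le_sum fun s _ => ?_
  rcases lt_or_ge (lastArgmin (cut u v)) s with hs | hs
  · rw [if_pos hs]; omega
  · rw [if_pos (hs.trans_lt h)]; omega

lemma eq_zero_of_overlap_add_overlap_le_sum {u v w : ι → ℕ}
    (h : lastArgmin (cut u v) < firstArgmin (cut v w))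
    (hle : overlap u v + overlap v w ≤ ∑ t, v t) :
    (∀ t < lastArgmin (cut u v), u t = 0) ∧ (∀ t, firstArgmin (cut v w) < t → w t = 0) ∧
      ∀ t, lastArgmin (cut u v) < t → t < firstArgmin (cut v w) → v t = 0 := by
  set p := lastArgmin (cut u v)
  set q := firstArgmin (cut v w)
  have hsum : ∑ t, v t = ∑ t, (((if t < p then u t else 0) + if p < t then v t else 0) +
      ((if t < q then v t else 0) + if q < t then w t else 0)) := by
    rw [Finset.sum_add_distrib]
    change _ = cut u v p + cut v w q
    rw [apply_lastArgmin (cut u v), apply_firstArgmin (cut v w)]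
    exact (sum_le_overlap_add_overlap h).antisymm hle
  have hterm : ∀ t, v t = ((if t < p then u t else 0) + if p < t then v t else 0) +
      ((if t < q then v t else 0) + if q < t then w t else 0) := fun t =>
    (Finset.sum_eq_sum_iff_of_le fun t _ => by grind).1 hsum t (Finset.mem_univ t)
  refine ⟨fun t ht => ?_, fun t ht => ?_, fun t ht ht' => ?_⟩ <;> have := hterm t <;> grind

/-- The crystal operator on two adjacent rows: one letter moves from the upper row `u` to the lower
row `v` at a minimal cut of what stays in place, so that the overlap of the rows is unchanged. -/
def Transfer (t : ι) (u v u' v' : ι → ℕ) : Prop :=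
  u = u' + Pi.single t 1 ∧ v' = v + Pi.single t 1 ∧ cut u' v t = overlap u' v

namespace Transfer

variable {t : ι} {u v w u' v' : ι → ℕ}

lemma orderDual (h : Transfer t u v u' v') : Transfer (ι := ιᵒᵈ) t v' u' v u := by
  refine ⟨h.2.1, h.1, ?_⟩
  exact (cut_orderDual u' v t).trans (h.2.2.trans (overlap_orderDual u' v).symm)

lemma cut_eq (h : Transfer t u v u' v') (s : ι) :
    cut u v s = cut u' v s + if t < s then 1 else 0 := by
  rw [h.1, cut_add_single_left]

lemma overlap_eq_and_lastArgmin_eq (h : Transfer t u v u' v') :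
    overlap u v = overlap u' v ∧ lastArgmin (cut u v) = t := by
  have ht : cut u v t = overlap u' v := by simp [h.cut_eq, h.2.2]
  have hmin : overlap u v = overlap u' v := by
    rw [← ht]
    refine minValue_eq_of_forall_le fun s => ?_
    rw [ht, h.cut_eq]
    exact (minValue_le _ s).trans (Nat.le_add_right _ _)
  refine ⟨hmin, lastArgmin_eq (ht.trans hmin.symm) fun s hs => ?_⟩
  change overlap u v < _
  rw [hmin, h.cut_eq, if_pos hs]
  exact Nat.lt_succ_of_le (minValue_le _ s)

lemma lastArgmin_eq (h : Transfer t u v u' v') : lastArgmin (cut u v) = t :=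
  h.overlap_eq_and_lastArgmin_eq.2

lemma firstArgmin_eq (h : Transfer t u v u' v') : firstArgmin (cut u' v') = t := by
  have := h.orderDual.lastArgmin_eq
  rwa [funext (cut_orderDual (ι := ι) u' v')] at this

lemma overlap_eq (h : Transfer t u v u' v') : overlap u' v' = overlap u v := by
  have := h.orderDual.overlap_eq_and_lastArgmin_eq.1
  rw [overlap_orderDual, overlap_orderDual] at this
  rw [this, h.overlap_eq_and_lastArgmin_eq.1]

lemma lower_le_of_covBy {s : ι} (h : Transfer t u v u' v') (hts : t ⋖ s) : v s ≤ u' t := by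
  have := cut_add_apply_of_covBy (u := u') (v := v) hts
  have := h.2.2.trans_le (minValue_le _ s)
  omega

lemma upper_le_of_covBy {s : ι} (h : Transfer t u v u' v') (hst : s ⋖ t) : u' s ≤ v t := by
  have := cut_add_apply_of_covBy (u := u') (v := v) hst
  have := h.2.2.trans_le (minValue_le _ s)
  omega

end Transfer

lemma Transfer.unique {t₁ t₂ : ι} {u₁ v₁ u₂ v₂ u' v' : ι → ℕ} (h₁ : Transfer t₁ u₁ v₁ u' v')
    (h₂ : Transfer t₂ u₂ v₂ u' v') : u₁ = u₂ ∧ v₁ = v₂ := by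
  obtain rfl : t₁ = t₂ := h₁.firstArgmin_eq.symm.trans h₂.firstArgmin_eq
  exact ⟨h₁.1.trans h₂.1.symm, add_right_cancel (h₁.2.1.symm.trans h₂.2.1)⟩

lemma exists_transfer {u v : ι → ℕ} (h : overlap u v < ∑ t, u t) :
    ∃ t u' v', Transfer t u v u' v' := by
  set t := lastArgmin (cut u v)
  have hmin : cut u v t = overlap u v := apply_lastArgmin _
  have hpos : 0 < u t := by
    by_cases hmax : IsMax t
    · have := sum_le_cut_add_apply (u := u) v fun s hs => absurd hs hmax.not_lt
      omega
    · obtain ⟨s, hs⟩ := exists_covBy_of_wellFoundedLT hmax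
      have : overlap u v < cut u v s := minValue_lt_of_lastArgmin_lt hs.lt
      have := cut_add_apply_of_covBy (u := u) (v := v) hs
      omega
  obtain ⟨u', hu⟩ : ∃ u', u = u' + Pi.single t 1 :=
    ⟨u - Pi.single t 1, (tsub_add_cancel_of_le fun x => by
      rw [Pi.single_apply]; split_ifs with hx; exacts [hx ▸ hpos, Nat.zero_le _]).symm⟩
  refine ⟨t, u', _, hu, rfl, (minValue_eq_of_forall_le fun s => ?_).symm⟩
  have hcut : ∀ s, cut u v s = cut u' v s + if t < s then 1 else 0 := by
    rw [hu]; exact cut_add_single_left u' v t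
  have hs := minValue_le (cut u v) s
  have hlt := minValue_lt_of_lastArgmin_lt (f := cut u v) (t := s)
  have := hcut s
  have := hcut t
  grind

lemma Transfer.overlap_pos_of_overlap_pos {t : ι} {u v w u' v' : ι → ℕ} (h : Transfer t u v u' v')
    (hsum : overlap u v + 2 ≤ ∑ t, u t) (hw : 0 < overlap w u) : 0 < overlap w u' := by
  obtain ⟨r, s, hrs, hr, hs⟩ := overlap_pos_iff.1 hw
  have hu : ∀ x, u x = u' x + if x = t then 1 else 0 := fun x => by rw [h.1]; simp [Pi.single_apply]
  by_contra hno
  have hu' : ∀ x, r < x → u' x = 0 := fun x hx =>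
    Nat.eq_zero_of_not_pos fun hx' => hno (overlap_pos_iff.2 ⟨r, x, hx, hr, hx'⟩)
  obtain rfl : s = t := by
    by_contra hst
    simp [hu, hst, hu' s hrs] at hs
  have htop : ∑ x, u x ≤ cut u v s + u s := sum_le_cut_add_apply v fun x hx => by
    simp [hu, hx.ne', hu' x (hrs.trans hx)]
  have hcut : cut u v s = overlap u v := h.lastArgmin_eq ▸ apply_lastArgmin _
  have : u s = 1 := by simp [hu, hu' s hrs]
  omega

end TwoRows

section Lowers

variable {ι : Type*} [Fintype ι] [LinearOrder ι] [Nonempty ι]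

/-- The overlap of rows `i` and `i + 1` of a matrix of letter multiplicities. -/
abbrev rowOverlap (a : ℕ → ι → ℕ) (i : ℕ) : ℕ := overlap (a i) (a (i + 1))

/-- The first minimal cut between rows `i` and `i + 1`. -/
abbrev firstCut (a : ℕ → ι → ℕ) (i : ℕ) : ι := firstArgmin (cut (a i) (a (i + 1)))

/-- The last minimal cut between rows `i` and `i + 1`. -/
abbrev lastCut (a : ℕ → ι → ℕ) (i : ℕ) : ι := lastArgmin (cut (a i) (a (i + 1)))

/-- The total overlap of row `i + 1` with its two neighbours. -/
def jointOverlap (a : ℕ → ι → ℕ) (i : ℕ) : ℕ := rowOverlap a i + rowOverlap a (i + 1)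

/-- The matrix `a'` arises from `a` by the crystal operator moving one letter from row `i` to row
`i + 1`. -/
def Lowers (i : ℕ) (a a' : ℕ → ι → ℕ) : Prop :=
  (∃ t, Transfer t (a i) (a (i + 1)) (a' i) (a' (i + 1))) ∧
    ∀ k, k ≠ i → k ≠ i + 1 → a' k = a k

lemma rowOverlap_congr {a b : ℕ → ι → ℕ} {i : ℕ} (h : a i = b i) (h' : a (i + 1) = b (i + 1)) :
    rowOverlap a i = rowOverlap b i := by
  rw [rowOverlap, h, h']

lemma exists_lowers {i : ℕ} {a : ℕ → ι → ℕ} (h : rowOverlap a i < ∑ t, a i t) :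
    ∃ a', Lowers i a a' := by
  obtain ⟨t, u', v', htransfer⟩ := exists_transfer h
  refine ⟨Function.update (Function.update a i u') (i + 1) v', ⟨t, ?_⟩, fun k hk hk' => ?_⟩
  · simpa using htransfer
  · simp [hk, hk']

namespace Lowers

variable {c i : ℕ} {a a' : ℕ → ι → ℕ}

lemma unique {b : ℕ → ι → ℕ} (ha : Lowers i a a') (hb : Lowers i b a') : a = b := by
  obtain ⟨⟨_, ha'⟩, hrest⟩ := ha
  obtain ⟨⟨_, hb'⟩, hrest'⟩ := hb
  obtain ⟨hupper, hlower⟩ := ha'.unique hb'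
  funext k
  by_cases hk : k = i
  · rw [hk, hupper]
  by_cases hk' : k = i + 1
  · rw [hk', hlower]
  rw [← hrest k hk hk', hrest' k hk hk']

lemma sum_upper (h : Lowers i a a') : ∑ t, a i t = ∑ t, a' i t + 1 := by
  obtain ⟨⟨t, ht⟩, -⟩ := h
  simp [ht.1, Finset.sum_add_distrib]

lemma sum_lower (h : Lowers i a a') : ∑ t, a' (i + 1) t = ∑ t, a (i + 1) t + 1 := by
  obtain ⟨⟨t, ht⟩, -⟩ := h
  simp [ht.2.1, Finset.sum_add_distrib]

lemma upper_le (h : Lowers i a a') : a' i ≤ a i := by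
  obtain ⟨⟨t, ht⟩, -⟩ := h
  rw [ht.1]
  exact le_self_add

lemma le_lower (h : Lowers i a a') : a (i + 1) ≤ a' (i + 1) := by
  obtain ⟨⟨t, ht⟩, -⟩ := h
  rw [ht.2.1]
  exact le_self_add

lemma rowOverlap_eq (h : Lowers i a a') : rowOverlap a' i = rowOverlap a i := by
  obtain ⟨⟨t, ht⟩, -⟩ := h
  exact ht.overlap_eq

lemma firstCut_eq (h : Lowers i a a') : firstCut a' i = lastCut a i := by
  obtain ⟨⟨t, ht⟩, -⟩ := h
  exact ht.firstArgmin_eq.trans ht.lastArgmin_eq.symm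

lemma rowOverlap_of_ne {k : ℕ} (h : Lowers i a a') (hk : k ≠ i) (hk' : k ≠ i + 1)
    (hk'' : k + 1 ≠ i) : rowOverlap a' k = rowOverlap a k :=
  rowOverlap_congr (h.2 _ hk hk') (h.2 _ hk'' (by omega))

lemma rowOverlap_succ (h : Lowers i a a') :
    rowOverlap a' (i + 1) =
      rowOverlap a (i + 1) + if lastCut a i < firstCut a (i + 1) then 1 else 0 := by
  obtain ⟨⟨t, ht⟩, hrest⟩ := h
  rw [rowOverlap, ht.2.1, hrest (i + 1 + 1) (by omega) (by omega), overlap_add_single_left,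
    lastCut, ht.lastArgmin_eq]

lemma rowOverlap_succ' (h : Lowers i a a') :
    rowOverlap a' (i + 1) =
      rowOverlap a (i + 1) + if firstCut a' i < lastCut a' (i + 1) then 1 else 0 := by
  obtain ⟨⟨t, ht⟩, hrest⟩ := h
  rw [rowOverlap, lastCut, firstCut, ht.firstArgmin_eq, ht.2.1,
    hrest (i + 1 + 1) (by omega) (by omega), overlap_add_single_left']

lemma rowOverlap_pred (h : Lowers (i + 1) a a') :
    rowOverlap a i = rowOverlap a' i + if firstCut a i < lastCut a (i + 1) then 1 else 0 := by
  obtain ⟨⟨t, ht⟩, hrest⟩ := h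
  rw [rowOverlap, firstCut, lastCut, ht.lastArgmin_eq, ht.1, ← hrest i (by omega) (by omega),
    overlap_add_single_right']

lemma rowOverlap_pred' (h : Lowers (i + 1) a a') :
    rowOverlap a i = rowOverlap a' i + if lastCut a' i < firstCut a' (i + 1) then 1 else 0 := by
  obtain ⟨⟨t, ht⟩, hrest⟩ := h
  rw [rowOverlap, firstCut, ht.firstArgmin_eq, ht.1, ← hrest i (by omega) (by omega),
    overlap_add_single_right]

lemma rowOverlap_succ_le (h : Lowers i a a') : rowOverlap a (i + 1) ≤ rowOverlap a' (i + 1) :=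
  h.rowOverlap_succ ▸ Nat.le_add_right _ _

lemma rowOverlap_pred_le (h : Lowers (i + 1) a a') : rowOverlap a' i ≤ rowOverlap a i :=
  h.rowOverlap_pred ▸ Nat.le_add_right _ _

lemma rowOverlap_le_of_ne {k : ℕ} (h : Lowers i a a') (hk : k + 1 ≠ i) :
    rowOverlap a k ≤ rowOverlap a' k := by
  rcases eq_or_ne k i with rfl | hne
  · exact h.rowOverlap_eq.ge
  rcases eq_or_ne k (i + 1) with rfl | hne'
  · exact h.rowOverlap_succ_le
  · exact (h.rowOverlap_of_ne hne hne' hk).ge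

end Lowers

/-- After an application of the operator to rows `i + 1` and `i + 2`, the joint overlap is at
most `c`; see `Lowers.lowJoint_iff`. -/
def LowJoint (c : ℕ) (a : ℕ → ι → ℕ) (i : ℕ) : Prop :=
  jointOverlap a i ≤ c + if firstCut a i < lastCut a (i + 1) then 1 else 0

/-- After an application of the operator to rows `i` and `i + 1`, the joint overlap exceeds `c`;
see `Lowers.highJoint_iff`. -/
def HighJoint (c : ℕ) (a : ℕ → ι → ℕ) (i : ℕ) : Prop :=
  c < jointOverlap a i + if lastCut a i < firstCut a (i + 1) then 1 else 0

namespace Lowers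

variable {c i : ℕ} {a a' : ℕ → ι → ℕ}

lemma lowJoint_iff (h : Lowers (i + 1) a a') : LowJoint c a i ↔ jointOverlap a' i ≤ c := by
  have := h.rowOverlap_pred
  have := h.rowOverlap_eq
  grind [LowJoint, jointOverlap]

lemma lowJoint_iff' (h : Lowers i a a') : LowJoint c a' i ↔ jointOverlap a i ≤ c := by
  have := h.rowOverlap_succ'
  have := h.rowOverlap_eq
  grind [LowJoint, jointOverlap]

lemma highJoint_iff (h : Lowers i a a') : HighJoint c a i ↔ c < jointOverlap a' i := by
  have := h.rowOverlap_succ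
  have := h.rowOverlap_eq
  grind [HighJoint, jointOverlap]

lemma highJoint_iff' (h : Lowers (i + 1) a a') : HighJoint c a' i ↔ c < jointOverlap a i := by
  have := h.rowOverlap_pred'
  have := h.rowOverlap_eq
  grind [HighJoint, jointOverlap]

lemma lowJoint (h : Lowers (i + 2) a a') (hlow : LowJoint c a i) : LowJoint c a' i := by
  have hi := h.2 i (by omega) (by omega)
  have hi' := h.2 (i + 1) (by omega) (by omega)
  have hfar : rowOverlap a' i = rowOverlap a i := rowOverlap_congr hi hi'
  have hfirst : firstCut a' i = firstCut a i := by rw [firstCut, hi, hi']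
  have hpred := h.rowOverlap_pred
  by_cases heq : rowOverlap a' (i + 1) = rowOverlap a (i + 1)
  · have hlast : lastCut a (i + 1) ≤ lastCut a' (i + 1) := by
      refine le_lastArgmin ?_
      refine le_trans ?_ ((apply_lastArgmin (cut (a (i + 1)) (a (i + 2)))).trans heq.symm).le
      exact cut_mono hi'.le h.upper_le _
    grind [LowJoint, jointOverlap]
  · grind [LowJoint, jointOverlap]

lemma highJoint (h : Lowers i a a') (hhigh : HighJoint c a (i + 1)) : HighJoint c a' (i + 1) := by
  have hi := h.2 (i + 2) (by omega) (by omega)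
  have hi' := h.2 (i + 3) (by omega) (by omega)
  have hfar : rowOverlap a' (i + 2) = rowOverlap a (i + 2) := rowOverlap_congr hi hi'
  have hfirst : firstCut a' (i + 2) = firstCut a (i + 2) := by rw [firstCut, hi, hi']
  have hsucc := h.rowOverlap_succ
  by_cases heq : rowOverlap a' (i + 1) = rowOverlap a (i + 1)
  · have hlast : lastCut a' (i + 1) ≤ lastCut a (i + 1) := by
      refine le_lastArgmin ?_
      refine le_trans ?_ ((apply_lastArgmin (cut (a' (i + 1)) (a' (i + 2)))).trans heq).le
      exact cut_mono h.le_lower hi.ge _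
    grind [HighJoint, jointOverlap]
  · grind [HighJoint, jointOverlap]

end Lowers

end Lowers

/-! ### Cascades of letter moves -/

section Splice

variable {ι : Type*}

/-- The matrix with the rows of `x` up to row `i` and the rows of `y` below it. -/
def splice (i : ℕ) (x y : ℕ → ι → ℕ) (k : ℕ) : ι → ℕ := if k ≤ i then x k else y k

variable {i k : ℕ} {x y : ℕ → ι → ℕ}

lemma splice_apply_of_le (h : k ≤ i) : splice i x y k = x k := if_pos h

lemma splice_apply_of_lt (h : i < k) : splice i x y k = y k := if_neg h.not_ge

lemma splice_eq_left (h : ∀ k, i < k → x k = y k) : splice i x y = x := by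
  funext k
  by_cases hk : k ≤ i
  · exact splice_apply_of_le hk
  · rw [splice_apply_of_lt (not_le.1 hk), h k (not_le.1 hk)]

lemma splice_eq_right (h : ∀ k ≤ i, x k = y k) : splice i x y = y := by
  funext k
  by_cases hk : k ≤ i
  · rw [splice_apply_of_le hk, h k hk]
  · exact splice_apply_of_lt (not_le.1 hk)

end Splice

section Cascade

variable {ι : Type*} [Fintype ι] [LinearOrder ι] [Nonempty ι]

lemma jointOverlap_congr {a b : ℕ → ι → ℕ} {i : ℕ} (h : ∀ k, i ≤ k → k ≤ i + 2 → a k = b k) :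
    jointOverlap a i = jointOverlap b i := by
  rw [jointOverlap, rowOverlap, rowOverlap, h i le_rfl (by omega), h (i + 1) (by omega) (by omega),
    h (i + 1 + 1) (by omega) le_rfl]
  rfl

namespace Lowers

variable {i j k : ℕ} {a a' b : ℕ → ι → ℕ}

lemma jointOverlap_le_of_lt (h : Lowers j a a') (hji : j < i) :
    jointOverlap a i ≤ jointOverlap a' i := by
  have hfar : rowOverlap a' (i + 1) = rowOverlap a (i + 1) :=
    h.rowOverlap_of_ne (by omega) (by omega) (by omega)
  rcases (Nat.succ_le_of_lt hji).eq_or_lt with rfl | hlt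
  · have := h.rowOverlap_succ_le
    grind [jointOverlap]
  · have : rowOverlap a' i = rowOverlap a i := h.rowOverlap_of_ne (by omega) (by omega) (by omega)
    grind [jointOverlap]

lemma jointOverlap_le_of_gt (h : Lowers j a a') (hij : i + 1 < j) :
    jointOverlap a' i ≤ jointOverlap a i := by
  have hfar : rowOverlap a' i = rowOverlap a i :=
    h.rowOverlap_of_ne (by omega) (by omega) (by omega)
  rcases (Nat.succ_le_of_lt hij).eq_or_lt with rfl | hlt
  · have := h.rowOverlap_pred_le
    grind [jointOverlap]
  · have : rowOverlap a' (i + 1) = rowOverlap a (i + 1) :=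
      h.rowOverlap_of_ne (by omega) (by omega) (by omega)
    grind [jointOverlap]

lemma jointOverlap_of_far (h : Lowers j a a') (hij : j + 1 < i ∨ i + 2 < j) :
    jointOverlap a' i = jointOverlap a i :=
  jointOverlap_congr fun _ _ _ => h.2 _ (by omega) (by omega)

lemma splice_left {x x' y : ℕ → ι → ℕ} (h : Lowers j x x') (hj : j < i) :
    Lowers j (splice i x y) (splice i x' y) := by
  refine ⟨?_, fun k hk hk' => ?_⟩
  · simpa only [splice_apply_of_le (show j ≤ i by omega), splice_apply_of_le (Nat.succ_le_of_lt hj)]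
      using h.1
  · simp only [splice, h.2 k hk hk']

lemma splice_right {x y y' : ℕ → ι → ℕ} (h : Lowers j y y') (hj : i < j) :
    Lowers j (splice i x y) (splice i x y') := by
  refine ⟨?_, fun k hk hk' => ?_⟩
  · simpa only [splice_apply_of_lt hj, splice_apply_of_lt (show i < j + 1 by omega)] using h.1
  · simp only [splice, h.2 k hk hk']

lemma exists_commute (ha : Lowers j a a') (hb : Lowers k b a') (hjk : j + 1 < k) :
    ∃ e, Lowers k e a ∧ Lowers j e b := by
  refine ⟨splice (j + 1) a b, ?_, ?_⟩
  · have := hb.splice_right (x := a) hjk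
    rwa [splice_eq_left fun x hx => (ha.2 x (by omega) (by omega)).symm] at this
  · have := ha.splice_left (y := b) (Nat.lt_succ_self j)
    rwa [splice_eq_right fun x hx => hb.2 x (by omega) (by omega)] at this

end Lowers

/-- Among the operators indexed by `D` that produced `a`, the one at `j` may be undone first: the
joint overlaps decide the order in which neighbouring operators were applied. -/
structure Removable (c : ℕ) (a : ℕ → ι → ℕ) (D : Finset ℕ) (j : ℕ) : Prop where
  mem : j ∈ D
  le_of_pred_mem : ∀ i, i + 1 = j → i ∈ D → jointOverlap a i ≤ c
  lt_of_succ_mem : j + 1 ∈ D → c < jointOverlap a j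

/-- `Cascade c b D d` says that `d` arises from `b` by applying the operators indexed by `D` once
each, in an order that the joint overlaps allow to be reconstructed from `d`. -/
inductive Cascade (c : ℕ) (b : ℕ → ι → ℕ) : Finset ℕ → (ℕ → ι → ℕ) → Prop
  | nil : Cascade c b ∅ b
  | apply {D : Finset ℕ} {j : ℕ} {a a' : ℕ → ι → ℕ} :
      Cascade c b (D.erase j) a → Lowers j a a' → Removable c a' D j → Cascade c b D a'

namespace Removable

variable {c j k : ℕ} {a a' : ℕ → ι → ℕ} {D : Finset ℕ}

lemma succ_ne (hj : Removable c a D j) (hk : Removable c a D k) : j + 1 ≠ k := by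
  rintro rfl
  exact (hj.lt_of_succ_mem hk.mem).not_ge (hk.le_of_pred_mem j rfl hj.mem)

lemma undo_left (hk : Removable c a' D k) (ha : Lowers j a a') (hjk : j + 1 < k) :
    Removable c a (D.erase j) k where
  mem := Finset.mem_erase.2 ⟨by omega, hk.mem⟩
  le_of_pred_mem i hi hmem := (ha.jointOverlap_le_of_lt (by omega)).trans
    (hk.le_of_pred_mem i hi (Finset.mem_of_mem_erase hmem))
  lt_of_succ_mem hmem := by
    rw [← ha.jointOverlap_of_far (Or.inl hjk)]
    exact hk.lt_of_succ_mem (Finset.mem_of_mem_erase hmem)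

lemma undo_right (hj : Removable c a' D j) (ha : Lowers k a a') (hjk : j + 1 < k) :
    Removable c a (D.erase k) j where
  mem := Finset.mem_erase.2 ⟨by omega, hj.mem⟩
  le_of_pred_mem i hi hmem := by
    rw [← ha.jointOverlap_of_far (by omega)]
    exact hj.le_of_pred_mem i hi (Finset.mem_of_mem_erase hmem)
  lt_of_succ_mem hmem := (hj.lt_of_succ_mem (Finset.mem_of_mem_erase hmem)).trans_le
    (ha.jointOverlap_le_of_gt hjk)

lemma exists_diamond {b : ℕ → ι → ℕ} (hj : Removable c a' D j) (ha : Lowers j a a')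
    (hk : Removable c a' D k) (hb : Lowers k b a') (hjk : j ≠ k) :
    ∃ e, (Lowers k e a ∧ Removable c a (D.erase j) k) ∧
      Lowers j e b ∧ Removable c b (D.erase k) j := by
  have := hj.succ_ne hk
  have := hk.succ_ne hj
  rcases hjk.lt_or_gt with hlt | hlt
  · obtain ⟨e, hea, heb⟩ := ha.exists_commute hb (by omega)
    exact ⟨e, ⟨hea, hk.undo_left ha (by omega)⟩, heb, hj.undo_right hb (by omega)⟩
  · obtain ⟨e, heb, hea⟩ := hb.exists_commute ha (by omega)
    exact ⟨e, ⟨hea, hk.undo_right ha (by omega)⟩, heb, hj.undo_left hb (by omega)⟩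

end Removable

namespace Cascade

variable {c i k : ℕ} {b d : ℕ → ι → ℕ} {D : Finset ℕ}

lemma undo {a : ℕ → ι → ℕ} (h : Cascade c b D d) (hk : Removable c d D k) (ha : Lowers k a d) :
    Cascade c b (D.erase k) a := by
  induction h generalizing k a with
  | nil => exact absurd hk.mem (Finset.notMem_empty k)
  | @apply D j a₁ d h₁ hlow hj ih =>
    by_cases hjk : j = k
    · subst hjk
      rwa [← hlow.unique ha]
    · obtain ⟨e, ⟨he, hek⟩, he', hej⟩ := hj.exists_diamond hlow hk ha hjk
      refine .apply ?_ he' hej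
      rw [Finset.erase_right_comm]
      exact ih hek he

lemma unique {b' : ℕ → ι → ℕ} (h : Cascade c b D d) (h' : Cascade c b' D d) : b = b' := by
  induction h with
  | nil =>
    cases h' with
    | nil => rfl
    | apply _ _ hj => exact absurd hj.mem (Finset.notMem_empty _)
  | apply _ hlow hj ih => exact ih (h'.undo hj hlow)

lemma of_forall_lowers {P : (ℕ → ι → ℕ) → Prop} (h : Cascade c b D d) (hb : P b)
    (hP : ∀ j ∈ D, ∀ a a', P a → Lowers j a a' → P a') : P d := by
  induction h with
  | nil => exact hb
  | apply _ hlow hj ih =>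
    exact hP _ hj.mem _ _ (ih fun j hj => hP j (Finset.mem_of_mem_erase hj)) hlow

lemma row_eq (h : Cascade c b D d) (hD : ∀ j ∈ D, k ≠ j ∧ k ≠ j + 1) : d k = b k :=
  h.of_forall_lowers (P := fun a => a k = b k) rfl fun j hj _ _ ha hlow =>
    (hlow.2 k (hD j hj).1 (hD j hj).2).trans ha

lemma le_row (h : Cascade c b D d) (hD : k ∉ D) : b k ≤ d k := by
  refine h.of_forall_lowers (P := fun a => b k ≤ a k) le_rfl fun j hj a a' ha hlow => ha.trans ?_
  by_cases hk : k = j + 1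
  · subst hk
    exact hlow.le_lower
  · exact (hlow.2 k (by rintro rfl; exact hD hj) hk).ge

lemma rowOverlap_le (h : Cascade c b D d) (hD : ∀ j ∈ D, i < j) :
    rowOverlap d i ≤ rowOverlap b i := by
  refine h.of_forall_lowers (P := fun a => rowOverlap a i ≤ rowOverlap b i) le_rfl
    fun j hj a a' ha hlow => le_trans ?_ ha
  have := hD j hj
  by_cases hji : j = i + 1
  · subst hji
    exact hlow.rowOverlap_pred_le
  · exact (hlow.rowOverlap_of_ne (by omega) (by omega) (by omega)).le

lemma lowJoint (h : Cascade c b D d) (hD : ∀ j ∈ D, i + 1 < j) (hb : LowJoint c b i) :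
    LowJoint c d i := by
  refine h.of_forall_lowers (P := (LowJoint c · i)) hb fun j hj a a' ha hlow => ?_
  have := hD j hj
  by_cases hji : j = i + 2
  · subst hji
    exact hlow.lowJoint ha
  · rw [LowJoint, hlow.jointOverlap_of_far (by omega), firstCut, lastCut,
      hlow.2 i (by omega) (by omega), hlow.2 (i + 1) (by omega) (by omega),
      hlow.2 (i + 1 + 1) (by omega) (by omega)]
    exact ha

lemma highJoint (h : Cascade c b D d) (hD : ∀ j ∈ D, j < i) (hb : HighJoint c b i) :
    HighJoint c d i := by
  refine h.of_forall_lowers (P := (HighJoint c · i)) hb fun j hj a a' ha hlow => ?_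
  have := hD j hj
  by_cases hji : j + 1 = i
  · subst hji
    exact hlow.highJoint ha
  · rw [HighJoint, hlow.jointOverlap_of_far (by omega), firstCut, lastCut,
      hlow.2 i (by omega) (by omega), hlow.2 (i + 1) (by omega) (by omega),
      hlow.2 (i + 1 + 1) (by omega) (by omega)]
    exact ha

end Cascade

end Cascade

section Exchange

variable {ι : Type*} [Fintype ι] [LinearOrder ι] [Nonempty ι]

lemma overlap_eq_zero_of_overlap_add_overlap_le_sum {w u v : ι → ℕ}
    (h : lastArgmin (cut w u) < firstArgmin (cut u v))
    (hle : overlap w u + overlap u v ≤ ∑ t, u t)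
    (hu : ∀ s ≤ lastArgmin (cut w u), u s = 0) : overlap u v = 0 := by
  obtain ⟨-, hv, hu'⟩ := eq_zero_of_overlap_add_overlap_le_sum h hle
  by_contra hpos
  obtain ⟨s, t, hst, hs, ht⟩ := overlap_pos_iff.1 (Nat.pos_of_ne_zero hpos)
  have hs' : firstArgmin (cut u v) ≤ s := by
    by_contra! hlt
    rcases le_or_gt s (lastArgmin (cut w u)) with hle | hgt
    · exact hs.ne' (hu s hle)
    · exact hs.ne' (hu' s hgt hlt)
  exact ht.ne' (hv t (hs'.trans_lt hst))

variable {c i : ℕ} {b u x₀ x y₀ y : ℕ → ι → ℕ}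

lemma Lowers.eq_zero_of_lt_firstCut (h : Lowers i b u) (hle : jointOverlap b i ≤ ∑ t, b (i + 1) t)
    (hlt : rowOverlap b (i + 1) < rowOverlap u (i + 1)) {s : ι} (hs : s < firstCut u i) :
    u i s = 0 := by
  have hcut : lastCut b i < firstCut b (i + 1) := by
    have := h.rowOverlap_succ
    grind
  have hzero := (eq_zero_of_overlap_add_overlap_le_sum hcut hle).1 s (hs.trans_eq h.firstCut_eq)
  exact Nat.eq_zero_of_le_zero ((h.upper_le s).trans_eq hzero)

/-- If both operators were blocked, the changes of the overlap of rows `i + 1` and `i + 2` would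
force that overlap to vanish. -/
lemma jointOverlap_splice_le_or_lt (hb : Lowers (i + 1) b u) (hx : Lowers i x₀ x)
    (hy : Lowers (i + 2) y₀ y) (hx₀ : ∀ k, i < k → x₀ k = u k) (hy₀ : ∀ k ≤ i + 2, y₀ k = u k)
    (hjoint : jointOverlap b (i + 1) ≤ c) (hsum : ∑ t, b (i + 1) t = c)
    (hsum' : ∑ t, b (i + 2) t = c) (hy₂ : rowOverlap y₀ (i + 2) ≤ rowOverlap u (i + 2))
    (hyc : jointOverlap y (i + 1) ≤ c) (hxc : c < jointOverlap x i)
    (hpos : 0 < rowOverlap y (i + 1)) :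
    jointOverlap (splice (i + 1) x y) (i + 1) ≤ c ∨ c < jointOverlap (splice (i + 1) x y) i := by
  by_contra! hcon
  have hy₁ : y (i + 1) = u (i + 1) := (hy.2 _ (by omega) (by omega)).trans (hy₀ _ (by omega))
  have hux : rowOverlap x₀ (i + 1) = rowOverlap u (i + 1) :=
    rowOverlap_congr (hx₀ _ (by omega)) (hx₀ _ (by omega))
  have huy : rowOverlap y₀ (i + 1) = rowOverlap u (i + 1) :=
    rowOverlap_congr (hy₀ _ (by omega)) (hy₀ _ (by omega))
  have hsplice : rowOverlap (splice (i + 1) x y) (i + 1) =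
      rowOverlap y (i + 1) + if lastCut x₀ i < firstCut y (i + 1) then 1 else 0 := by
    have := (hx.splice_left (y := y) (Nat.lt_succ_self i)).rowOverlap_succ
    simpa [rowOverlap, firstCut, lastCut, splice, hx₀, hy₁] using this
  have hsplice_i : rowOverlap (splice (i + 1) x y) i = rowOverlap x i := by
    simp [rowOverlap, splice]
  have hsplice_i₂ : rowOverlap (splice (i + 1) x y) (i + 2) = rowOverlap y (i + 2) := by
    simp [rowOverlap, splice]
  have hxi := hx.rowOverlap_eq
  have hyi := hy.rowOverlap_eq
  have hbi := hb.rowOverlap_eq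
  have hxu := hx.rowOverlap_succ
  have hyu := hy.rowOverlap_pred
  have hcut : lastCut x₀ i < firstCut y (i + 1) := by grind [jointOverlap]
  have hcut' : lastCut x₀ i < firstCut x₀ (i + 1) := by grind [jointOverlap]
  have hu : rowOverlap u (i + 1) = rowOverlap y (i + 1) + 1 := by grind [jointOverlap]
  have hlt : rowOverlap b (i + 2) < rowOverlap u (i + 2) := by grind [jointOverlap]
  have hzero : ∀ s ≤ lastCut x₀ i, u (i + 1) s = 0 := fun s hs => by
    refine hb.eq_zero_of_lt_firstCut (by rwa [hsum']) hlt ((hs.trans_lt hcut').trans_eq ?_)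
    rw [firstCut, hx₀ _ (by omega), hx₀ _ (by omega)]
  have hu_sum := hb.sum_upper
  have hx₁ : x₀ (i + 1) = u (i + 1) := hx₀ _ (by omega)
  refine hpos.ne' ?_
  rw [rowOverlap, hy₁]
  refine overlap_eq_zero_of_overlap_add_overlap_le_sum (w := x₀ i) ?_ ?_ ?_
  · rwa [lastCut, firstCut, hx₁, hy₁] at hcut
  · rw [rowOverlap, rowOverlap, hx₁] at hxi
    rw [rowOverlap, rowOverlap, hy₁] at hsplice
    grind [jointOverlap]
  · rwa [lastCut, hx₁] at hzero

end Exchange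

section SpliceCascades

variable {ι : Type*} [Fintype ι] [LinearOrder ι] [Nonempty ι]
variable {c i j : ℕ} {b u x x₀ y y₀ : ℕ → ι → ℕ} {D E : Finset ℕ}

namespace Removable

lemma splice_left (hj : Removable c x D j) (hD : ∀ k ∈ D, k < i) (hE : ∀ k ∈ E, i < k)
    (hi : j + 1 = i → c < jointOverlap (splice i x y) j) :
    Removable c (splice i x y) (insert i (D ∪ E)) j where
  mem := by simp [hj.mem]
  le_of_pred_mem k hk hmem := by
    have := hD j hj.mem
    have hkD : k ∈ D := by grind
    rw [jointOverlap_congr fun _ _ _ => splice_apply_of_le (by omega)]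
    exact hj.le_of_pred_mem k hk hkD
  lt_of_succ_mem hmem := by
    by_cases hji : j + 1 = i
    · exact hi hji
    have := hD j hj.mem
    have hjD : j + 1 ∈ D := by grind
    rw [jointOverlap_congr fun _ _ _ => splice_apply_of_le (by omega)]
    exact hj.lt_of_succ_mem hjD

lemma splice_right (hj : Removable c y E j) (hD : ∀ k ∈ D, k < i) (hE : ∀ k ∈ E, i < k)
    (hi : j = i + 1 → jointOverlap (splice i x y) i ≤ c) :
    Removable c (splice i x y) (insert i (D ∪ E)) j where
  mem := by simp [hj.mem]
  le_of_pred_mem k hk hmem := by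
    by_cases hki : k = i
    · exact hki ▸ hi (hki ▸ hk.symm)
    have := hE j hj.mem
    have hkE : k ∈ E := by grind
    rw [jointOverlap_congr fun _ _ _ => splice_apply_of_lt (by grind)]
    exact hj.le_of_pred_mem k hk hkE
  lt_of_succ_mem hmem := by
    have := hE j hj.mem
    have hjE : j + 1 ∈ E := by grind
    rw [jointOverlap_congr fun _ _ _ => splice_apply_of_lt (by omega)]
    exact hj.lt_of_succ_mem hjE

end Removable

/-- A cascade above the pivot `i`, started after the operator at `i` has led from `b` to `u`. -/
structure UpperArm (c i : ℕ) (b u : ℕ → ι → ℕ) (D : Finset ℕ) (x : ℕ → ι → ℕ) : Prop where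
  cascade : Cascade c u D x
  lt : ∀ j ∈ D, j < i
  lt_jointOverlap : ∀ j ∈ D, j + 1 = i → c < jointOverlap b j
  sum_eq : ∀ j ∈ D, j + 1 = i → ∑ t, b i t = c

/-- A cascade below the pivot `i`, started after the operator at `i` has led from `b` to `u`. -/
structure LowerArm (c i : ℕ) (b u : ℕ → ι → ℕ) (E : Finset ℕ) (y : ℕ → ι → ℕ) : Prop where
  cascade : Cascade c u E y
  lt : ∀ j ∈ E, i < j
  jointOverlap_le : i + 1 ∈ E → jointOverlap b i ≤ c
  sum_eq : i + 1 ∈ E → ∑ t, b (i + 1) t = c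
  pos : i + 1 ∈ E → 0 < rowOverlap y i

namespace UpperArm

lemma undo (h : UpperArm c i b u D x) (hx : Cascade c u (D.erase j) x₀) :
    UpperArm c i b u (D.erase j) x₀ where
  cascade := hx
  lt k hk := h.lt k (Finset.mem_of_mem_erase hk)
  lt_jointOverlap k hk := h.lt_jointOverlap k (Finset.mem_of_mem_erase hk)
  sum_eq k hk := h.sum_eq k (Finset.mem_of_mem_erase hk)

lemma lt_jointOverlap_apply (h : UpperArm c (i + 1) b u D x) (hi : i ∈ D) (hb : Lowers (i + 1) b u)
    (hx : Cascade c u (D.erase i) x₀) (hlow : Lowers i x₀ x) : c < jointOverlap x i := by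
  refine hlow.highJoint_iff.1 (hx.highJoint (fun j hj => ?_)
    (hb.highJoint_iff'.2 (h.lt_jointOverlap i hi rfl)))
  have := h.lt j (Finset.mem_of_mem_erase hj)
  have := Finset.ne_of_mem_erase hj
  omega

lemma row_eq_of_erase (h : UpperArm c (i + 1) b u D x) (hx : Cascade c u (D.erase i) x₀) {k : ℕ}
    (hk : i < k) : x₀ k = u k := by
  refine hx.row_eq fun j hj => ?_
  have := h.lt j (Finset.mem_of_mem_erase hj)
  have := Finset.ne_of_mem_erase hj
  omega

end UpperArm

namespace LowerArm

lemma undo (h : LowerArm c i b u E y) (hy : Cascade c u (E.erase j) y₀) (hlow : Lowers j y₀ y)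
    (hj : j ∈ E) : LowerArm c i b u (E.erase j) y₀ where
  cascade := hy
  lt k hk := h.lt k (Finset.mem_of_mem_erase hk)
  jointOverlap_le hi := h.jointOverlap_le (Finset.mem_of_mem_erase hi)
  sum_eq hi := h.sum_eq (Finset.mem_of_mem_erase hi)
  pos hi := by
    have := h.lt j hj
    have := Finset.ne_of_mem_erase hi
    rw [← hlow.rowOverlap_of_ne (by omega) (by omega) (by omega)]
    exact h.pos (Finset.mem_of_mem_erase hi)

lemma succ_lt_of_mem_erase (h : LowerArm c i b u E y) (hj : j ∈ E.erase (i + 1)) : i + 1 < j := by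
  have := h.lt j (Finset.mem_of_mem_erase hj)
  have := Finset.ne_of_mem_erase hj
  omega

lemma jointOverlap_apply_le (h : LowerArm c i b u E y) (hi : i + 1 ∈ E) (hb : Lowers i b u)
    (hy : Cascade c u (E.erase (i + 1)) y₀) (hlow : Lowers (i + 1) y₀ y) : jointOverlap y i ≤ c :=
  hlow.lowJoint_iff.1 (hy.lowJoint (fun _ hj => h.succ_lt_of_mem_erase hj)
    (hb.lowJoint_iff'.2 (h.jointOverlap_le hi)))

lemma row_eq_of_erase (h : LowerArm c i b u E y) (hy : Cascade c u (E.erase (i + 1)) y₀) {k : ℕ}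
    (hk : k ≤ i + 1) : y₀ k = u k := by
  refine hy.row_eq fun j hj => ?_
  have := h.succ_lt_of_mem_erase hj
  omega

end LowerArm

lemma insert_union_erase_left (hj : j < i) (hE : ∀ k ∈ E, i < k) :
    insert i (D.erase j ∪ E) = (insert i (D ∪ E)).erase j := by
  ext k
  have := hE k
  grind

lemma insert_union_erase_right (hj : i < j) (hD : ∀ k ∈ D, k < i) :
    insert i (D ∪ E.erase j) = (insert i (D ∪ E)).erase j := by
  ext k
  have := hD k
  grind

lemma UpperArm.cascade_splice_of_lowers (hx : UpperArm c i b u D x) (hy : LowerArm c i b u E y)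
    (hlow : Lowers j x₀ x) (hj : Removable c x D j)
    (hi : j + 1 = i → c < jointOverlap (splice i x y) j)
    (ih : Cascade c b (insert i (D.erase j ∪ E)) (splice i x₀ y)) :
    Cascade c b (insert i (D ∪ E)) (splice i x y) := by
  refine .apply ?_ (hlow.splice_left (hx.lt j hj.mem)) (hj.splice_left hx.lt hy.lt hi)
  rwa [← insert_union_erase_left (hx.lt j hj.mem) hy.lt]

lemma LowerArm.cascade_splice_of_lowers (hx : UpperArm c i b u D x) (hy : LowerArm c i b u E y)
    (hlow : Lowers j y₀ y) (hj : Removable c y E j)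
    (hi : j = i + 1 → jointOverlap (splice i x y) i ≤ c)
    (ih : Cascade c b (insert i (D ∪ E.erase j)) (splice i x y₀)) :
    Cascade c b (insert i (D ∪ E)) (splice i x y) := by
  refine .apply ?_ (hlow.splice_right (hy.lt j hj.mem)) (hj.splice_right hx.lt hy.lt hi)
  rwa [← insert_union_erase_right (hy.lt j hj.mem) hx.lt]

lemma UpperArm.empty : UpperArm c i b u ∅ u where
  cascade := .nil
  lt j hj := absurd hj (Finset.notMem_empty j)
  lt_jointOverlap j hj := absurd hj (Finset.notMem_empty j)
  sum_eq j hj := absurd hj (Finset.notMem_empty j)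

lemma Lowers.cascade_singleton (h : Lowers i b u) : Cascade c b {i} u :=
  .apply (by simpa using Cascade.nil) h ⟨by simp, by grind, by simp⟩

lemma UpperArm.splice_eq (h : UpperArm c i b u D x) : splice i x u = x :=
  splice_eq_left fun _ hk => h.cascade.row_eq fun j hj => by
    have := h.lt j hj
    omega

lemma LowerArm.splice_eq (h : LowerArm c i b u E y) : splice i u y = y :=
  splice_eq_right fun _ hk => (h.cascade.row_eq fun j hj => by
    have := h.lt j hj
    omega).symm

lemma LowerArm.cascade_insert (hy : LowerArm c i b u E y) (hb : Lowers i b u) :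
    Cascade c b (insert i E) y := by
  have hcascade := hy.cascade
  induction hcascade with
  | nil => exact hb.cascade_singleton
  | @apply E j y₀ y hy₀ hlow hj ih =>
    have hstep := hy.cascade_splice_of_lowers .empty hlow hj (fun hji => ?_)
    · simpa only [(hy.undo hy₀ hlow hj.mem).splice_eq, hy.splice_eq, Finset.empty_union,
        forall_const, ih (hy.undo hy₀ hlow hj.mem)] using hstep
    · subst hji
      rw [hy.splice_eq]
      exact hy.jointOverlap_apply_le hj.mem hb hy₀ hlow

/-- The last operator of the spliced cascade is the last one of either arm, unless both neighbour
the pivot; `jointOverlap_splice_le_or_lt` decides that case. -/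
theorem UpperArm.cascade_splice (hx : UpperArm c i b u D x) (hy : LowerArm c i b u E y)
    (hb : Lowers i b u) : Cascade c b (insert i (D ∪ E)) (splice i x y) := by
  have hxcascade := hx.cascade
  induction hxcascade generalizing y E with
  | nil => simpa only [Finset.empty_union, hy.splice_eq] using hy.cascade_insert hb
  | @apply D j x₀ x hx₀ hxlow hj ihx =>
    have left {E y} (hy : LowerArm c i b u E y)
        (hi : j + 1 = i → c < jointOverlap (splice i x y) j) :=
      hx.cascade_splice_of_lowers hy hxlow hj hi (ihx (hx.undo hx₀) hy)
    by_cases hji : j + 1 = i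
    swap
    · exact left hy fun h => absurd h hji
    subst hji
    have hycascade := hy.cascade
    induction hycascade with
    | nil =>
      refine left hy fun _ => ?_
      rw [hx.splice_eq]
      exact hx.lt_jointOverlap_apply hj.mem hb hx₀ hxlow
    | @apply E k y₀ y hy₀ hylow hk ihy =>
      have right (hk' : k = j + 2 → jointOverlap (splice (j + 1) x y) (j + 1) ≤ c) :=
        hy.cascade_splice_of_lowers hx hylow hk hk' (ihy (hy.undo hy₀ hylow hk.mem))
      by_cases hkj : k = j + 2
      swap
      · exact right fun h => absurd h hkj
      subst hkj
      rcases jointOverlap_splice_le_or_lt hb hxlow hylow (fun _ => hx.row_eq_of_erase hx₀)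
          (fun _ => hy.row_eq_of_erase hy₀) (hy.jointOverlap_le hk.mem) (hx.sum_eq j hj.mem rfl)
          (hy.sum_eq hk.mem) (hy₀.rowOverlap_le fun _ => hy.succ_lt_of_mem_erase)
          (hy.jointOverlap_apply_le hk.mem hb hy₀ hylow)
          (hx.lt_jointOverlap_apply hj.mem hb hx₀ hxlow) (hy.pos hk.mem) with h | h
      · exact right fun _ => h
      · exact left hy fun _ => h

end SpliceCascades

section CascadeExists

variable {ι : Type*} [Fintype ι] [LinearOrder ι] [Nonempty ι]

/-- The row lengths of `b` are `c + 1, c, …, c, c - 1` in rows `l, …, r`, and neighbouring rows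
among them overlap. -/
structure IsSlope (c l r : ℕ) (b : ℕ → ι → ℕ) : Prop where
  sum_first : ∑ t, b l t = c + 1
  sum_mid : ∀ j, l < j → j < r → ∑ t, b j t = c
  sum_last : ∑ t, b r t + 1 = c
  overlap_pos : ∀ j, l ≤ j → j < r → 0 < rowOverlap b j

variable {c l r i : ℕ} {b u : ℕ → ι → ℕ}

namespace IsSlope

lemma rowOverlap_lt (h : IsSlope c l r b) (hi : l ≤ i) (hir : i < r)
    (hjoint : i + 1 = r ∨ jointOverlap b i ≤ c) : rowOverlap b i < c := by
  have hle : rowOverlap b i ≤ ∑ t, b (i + 1) t := overlap_le_sum_right _ _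
  have := h.sum_last
  rcases (show i + 1 ≤ r from hir).eq_or_lt with rfl | hlt
  · omega
  · have := h.overlap_pos (i + 1) (by omega) hlt
    grind [jointOverlap]

lemma le_sum (h : IsSlope c l r b) (hi : l ≤ i) (hir : i < r) : c ≤ ∑ t, b i t := by
  rcases hi.eq_or_lt with rfl | hlt
  · exact (Nat.le_succ c).trans h.sum_first.ge
  · exact (h.sum_mid i hlt hir).ge

lemma rowOverlap_pos_of_lowers (h : IsSlope c l r b) (hi : l ≤ i) (hir : i < r)
    (hb : Lowers i b u) (hjoint : i + 1 = r ∨ jointOverlap b i ≤ c)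
    (hleft : ∀ j, l ≤ j → j + 1 = i → c < jointOverlap b j) {j : ℕ} (hj : 0 < rowOverlap b j) :
    0 < rowOverlap u j := by
  have hlt := h.rowOverlap_lt hi hir hjoint
  by_cases hji : j + 1 = i
  · subst hji
    by_cases hjl : l ≤ j
    · have := hleft j hjl rfl
      have := hb.rowOverlap_pred
      grind [jointOverlap]
    · obtain rfl : l = j + 1 := by omega
      obtain ⟨⟨t, ht⟩, hrest⟩ := hb
      rw [rowOverlap, hrest j (by omega) (by omega)]
      exact ht.overlap_pos_of_overlap_pos (by have := h.sum_first; grind) hj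
  · exact hj.trans_le (hb.rowOverlap_le_of_ne hji)

lemma upper (h : IsSlope c l r b) (hi : l < i) (hir : i < r) (hb : Lowers i b u)
    (hpos : ∀ j, 0 < rowOverlap b j → 0 < rowOverlap u j) : IsSlope c l i u where
  sum_first := by rw [hb.2 l (by omega) (by omega)]; exact h.sum_first
  sum_mid j hj hj' := by
    rw [hb.2 j (by omega) (by omega)]
    exact h.sum_mid j hj (hj'.trans hir)
  sum_last := hb.sum_upper.symm.trans (h.sum_mid i hi hir)
  overlap_pos j hj hj' := hpos j (h.overlap_pos j hj (hj'.trans hir))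

lemma lower (h : IsSlope c l r b) (hi : l ≤ i) (hir : i + 1 < r) (hb : Lowers i b u)
    (hpos : ∀ j, 0 < rowOverlap b j → 0 < rowOverlap u j) : IsSlope c (i + 1) r u where
  sum_first := by rw [hb.sum_lower, h.sum_mid (i + 1) (by omega) hir]
  sum_mid j hj hj' := by
    rw [hb.2 j (by omega) (by omega)]
    exact h.sum_mid j (by omega) hj'
  sum_last := by rw [hb.2 r (by omega) (by omega)]; exact h.sum_last
  overlap_pos j hj hj' := hpos j (h.overlap_pos j (by omega) hj')

end IsSlope

lemma rowOverlap_splice_pos {x y : ℕ → ι → ℕ} (hx : u i ≤ x i) (hy : y i = u i) {j : ℕ}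
    (hxj : 0 < rowOverlap x j) (hyj : 0 < rowOverlap y j) : 0 < rowOverlap (splice i x y) j := by
  rcases lt_trichotomy j i with hj | rfl | hj
  · rwa [rowOverlap_congr (splice_apply_of_le hj.le) (splice_apply_of_le hj)]
  · rw [rowOverlap, splice_apply_of_le le_rfl, splice_apply_of_lt (Nat.lt_succ_self j)]
    exact hyj.trans_le (overlap_mono (hy.trans_le hx) le_rfl)
  · rwa [rowOverlap_congr (splice_apply_of_lt hj) (splice_apply_of_lt (by omega))]

/-- The first row whose joint overlap with its neighbours is not too large is lowered first; the
parts above and below it are then slopes again. -/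
theorem exists_cascade (h : l < r → IsSlope c l r b) :
    ∃ d, Cascade c b (Finset.Ico l r) d ∧ ∀ j, 0 < rowOverlap b j → 0 < rowOverlap d j := by
  induction hn : r - l using Nat.strong_induction_on generalizing l r b with
  | _ n ih =>
  rcases le_or_gt r l with hrl | hlr
  · exact ⟨b, Finset.Ico_eq_empty_of_le hrl ▸ .nil, fun _ => id⟩
  have hb := h hlr
  have hex : ∃ i, l ≤ i ∧ i < r ∧ (i + 1 = r ∨ jointOverlap b i ≤ c) :=
    ⟨r - 1, by omega, by omega, by omega⟩
  obtain ⟨i, ⟨hi, hir, hjoint⟩, hmin⟩ := WellFounded.has_min wellFounded_lt {i | _} hex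
  have hfirst : ∀ j, l ≤ j → j + 1 = i → c < jointOverlap b j := fun j hj hji => by
    by_contra! hle
    exact hmin j ⟨hj, by omega, .inr hle⟩ (by omega)
  obtain ⟨u, hu⟩ := exists_lowers ((hb.rowOverlap_lt hi hir hjoint).trans_le (hb.le_sum hi hir))
  have hpos := fun j => hb.rowOverlap_pos_of_lowers hi hir hu hjoint hfirst (j := j)
  obtain ⟨x, hx, hxpos⟩ := ih (i - l) (by omega) (fun hli => hb.upper hli hir hu hpos) rfl
  obtain ⟨y, hy, hypos⟩ := ih (r - (i + 1)) (by omega) (fun hlt => hb.lower hi hlt hu hpos) rfl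
  have hxarm : UpperArm c i b u (Finset.Ico l i) x :=
    { cascade := hx
      lt := fun j hj => (Finset.mem_Ico.1 hj).2
      lt_jointOverlap := fun j hj => hfirst j (Finset.mem_Ico.1 hj).1
      sum_eq := fun j hj hji => hb.sum_mid i (by grind) hir }
  have hyarm : LowerArm c i b u (Finset.Ico (i + 1) r) y :=
    { cascade := hy
      lt := fun j hj => (Finset.mem_Ico.1 hj).1
      jointOverlap_le := fun hj => hjoint.resolve_left (by grind)
      sum_eq := fun hj => hb.sum_mid (i + 1) (by omega) (Finset.mem_Ico.1 hj).2
      pos := fun _ => hypos i (hpos i (hb.overlap_pos i hi hir)) }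
  have hIco : insert i (Finset.Ico l i ∪ Finset.Ico (i + 1) r) = Finset.Ico l r := by
    ext j
    grind
  refine ⟨splice i x y, hIco ▸ hxarm.cascade_splice hyarm hu, fun j hj => ?_⟩
  refine rowOverlap_splice_pos (hx.le_row (by simp)) (hy.row_eq fun j hj => ?_)
    (hxpos j (hpos j hj)) (hypos j (hpos j hj))
  have := (Finset.mem_Ico.1 hj).1
  omega

end CascadeExists

/-! ### Balancing row lengths -/

section Reflection

variable {X : Type*}

/-- The sequence `f` with its first `r` terms in reverse order. -/
def reflect (r : ℕ) (f : ℕ → X) (i : ℕ) : X := if i < r then f (r - 1 - i) else f i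

lemma reflect_of_lt {r i : ℕ} (f : ℕ → X) (h : i < r) : reflect r f i = f (r - 1 - i) := if_pos h

lemma reflect_involutive (r : ℕ) : Function.Involutive (reflect r : (ℕ → X) → ℕ → X) := fun f => by
  funext i
  grind [reflect]

end Reflection

section Shift

/-- A unit is shifted from part `i` to part `j` of a sequence, where `α j + 2 ≤ α i` and the parts
strictly between them are all equal to `α j + 1 = α i - 1`. -/
structure Shift (i j : ℕ) (α β : ℕ → ℕ) : Prop where
  add_two_le : α j + 2 ≤ α i
  source : α i = β i + 1
  target : β j = α j + 1
  rest : ∀ k, k ≠ i → k ≠ j → β k = α k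
  between : ∀ k, min i j < k → k < max i j → α k = α j + 1 ∧ α i = α j + 2

/-- Some unit is shifted between two of the first `r` parts of a sequence. -/
def BalancingStep (r : ℕ) (α β : ℕ → ℕ) : Prop := ∃ i j, i < r ∧ j < r ∧ Shift i j α β

namespace Shift

variable {r i j : ℕ} {α β : ℕ → ℕ}

lemma reflect (h : Shift i j α β) (hi : i < r) (hj : j < r) :
    Shift (r - 1 - i) (r - 1 - j) (reflect r α) (reflect r β) := by
  have hi' : r - 1 - (r - 1 - i) = i := by omega
  have hj' : r - 1 - (r - 1 - j) = j := by omega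
  refine ⟨?_, ?_, ?_, fun k hk hk' => ?_, fun k hk hk' => ?_⟩
  · simpa only [reflect_of_lt, hi', hj', show r - 1 - i < r by omega, show r - 1 - j < r by omega]
      using h.add_two_le
  · simpa only [reflect_of_lt, hi', show r - 1 - i < r by omega] using h.source
  · simpa only [reflect_of_lt, hj', show r - 1 - j < r by omega] using h.target
  · unfold RibbonMaximality.reflect
    split_ifs <;> exact h.rest _ (by omega) (by omega)
  · simpa only [reflect_of_lt, hi', hj', show k < r by omega, show r - 1 - i < r by omega,
      show r - 1 - j < r by omega] using h.between (r - 1 - k) (by omega) (by omega)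

lemma sum_eq (h : Shift i j α β) (hi : i < r) (hj : j < r) :
    ∑ k ∈ Finset.range r, β k = ∑ k ∈ Finset.range r, α k := by
  have hterm : ∀ k ∈ Finset.range r,
      β k + (if k = i then 1 else 0) = α k + if k = j then 1 else 0 := by
    grind [Shift]
  simpa [Finset.sum_add_distrib, hi, hj] using Finset.sum_congr rfl hterm

lemma sum_sq_lt (h : Shift i j α β) (hi : i < r) (hj : j < r) :
    ∑ k ∈ Finset.range r, β k ^ 2 < ∑ k ∈ Finset.range r, α k ^ 2 := by
  have hterm : ∀ k ∈ Finset.range r, β k ^ 2 + (if k = i then 2 * β i + 1 else 0) =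
      α k ^ 2 + if k = j then 2 * α j + 1 else 0 := by
    grind [Shift]
  have hsum : ∑ k ∈ Finset.range r, β k ^ 2 + (2 * β i + 1) =
      ∑ k ∈ Finset.range r, α k ^ 2 + (2 * α j + 1) := by
    simpa [Finset.sum_add_distrib, hi, hj] using Finset.sum_congr rfl hterm
  have := h.add_two_le
  have := h.source
  omega

lemma pos (h : Shift i j α β) {k : ℕ} (hk : 0 < α k) : 0 < β k := by
  grind [Shift]

end Shift

/-- Two parts differing by at least two can be chosen as close to each other as possible. -/
lemma exists_balancingStep {r : ℕ} {α : ℕ → ℕ} (h : ¬∀ i < r, ∀ j < r, α i ≤ α j + 1) :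
    ∃ β, BalancingStep r α β := by
  have hex : {p : ℕ × ℕ | p.1 < r ∧ p.2 < r ∧ α p.2 + 2 ≤ α p.1}.Nonempty := by
    push Not at h
    obtain ⟨i, hi, j, hj, hij⟩ := h
    exact ⟨(i, j), hi, hj, hij⟩
  obtain ⟨⟨i, j⟩, ⟨hi, hj, hij⟩, hmin⟩ :=
    (measure fun p : ℕ × ℕ => max p.1 p.2 - min p.1 p.2).wf.has_min _ hex
  dsimp only at hi hj hij
  replace hmin : ∀ k l, k < r → l < r → α l + 2 ≤ α k → max i j - min i j ≤ max k l - min k l :=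
    fun k l hk hl hkl => not_lt.1 (hmin (k, l) ⟨hk, hl, hkl⟩)
  have hne : i ≠ j := by
    rintro rfl
    omega
  refine ⟨Function.update (Function.update α i (α i - 1)) j (α j + 1), i, j, hi, hj, hij,
    ?_, by simp, fun k hk hk' => by simp [hk, hk'], fun k hk hk' => ?_⟩
  · rw [Function.update_of_ne hne, Function.update_self]
    omega
  · have hkj := hmin k j
    have hik := hmin i k
    omega

lemma exists_balanced (r : ℕ) (α : ℕ → ℕ) :
    ∃ β, Relation.ReflTransGen (BalancingStep r) α β ∧ ∀ i < r, ∀ j < r, β i ≤ β j + 1 := by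
  induction hn : ∑ k ∈ Finset.range r, α k ^ 2 using Nat.strong_induction_on generalizing α with
  | _ n ih =>
  by_cases h : ∀ i < r, ∀ j < r, α i ≤ α j + 1
  · exact ⟨α, .refl, h⟩
  · obtain ⟨α', hstep⟩ := exists_balancingStep h
    obtain ⟨i, j, hi, hj, hshift⟩ := id hstep
    obtain ⟨β, hβ, hbal⟩ := ih _ (hn ▸ hshift.sum_sq_lt hi hj) α' rfl
    exact ⟨β, .head hstep hβ, hbal⟩

lemma sum_eq_of_reflTransGen_balancingStep {r : ℕ} {α β : ℕ → ℕ}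
    (h : Relation.ReflTransGen (BalancingStep r) α β) :
    ∑ k ∈ Finset.range r, β k = ∑ k ∈ Finset.range r, α k := by
  induction h with
  | refl => rfl
  | tail _ hstep ih =>
    obtain ⟨i, j, hi, hj, hshift⟩ := hstep
    exact (hshift.sum_eq hi hj).trans ih

lemma pos_of_reflTransGen_balancingStep {r : ℕ} {α β : ℕ → ℕ}
    (h : Relation.ReflTransGen (BalancingStep r) α β) {k : ℕ} (hk : 0 < α k) : 0 < β k := by
  induction h with
  | refl => exact hk
  | tail _ hstep ih =>
    obtain ⟨i, j, -, -, hshift⟩ := hstep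
    exact hshift.pos ih

end Shift

section RowClass

lemma nonempty_embedding_of_rel {X Y : Type*} {A : Set X} {B : Set Y} (R : X → Y → Prop)
    (hex : ∀ a ∈ A, ∃ b ∈ B, R a b)
    (hinj : ∀ a ∈ A, ∀ a' ∈ A, ∀ b ∈ B, R a b → R a' b → a = a') : Nonempty (A ↪ B) := by
  choose f hf hR using hex
  refine ⟨⟨fun a => ⟨f a a.2, hf a a.2⟩, fun a a' h => Subtype.ext ?_⟩⟩
  refine hinj a a.2 a' a'.2 (f a a.2) (hf a a.2) (hR a a.2) ?_
  rw [Subtype.mk.inj h]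
  exact hR a' a'.2

variable {ι : Type*} [Fintype ι] [LinearOrder ι] [Nonempty ι]

/-- `Q` is invariant under the crystal operators between consecutive rows among the first `r`. -/
def LowersInvariant (r : ℕ) (Q : (ℕ → ι → ℕ) → Prop) : Prop :=
  ∀ i a a', i + 1 < r → Lowers i a a' → (Q a ↔ Q a')

/-- The matrices satisfying `Q` whose first `r` rows have sums `α` and overlap successively. -/
def rowClass (r : ℕ) (Q : (ℕ → ι → ℕ) → Prop) (α : ℕ → ℕ) : Set (ℕ → ι → ℕ) :=
  {a | Q a ∧ (∀ i < r, ∑ t, a i t = α i) ∧ ∀ i, i + 1 < r → 0 < rowOverlap a i}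

variable {r i j : ℕ} {α β : ℕ → ℕ} {Q : (ℕ → ι → ℕ) → Prop}

lemma Lowers.sum_row {a a' : ℕ → ι → ℕ} (h : Lowers i a a') (k : ℕ) :
    ∑ t, a' k t + (if i = k then 1 else 0) = ∑ t, a k t + if i + 1 = k then 1 else 0 := by
  have := h.sum_upper
  have := h.sum_lower
  have := h.2 k
  grind

lemma Cascade.sum_row {c : ℕ} {b d : ℕ → ι → ℕ} {D : Finset ℕ} (h : Cascade c b D d) (k : ℕ) :
    ∑ t, d k t + ∑ i ∈ D, (if i = k then 1 else 0) =
      ∑ t, b k t + ∑ i ∈ D, if i + 1 = k then 1 else 0 := by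
  induction h with
  | nil => rfl
  | apply _ hlow hj ih =>
    have := hlow.sum_row k
    rw [← Finset.add_sum_erase _ _ hj.mem, ← Finset.add_sum_erase _ _ hj.mem]
    omega

lemma Cascade.sum_row_Ico {c : ℕ} {b d : ℕ → ι → ℕ} (h : Cascade c b (Finset.Ico i j) d) (k : ℕ) :
    ∑ t, d k t + (if i ≤ k ∧ k < j then 1 else 0) =
      ∑ t, b k t + if i < k ∧ k ≤ j then 1 else 0 := by
  have := h.sum_row k
  rw [Finset.sum_Ico_add' (fun x => if x = k then 1 else 0)] at this
  simpa [Nat.succ_le_iff] using this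

lemma Lowers.rowOverlap_pos {a a' : ℕ → ι → ℕ} (h : Lowers i a a')
    (hsum : rowOverlap a i + 2 ≤ ∑ t, a i t) {k : ℕ} (hk : 0 < rowOverlap a k) :
    0 < rowOverlap a' k := by
  by_cases hki : k + 1 = i
  · subst hki
    obtain ⟨⟨t, ht⟩, hrest⟩ := h
    rw [rowOverlap, hrest k (by omega) (by omega)]
    exact ht.overlap_pos_of_overlap_pos hsum hk
  · exact hk.trans_le (h.rowOverlap_le_of_ne hki)

lemma Shift.nonempty_embedding_of_succ_eq (hQ : LowersInvariant r Q) (hj : i + 1 < r)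
    (h : Shift i (i + 1) α β) : Nonempty (rowClass r Q α ↪ rowClass r Q β) := by
  refine nonempty_embedding_of_rel (Lowers i) ?_ fun a _ a' _ d _ ha ha' => ha.unique ha'
  rintro a ⟨hQa, hsum, hpos⟩
  have hoverlap : rowOverlap a i + 2 ≤ ∑ t, a i t := by
    have := overlap_le_sum_right (a i) (a (i + 1))
    grind [Shift]
  obtain ⟨d, hd⟩ := exists_lowers (show rowOverlap a i < _ by omega)
  refine ⟨d, ⟨(hQ i a d hj hd).1 hQa, fun k hk => ?_, fun k hk => hd.rowOverlap_pos hoverlap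
    (hpos k hk)⟩, hd⟩
  have := hd.sum_row k
  grind [Shift]

lemma Shift.nonempty_embedding_of_succ_lt (hQ : LowersInvariant r Q) (hij : i + 1 < j) (hj : j < r)
    (h : Shift i j α β) : Nonempty (rowClass r Q α ↪ rowClass r Q β) := by
  refine nonempty_embedding_of_rel (fun a d => Cascade (α j + 1) a (Finset.Ico i j) d) ?_
    fun a _ a' _ d _ ha ha' => ha.unique ha'
  rintro a ⟨hQa, hsum, hpos⟩
  have hα : α i = α j + 2 := (h.between (i + 1) (by omega) (by omega)).2
  obtain ⟨d, hd, hdpos⟩ := exists_cascade (b := a) (c := α j + 1) (l := i) (r := j) fun _ =>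
    { sum_first := (hsum i (by omega)).trans hα
      sum_mid := fun k hk hk' =>
        (hsum k (by omega)).trans (h.between k (by omega) (by omega)).1
      sum_last := by rw [hsum j hj]
      overlap_pos := fun k _ _ => hpos k (by omega) }
  refine ⟨d, ⟨?_, fun k hk => ?_, fun k hk => hdpos k (hpos k hk)⟩, hd⟩
  · exact hd.of_forall_lowers hQa fun k hk a a' ha hlow =>
      (hQ k a a' (by have := Finset.mem_Ico.1 hk; omega) hlow).1 ha
  · have := hd.sum_row_Ico k
    grind [Shift]

lemma Shift.nonempty_embedding_of_lt (hQ : LowersInvariant r Q) (hij : i < j) (hj : j < r)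
    (h : Shift i j α β) : Nonempty (rowClass r Q α ↪ rowClass r Q β) := by
  rcases (Nat.succ_le_of_lt hij).eq_or_lt with rfl | hlt
  · exact h.nonempty_embedding_of_succ_eq hQ hj
  · exact h.nonempty_embedding_of_succ_lt hQ hlt hj

lemma Lowers.reflect {a a' : ℕ → ι → ℕ} (hi : i + 1 < r) (h : Lowers i a a') :
    Lowers (ι := ιᵒᵈ) (r - 2 - i) (reflect r a') (reflect r a) := by
  have hupper (b : ℕ → ι → ℕ) : RibbonMaximality.reflect r b (r - 2 - i) = b (i + 1) :=
    (reflect_of_lt b (by omega)).trans (congrArg b (by omega))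
  have hlower (b : ℕ → ι → ℕ) : RibbonMaximality.reflect r b (r - 2 - i + 1) = b i :=
    (reflect_of_lt b (by omega)).trans (congrArg b (by omega))
  obtain ⟨⟨t, ht⟩, hrest⟩ := h
  rw [← hupper a, ← hlower a, ← hupper a', ← hlower a'] at ht
  refine ⟨⟨t, ht.orderDual⟩, fun k hk hk' => ?_⟩
  by_cases hkr : k < r
  · exact (reflect_of_lt a hkr).trans <|
      (hrest _ (by omega) (by omega)).symm.trans (reflect_of_lt a' hkr).symm
  · exact (if_neg hkr).trans <| (hrest _ (by omega) (by omega)).symm.trans (if_neg hkr).symm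

lemma LowersInvariant.reflect (hQ : LowersInvariant r Q) :
    LowersInvariant (ι := ιᵒᵈ) r fun a => Q (reflect r a) :=
  fun i _ _ hi h => (hQ (r - 2 - i) _ _ (by omega) (h.reflect hi)).symm

lemma rowOverlap_reflect (a : ℕ → ι → ℕ) (hi : i + 1 < r) :
    rowOverlap (ι := ιᵒᵈ) (reflect r a) i = rowOverlap a (r - 2 - i) := by
  have hupper : reflect r a i = a (r - 2 - i + 1) :=
    (reflect_of_lt a (by omega)).trans (congrArg a (by omega))
  have hlower : reflect r a (i + 1) = a (r - 2 - i) :=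
    (reflect_of_lt a hi).trans (congrArg a (by omega))
  exact (congrArg₂ (overlap (ι := ιᵒᵈ)) hupper hlower).trans (overlap_orderDual _ _)

lemma reflect_mem_rowClass {a : ℕ → ι → ℕ} (ha : a ∈ rowClass r Q α) :
    reflect r a ∈ rowClass (ι := ιᵒᵈ) r (fun a => Q (reflect r a)) (reflect r α) := by
  obtain ⟨hQa, hsum, hpos⟩ := ha
  refine ⟨(congrArg Q (reflect_involutive r a)).mpr hQa, fun i hi => ?_, fun i hi => ?_⟩
  · rw [reflect_of_lt α hi, ← hsum _ (by omega)]
    exact congrArg (∑ t, · t) (reflect_of_lt a hi)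
  · exact (hpos (r - 2 - i) (by omega)).trans_eq (rowOverlap_reflect a hi).symm

lemma nonempty_embedding_reflect (r : ℕ) (Q : (ℕ → ι → ℕ) → Prop) (α : ℕ → ℕ) :
    Nonempty (rowClass r Q α ↪
      rowClass (ι := ιᵒᵈ) r (fun a => Q (reflect r a)) (reflect r α)) :=
  ⟨⟨fun a => ⟨reflect r a.1, reflect_mem_rowClass a.2⟩, fun _ _ h =>
    Subtype.ext <| (reflect_involutive r).injective <| Subtype.mk.inj h⟩⟩

lemma nonempty_embedding_of_reflect (r : ℕ) (Q : (ℕ → ι → ℕ) → Prop) (α : ℕ → ℕ) :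
    Nonempty (rowClass (ι := ιᵒᵈ) r (fun a => Q (reflect r a)) (reflect r α) ↪
      rowClass r Q α) := by
  have h := nonempty_embedding_reflect (ι := ιᵒᵈ) r (fun a => Q (reflect r a)) (reflect r α)
  rw [reflect_involutive r α] at h
  have hQ : (fun a : ℕ → ι → ℕ => Q (reflect r (reflect r a))) = Q :=
    funext fun a => congrArg Q (reflect_involutive r a)
  exact (congrArg (fun P => Nonempty (_ ↪ rowClass r P α)) hQ).mp h

lemma Shift.nonempty_embedding (hQ : LowersInvariant r Q) (hi : i < r) (hj : j < r)
    (h : Shift i j α β) : Nonempty (rowClass r Q α ↪ rowClass r Q β) := by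
  have hne : i ≠ j := by
    rintro rfl
    have := h.add_two_le
    omega
  rcases hne.lt_or_gt with hij | hij
  · exact h.nonempty_embedding_of_lt hQ hij hj
  · obtain ⟨f⟩ := nonempty_embedding_reflect r Q α
    obtain ⟨g⟩ := (h.reflect hi hj).nonempty_embedding_of_lt hQ.reflect (by omega) (by omega)
    obtain ⟨f'⟩ := nonempty_embedding_of_reflect r Q β
    exact ⟨(f.trans g).trans f'⟩

theorem nonempty_embedding_of_reflTransGen_balancingStep (hQ : LowersInvariant r Q)
    (h : Relation.ReflTransGen (BalancingStep r) α β) :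
    Nonempty (rowClass r Q α ↪ rowClass r Q β) := by
  induction h with
  | refl => exact ⟨.refl _⟩
  | tail _ hstep ih =>
    obtain ⟨i, j, hi, hj, hshift⟩ := hstep
    obtain ⟨f⟩ := ih
    obtain ⟨g⟩ := hshift.nonempty_embedding hQ hi hj
    exact ⟨f.trans g⟩

end RowClass

section Ballot

variable {ι : Type*} {r i : ℕ} {lam : ι → ℕ} {a a' : ℕ → ι → ℕ}

/-- The number of letters `t` in the first `k` rows of a matrix of letter multiplicities. -/
def colSum (k : ℕ) (a : ℕ → ι → ℕ) (t : ι) : ℕ := ∑ i ∈ Finset.range k, a i t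

lemma colSum_succ (k : ℕ) (a : ℕ → ι → ℕ) (t : ι) : colSum (k + 1) a t = colSum k a t + a k t :=
  Finset.sum_range_succ _ _

variable [LinearOrder ι]

/-- A matrix of letter multiplicities with `r` rows and content `lam` such that, when its rows are
read from the largest letter to the smallest, every prefix contains at least as many letters `s`
as letters covering `s`. -/
structure IsBallot (r : ℕ) (lam : ι → ℕ) (a : ℕ → ι → ℕ) : Prop where
  support : ∀ i, r ≤ i → a i = 0
  colSum_eq : ∀ t, colSum r a t = lam t
  colSum_le : ∀ k s t, s ⋖ t → colSum (k + 1) a t ≤ colSum k a s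

variable [Fintype ι] [Nonempty ι]

lemma Lowers.exists_colSum_eq (h : Lowers i a a') :
    ∃ t, Transfer t (a i) (a (i + 1)) (a' i) (a' (i + 1)) ∧
      ∀ k x, colSum k a x = colSum k a' x + if k = i + 1 ∧ x = t then 1 else 0 := by
  obtain ⟨⟨t, ht⟩, hrest⟩ := h
  refine ⟨t, ht, fun k x => ?_⟩
  have hupper : a i x = a' i x + if x = t then 1 else 0 := by
    rw [ht.1]; simp [Pi.single_apply]
  have hlower : a' (i + 1) x = a (i + 1) x + if x = t then 1 else 0 := by
    rw [ht.2.1]; simp [Pi.single_apply]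
  induction k with
  | zero => rfl
  | succ k ih =>
    rw [colSum_succ, colSum_succ]
    rcases eq_or_ne k i with rfl | hk
    · simp only [Nat.left_eq_add, one_ne_zero, false_and, if_false, add_zero, true_and] at ih ⊢
      omega
    rcases eq_or_ne k (i + 1) with rfl | hk'
    · simp only [true_and, Nat.add_eq_left, one_ne_zero, false_and, if_false, add_zero] at ih ⊢
      omega
    simp only [hk', hk, hrest k hk hk', Nat.add_right_cancel_iff, false_and, if_false, add_zero]
      at ih ⊢
    omega

lemma Lowers.isBallot_iff (hi : i + 1 < r) (h : Lowers i a a') :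
    IsBallot r lam a ↔ IsBallot r lam a' := by
  obtain ⟨t, ht, hsum⟩ := h.exists_colSum_eq
  have hr x : colSum r a x = colSum r a' x := by simp [hsum, hi.ne']
  have hsupport : (∀ k, r ≤ k → a k = 0) ↔ ∀ k, r ≤ k → a' k = 0 := by
    refine forall₂_congr fun k hk => ?_
    rw [h.2 k (by omega) (by omega)]
  constructor
  · refine fun hb => ⟨hsupport.1 hb.support, fun x => hr x ▸ hb.colSum_eq x, fun k x y hxy => ?_⟩
    have hle := hb.colSum_le k x y hxy
    rw [hsum, hsum k] at hle
    by_cases hk : k = i + 1 ∧ x = t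
    · obtain ⟨rfl, rfl⟩ := hk
      have := ht.lower_le_of_covBy hxy
      have := hb.colSum_le i x y hxy
      have : a' (i + 1) y = a (i + 1) y := by simp [ht.2.1, hxy.ne']
      have := hsum (i + 1) y
      have := hsum i x
      simp only [colSum_succ, hxy.ne', and_false, and_true, and_self, Nat.left_eq_add, one_ne_zero,
        if_false, if_true, add_zero] at *
      omega
    · rw [if_neg hk] at hle
      omega
  · refine fun hb => ⟨hsupport.2 hb.support, fun x => hr x ▸ hb.colSum_eq x, fun k x y hxy => ?_⟩
    have hle := hb.colSum_le k x y hxy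
    rw [hsum, hsum k]
    by_cases hk : k = i ∧ y = t
    · obtain ⟨rfl, rfl⟩ := hk
      have := ht.upper_le_of_covBy hxy
      have := hb.colSum_le (k + 1) x y hxy
      have : a' (k + 1) y = a (k + 1) y + 1 := by simp [ht.2.1]
      simp only [colSum_succ, Nat.left_eq_add, one_ne_zero, false_and, and_self, if_false, if_true,
        add_zero] at *
      omega
    · rw [if_neg fun h => hk ⟨by omega, h.2⟩]
      omega

lemma lowersInvariant_isBallot (r : ℕ) (lam : ι → ℕ) : LowersInvariant r (IsBallot r lam) :=
  fun _ _ _ hi h => h.isBallot_iff hi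

end Ballot

/-! ### Ballot words and row patterns -/

section Count

variable {p q : ℕ → Prop} [DecidablePred p] [DecidablePred q] {f g : ℕ → ℕ} {m n N : ℕ}

lemma count_le_count (h : ∀ k < m, p k → k < n ∧ q k) : Nat.count p m ≤ Nat.count q n := by
  simp only [Nat.count_eq_card_filter_range]
  exact Finset.card_le_card fun k hk => by simp_all

lemma count_congr (h : ∀ k < n, p k ↔ q k) : Nat.count p n = Nat.count q n :=
  (count_le_count fun k hk hp => ⟨hk, (h k hk).1 hp⟩).antisymm
    (count_le_count fun k hk hq => ⟨hk, (h k hk).2 hq⟩)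

lemma count_eq_sum_count_and_eq (s : Finset ℕ) (h : ∀ k < n, p k → f k ∈ s) :
    Nat.count p n = ∑ j ∈ s, Nat.count (fun k => p k ∧ f k = j) n := by
  simp only [Nat.count_eq_card_filter_range, ← Finset.filter_filter]
  exact Finset.card_eq_sum_card_fiberwise fun k hk => by simp_all

lemma count_lt_eq_sum (f : ℕ → ℕ) (j n : ℕ) :
    Nat.count (f · < j) n = ∑ i ∈ Finset.range j, Nat.count (f · = i) n := by
  rw [count_eq_sum_count_and_eq (Finset.range j) fun _ _ => Finset.mem_range.2]
  exact Finset.sum_congr rfl fun i hi => count_congr fun k _ => by simp_all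

lemma lt_count_iff (h : ∀ k < n, p k → ∀ l < k, p l) {k : ℕ} (hk : k < n) :
    k < Nat.count p n ↔ p k := by
  induction n with
  | zero => omega
  | succ n ih =>
    have hle := Nat.count_le (p := p) (n := n)
    have hsucc := Nat.count_succ p n
    by_cases hn : p n
    · have hall : Nat.count p n = n := Nat.count_iff_forall.2 fun l hl => h n (by omega) hn l hl
      have hpk : p k := (Nat.lt_succ_iff_lt_or_eq.1 hk).elim (h n (by omega) hn k) (· ▸ hn)
      simp only [hpk, iff_true, hsucc, if_pos hn]
      omega
    · rw [if_neg hn] at hsucc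
      rcases Nat.lt_succ_iff_lt_or_eq.1 hk with hk | rfl
      · rw [hsucc, add_zero]
        exact ih (fun k hk => h k (by omega)) hk
      · simp only [hn, iff_false]
        omega

lemma lt_iff_lt_count (hf : ∀ k l, k ≤ l → l < N → f k ≤ f l) {k j : ℕ} (hk : k < N) :
    f k < j ↔ k < Nat.count (f · < j) N :=
  (lt_count_iff (fun _ hl hj _ hi => (hf _ _ hi.le hl).trans_lt hj) hk).symm

lemma eq_of_count_eq (hf : ∀ k l, k ≤ l → l < N → f k ≤ f l)
    (hg : ∀ k l, k ≤ l → l < N → g k ≤ g l)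
    (h : ∀ j, Nat.count (f · = j) N = Nat.count (g · = j) N) {k : ℕ} (hk : k < N) : f k = g k := by
  refine eq_of_forall_gt_iff fun j => ?_
  rw [lt_iff_lt_count hf hk, lt_iff_lt_count hg hk, count_lt_eq_sum, count_lt_eq_sum]
  simp only [h]

lemma count_eq_of_iff_lt (hm : m ≤ n) (h : ∀ k < n, p k ↔ k < m) : Nat.count p n = m := by
  obtain ⟨l, rfl⟩ := Nat.exists_eq_add_of_le hm
  rw [Nat.count_add, Nat.count_iff_forall.2 fun k hk => (h k (by omega)).2 hk,
    Nat.count_iff_forall_not.2 fun k hk => (h (m + k) (by omega)).not.2 (by omega), add_zero]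

lemma exists_monotone_count_eq (c : ℕ → ℕ) (m : ℕ) :
    ∃ f : ℕ → ℕ, Monotone f ∧ (∀ k < ∑ j ∈ Finset.range m, c j, f k < m) ∧
      ∀ j < m, Nat.count (f · = j) (∑ j ∈ Finset.range m, c j) = c j := by
  set C : ℕ → ℕ := fun j => ∑ i ∈ Finset.range j, c i with hC
  set f : ℕ → ℕ := fun k => Nat.count (fun j => C (j + 1) ≤ k) m
  have hCmono : Monotone C := fun i j hij => Finset.sum_le_sum_of_subset (by simpa)
  have hlt {j k} (hj : j ≤ m) : f k < j ↔ k < C j := by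
    obtain _ | j := j
    · simp [C]
    · rw [← not_le, ← not_le, not_iff_not]
      exact lt_count_iff (fun j _ h i hi => (hCmono (by omega)).trans h) hj
  refine ⟨f, fun k l hkl => Nat.count_mono_left fun j _ h => h.trans hkl,
    fun k hk => (hlt le_rfl).2 hk, fun j hj => ?_⟩
  have hcount i (hi : i ≤ m) : Nat.count (f · < i) (C m) = C i :=
    count_eq_of_iff_lt (hCmono hi) fun k _ => hlt hi
  have hsum := hcount (j + 1) hj
  rw [count_lt_eq_sum, Finset.sum_range_succ, ← count_lt_eq_sum, hcount j hj.le, hC] at hsum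
  simpa [Finset.sum_range_succ] using hsum

end Count

lemma count_pos_iff {p : ℕ → Prop} [DecidablePred p] {n : ℕ} :
    0 < Nat.count p n ↔ ∃ k < n, p k := by
  rw [Nat.pos_iff_ne_zero, Nat.count_ne_iff_exists]

section Pattern

variable {N i k l : ℕ} {s : ℕ → Bool}

/-- The row containing position `k` of the reading word of a skew shape in which row `i + 1` starts
right after row `i`; the pattern `s` tells which positions end a row. -/
def row (s : ℕ → Bool) (k : ℕ) : ℕ := Nat.count (fun j => s j = true) k

/-- The number of rows occupied by the first `N` positions, for `0 < N`. -/
def rowCount (N : ℕ) (s : ℕ → Bool) : ℕ := row s (N - 1) + 1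

/-- The number of positions in row `i` among the first `N` ones. -/
def rowLength (N : ℕ) (s : ℕ → Bool) (i : ℕ) : ℕ := Nat.count (row s · = i) N

@[simp] lemma row_zero (s : ℕ → Bool) : row s 0 = 0 := rfl

lemma row_succ (s : ℕ → Bool) (k : ℕ) : row s (k + 1) = row s k + if s k = true then 1 else 0 :=
  Nat.count_succ _ _

lemma row_mono (s : ℕ → Bool) : Monotone (row s) := Nat.count_monotone _

lemma row_lt_rowCount (hk : k < N) : row s k < rowCount N s :=
  Nat.lt_succ_of_le (row_mono s (by omega))

lemma row_lt_iff (hk : k < N) : row s k < i ↔ k < ∑ j ∈ Finset.range i, rowLength N s j := by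
  rw [lt_iff_lt_count (fun _ _ h _ => row_mono s h) hk, count_lt_eq_sum]
  rfl

lemma sum_rowLength (N : ℕ) (s : ℕ → Bool) :
    ∑ i ∈ Finset.range (rowCount N s), rowLength N s i = N :=
  (count_lt_eq_sum (row s) _ N).symm.trans (Nat.count_iff_forall.2 fun _ => row_lt_rowCount)

lemma exists_row_break (hi : i < row s k) : ∃ j < k, row s j = i ∧ s j = true := by
  induction k with
  | zero => simp at hi
  | succ k ih =>
    by_cases h : i < row s k
    · obtain ⟨j, hj, hij⟩ := ih h
      exact ⟨j, by omega, hij⟩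
    · rw [row_succ] at hi
      split_ifs at hi with hs <;> [exact ⟨k, by omega, by omega, hs⟩; omega]

lemma rowLength_pos (hN : 0 < N) (hi : i < rowCount N s) : 0 < rowLength N s i := by
  rw [rowLength, count_pos_iff]
  rcases (Nat.lt_succ_iff.1 hi).lt_or_eq with hlt | rfl
  · obtain ⟨k, hk, hrow, -⟩ := exists_row_break hlt
    exact ⟨k, by omega, hrow⟩
  · exact ⟨N - 1, by omega, rfl⟩

lemma exists_pattern {r : ℕ} {β : ℕ → ℕ} (hr : 0 < r) (hβ : ∀ i < r, 0 < β i)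
    (hN : ∑ i ∈ Finset.range r, β i = N) :
    ∃ s, rowCount N s = r ∧ ∀ i < r, rowLength N s i = β i := by
  obtain ⟨f, hmono, hlt, hcount⟩ := exists_monotone_count_eq β r
  rw [hN] at hlt hcount
  have hattained i (hi : i < r) : ∃ k < N, f k = i := by
    rw [← count_pos_iff, hcount i hi]
    exact hβ i hi
  have hrow k (hk : k < N) : row (fun k => decide (f k < f (k + 1))) k = f k := by
    induction k with
    | zero =>
      obtain ⟨k, -, hfk⟩ := hattained 0 hr
      have := hmono (Nat.zero_le k)
      rw [row_zero]
      omega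
    | succ k ih =>
      rw [row_succ, ih (by omega)]
      have hle := hmono (Nat.le_add_right k 1)
      have hfr := hlt (k + 1) hk
      by_cases hstep : f k < f (k + 1)
      · obtain ⟨j, -, hj⟩ := hattained (f k + 1) (by omega)
        have hkj : k < j := hmono.reflect_lt (by omega)
        have := hmono (show k + 1 ≤ j from hkj)
        rw [if_pos (decide_eq_true hstep)]
        omega
      · rw [if_neg (by simpa using hstep)]
        omega
  refine ⟨fun k => decide (f k < f (k + 1)), ?_, fun i hi => ?_⟩
  · obtain ⟨k, hk, hfk⟩ := hattained (r - 1) (by omega)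
    have := hlt (N - 1) (by omega)
    have := hmono (show k ≤ N - 1 by omega)
    rw [rowCount, hrow (N - 1) (by omega)]
    omega
  · rw [← hcount i hi]
    exact count_congr fun k hk => by rw [hrow k hk]

end Pattern

lemma ballot_of_forall_le {N : ℕ} {y : ℕ → ℕ} (hzero : ∀ k, N ≤ k → y k = 0)
    (h : ∀ n ≤ N, ∀ v, Nat.count (y · = v + 1) n ≤ Nat.count (y · = v) n) (n v : ℕ) :
    Nat.count (y · = v + 1) n ≤ Nat.count (y · = v) n :=
  calc Nat.count (y · = v + 1) n
    _ ≤ Nat.count (y · = v + 1) (min n N) := count_le_count fun k hk hkv => by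
      have := hzero k
      exact ⟨by omega, hkv⟩
    _ ≤ Nat.count (y · = v) (min n N) := h _ (min_le_right n N) v
    _ ≤ Nat.count (y · = v) n := Nat.count_monotone _ (min_le_left n N)

section BallotWord

variable {N k : ℕ} {s : ℕ → Bool} {lam y : ℕ → ℕ}

/-- A word `y 0, …, y (N - 1)` with content `lam`, extended by zero, all of whose prefixes contain
at least as many letters `v` as letters `v + 1`, and whose ascents are exactly the row ends given
by `s`. The letters start from `0`. -/
structure IsBallotWord (N : ℕ) (s : ℕ → Bool) (lam y : ℕ → ℕ) : Prop where
  eq_zero : ∀ k, N ≤ k → y k = 0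
  ballot : ∀ n v, Nat.count (y · = v + 1) n ≤ Nat.count (y · = v) n
  count_eq : ∀ v, Nat.count (y · = v) N = lam v
  lt_succ_iff : ∀ k, k + 1 < N → (y k < y (k + 1) ↔ s k = true)

/-- The ballot words of length `N` with ascent pattern `s` and content `lam`. -/
def ballotWords (N : ℕ) (s : ℕ → Bool) (lam : ℕ → ℕ) : Set (ℕ → ℕ) := {y | IsBallotWord N s lam y}

namespace IsBallotWord

lemma apply_le (hy : IsBallotWord N s lam y) (k : ℕ) : y k ≤ k := by
  induction k using Nat.strong_induction_on with
  | _ k ih =>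
    rcases hv : y k with _ | v
    · exact Nat.zero_le k
    obtain ⟨j, hj, hjv⟩ := count_pos_iff.1
      ((count_pos_iff.2 ⟨k, k.lt_add_one, hv⟩).trans_le (hy.ballot (k + 1) v))
    have hjk : j ≠ k := by rintro rfl; omega
    have := ih j (by omega)
    omega

lemma apply_lt_or_eq_zero (hy : IsBallotWord N s lam y) (k : ℕ) : y k < N ∨ y k = 0 := by
  have := hy.apply_le k
  have := hy.eq_zero k
  omega

lemma content_eq_zero (hy : IsBallotWord N s lam y) {v : ℕ} (hv : N ≤ v) : lam v = 0 := by
  rw [← hy.count_eq]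
  refine Nat.count_iff_forall_not.2 fun k hk hkv => ?_
  have := hy.apply_le k
  omega

lemma antitone_of_row_eq (hy : IsBallotWord N s lam y) {k l : ℕ} (hkl : k ≤ l) (hl : l < N)
    (hrow : row s k = row s l) : y l ≤ y k := by
  induction l, hkl using Nat.le_induction with
  | base => exact le_rfl
  | succ l hkl ih =>
    have hmono := row_mono s hkl
    have hsucc := row_succ s l
    have hs : ¬s l = true := by intro hs; rw [if_pos hs] at hsucc; omega
    rw [if_neg hs] at hsucc
    exact (not_lt.1 (mt (hy.lt_succ_iff l hl).1 hs)).trans (ih (by omega) (by omega))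

end IsBallotWord

end BallotWord

section LetterCount

variable {N i k l r : ℕ} {s : ℕ → Bool} {lam y z : ℕ → ℕ}

lemma rowStart_add_rowLength_le (N : ℕ) (s : ℕ → Bool) (i : ℕ) :
    ∑ j ∈ Finset.range i, rowLength N s j + rowLength N s i ≤ N := by
  rw [← Finset.sum_range_succ]
  exact (count_lt_eq_sum (row s) _ N).symm.trans_le (Nat.count_le _)

lemma row_eq_iff (hk : k < N) : row s k = i ↔
    ∑ j ∈ Finset.range i, rowLength N s j ≤ k ∧
      k < ∑ j ∈ Finset.range i, rowLength N s j + rowLength N s i := by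
  rw [← Finset.sum_range_succ, ← not_lt, ← row_lt_iff hk, ← row_lt_iff hk]
  omega

lemma count_row_eq_and (s : ℕ → Bool) (i N : ℕ) (p : ℕ → Prop) [DecidablePred p] :
    Nat.count (fun k => row s k = i ∧ p k) N =
      Nat.count (fun o => p (∑ j ∈ Finset.range i, rowLength N s j + o)) (rowLength N s i) := by
  obtain ⟨l, hl⟩ := Nat.exists_eq_add_of_le (rowStart_add_rowLength_le N s i)
  conv_lhs => rw [hl]
  have hbefore : Nat.count (fun k => row s k = i ∧ p k)
      (∑ j ∈ Finset.range i, rowLength N s j) = 0 :=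
    Nat.count_iff_forall_not.2 fun k hk hp => by
      have := (row_eq_iff (N := N) (by omega)).1 hp.1
      omega
  have hafter : Nat.count (fun k =>
      row s (∑ j ∈ Finset.range i, rowLength N s j + rowLength N s i + k) = i ∧
        p (∑ j ∈ Finset.range i, rowLength N s j + rowLength N s i + k)) l = 0 :=
    Nat.count_iff_forall_not.2 fun k hk hp => by
      have := (row_eq_iff (N := N) (by omega)).1 hp.1
      omega
  rw [Nat.count_add, Nat.count_add, hbefore, hafter, zero_add, add_zero]
  exact count_congr fun k hk => and_iff_right ((row_eq_iff (N := N) (by omega)).2 (by omega))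

/-- The matrix of letter multiplicities of a word: the number of letters `v` in row `i`. -/
def letterCount (N : ℕ) (s : ℕ → Bool) (y : ℕ → ℕ) (i : ℕ) (v : Fin (N + 1)) : ℕ :=
  Nat.count (fun k => row s k = i ∧ y k = v) N

lemma sum_letterCount (hy : ∀ k < N, y k ≤ N) (i : ℕ) :
    ∑ v, letterCount N s y i v = rowLength N s i := by
  rw [rowLength, count_eq_sum_count_and_eq (f := y) (Finset.range (N + 1)) fun k hk _ => by
    simpa [Nat.lt_succ_iff] using hy k hk, Finset.sum_range]
  rfl

lemma colSum_letterCount (y : ℕ → ℕ) (k : ℕ) (v : Fin (N + 1)) :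
    colSum k (letterCount N s y) v = Nat.count (fun j => row s j < k ∧ y j = v) N := by
  rw [count_eq_sum_count_and_eq (f := row s) (Finset.range k) fun j _ h => Finset.mem_range.2 h.1]
  refine Finset.sum_congr rfl fun i hi => count_congr fun j _ => ?_
  have := Finset.mem_range.1 hi
  constructor <;> rintro h <;> refine ⟨?_, ?_⟩ <;> omega

lemma eq_of_letterCount_eq (hy : ∀ k < N, y k ≤ N) (hz : ∀ k < N, z k ≤ N)
    (hya : ∀ k l, k ≤ l → l < N → row s k = row s l → y l ≤ y k)
    (hza : ∀ k l, k ≤ l → l < N → row s k = row s l → z l ≤ z k)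
    (h : letterCount N s y = letterCount N s z) (hk : k < N) : y k = z k := by
  obtain ⟨hstart, hend⟩ := (row_eq_iff hk).1 rfl
  have hle := rowStart_add_rowLength_le N s (row s k)
  set i := row s k
  set S := ∑ j ∈ Finset.range i, rowLength N s j
  have hrow o (ho : o < rowLength N s i) : row s (S + o) = i :=
    (row_eq_iff (N := N) (by omega)).2 (by omega)
  have hcount w (hw : ∀ k < N, w k ≤ N) j (hj : j ≤ N) :
      Nat.count (fun o => N - w (S + o) = j) (rowLength N s i) =
        letterCount N s w i ⟨N - j, by omega⟩ := by
    rw [letterCount, count_row_eq_and]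
    refine count_congr fun o ho => ?_
    have := hw (S + o) (by omega)
    change N - w (S + o) = j ↔ w (S + o) = N - j
    omega
  have heq := eq_of_count_eq (f := fun o => N - y (S + o)) (g := fun o => N - z (S + o))
    (N := rowLength N s i) (k := k - S)
    (fun o o' ho ho' => Nat.sub_le_sub_left (hya _ _ (by omega) (by omega)
      ((hrow _ (by omega)).trans (hrow _ ho').symm)) N)
    (fun o o' ho ho' => Nat.sub_le_sub_left (hza _ _ (by omega) (by omega)
      ((hrow _ (by omega)).trans (hrow _ ho').symm)) N)
    (fun j => ?_) (by omega)
  · have := hy k hk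
    have := hz k hk
    rw [Nat.add_sub_cancel' hstart] at heq
    omega
  · rcases le_or_gt j N with hj | hj
    · rw [hcount y hy j hj, hcount z hz j hj, h]
    · exact count_congr fun o _ => by omega

lemma exists_antitone_count_eq (b : Fin (N + 1) → ℕ) :
    ∃ g : ℕ → ℕ, Antitone g ∧ (∀ k, g k ≤ N) ∧
      ∀ v : Fin (N + 1), Nat.count (g · = v) (∑ w, b w) = b v := by
  obtain ⟨f, hmono, hlt, hcount⟩ :=
    exists_monotone_count_eq (fun j => b (Fin.rev (Fin.ofNat (N + 1) j))) (N + 1)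
  have hsum : ∑ j ∈ Finset.range (N + 1), b (Fin.rev (Fin.ofNat (N + 1) j)) = ∑ w, b w := by
    rw [Finset.sum_range, ← Equiv.sum_comp Fin.revPerm b]
    simp
  rw [hsum] at hlt hcount
  refine ⟨fun k => N - f k, fun k l hkl => Nat.sub_le_sub_left (hmono hkl) N,
    fun k => Nat.sub_le _ _, fun v => ?_⟩
  have hv := v.is_lt
  calc Nat.count (fun k => N - f k = v) (∑ w, b w)
      = Nat.count (f · = N - v) (∑ w, b w) :=
        count_congr fun k hk => by have := hlt k hk; omega
    _ = b v := by
      rw [hcount (N - v) (by omega)]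
      congr 1
      ext
      simp only [Fin.val_rev, Fin.val_ofNat, Nat.mod_eq_of_lt (show N - v < N + 1 by omega)]
      omega

lemma exists_letterCount_eq {a : ℕ → Fin (N + 1) → ℕ}
    (ha : ∀ i < rowCount N s, ∑ v, a i v = rowLength N s i) :
    ∃ y : ℕ → ℕ, (∀ k, N ≤ k → y k = 0) ∧ (∀ k, y k ≤ N) ∧
      (∀ k l, k ≤ l → l < N → row s k = row s l → y l ≤ y k) ∧
      ∀ i < rowCount N s, letterCount N s y i = a i := by
  choose g hanti hle hcount using fun i => exists_antitone_count_eq (a i)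
  refine ⟨fun k => if k < N then
    g (row s k) (k - ∑ j ∈ Finset.range (row s k), rowLength N s j) else 0,
    fun k hk => if_neg (by omega), fun k => ?_, fun k l hkl hl hrow => ?_, fun i hi => ?_⟩
  · dsimp only
    split_ifs
    exacts [hle _ _, Nat.zero_le N]
  · dsimp only
    rw [if_pos hl, if_pos (by omega), hrow]
    exact hanti _ (by omega)
  · ext v
    rw [letterCount, ← hcount i v, ha i hi, count_row_eq_and]
    refine count_congr fun o ho => ?_
    have := rowStart_add_rowLength_le N s i
    rw [if_pos (by omega), (row_eq_iff (N := N) (i := i) (by omega)).2 (by omega),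
      Nat.add_sub_cancel_left]

namespace IsBallotWord

lemma colSum_letterCount_le (hy : IsBallotWord N s lam y) (k : ℕ) {t u : Fin (N + 1)}
    (htu : t ⋖ u) :
    colSum (k + 1) (letterCount N s y) u ≤ colSum k (letterCount N s y) t := by
  have hu : (u : ℕ) = t + 1 := (Nat.covBy_iff_add_one_eq.1 (Fin.covBy_iff.1 htu)).symm
  rw [colSum_letterCount, colSum_letterCount]
  set n := Nat.count (fun j => row s j < k ∨ row s j = k ∧ t < y j) N
  have hn {j} (hj : j < N) : j < n ↔ row s j < k ∨ row s j = k ∧ t < y j := by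
    refine lt_count_iff (fun j hj h l hl => ?_) hj
    have := row_mono s hl.le
    rcases h with h | ⟨h, hlt⟩
    · exact Or.inl (by omega)
    · rcases this.lt_or_eq with hrow | hrow
      · exact Or.inl (by omega)
      · exact Or.inr ⟨by omega, hlt.trans_le (hy.antitone_of_row_eq hl.le hj hrow)⟩
  calc Nat.count (fun j => row s j < k + 1 ∧ y j = u) N
      ≤ Nat.count (y · = t + 1) n :=
        count_le_count fun j hj h => ⟨(hn hj).2 (by omega), by omega⟩
    _ ≤ Nat.count (y · = t) n := hy.ballot n t
    _ ≤ Nat.count (fun j => row s j < k ∧ y j = t) N := count_le_count fun j hj h => by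
        have hjN : j < N := hj.trans_le (Nat.count_le _)
        have := (hn hjN).1 hj
        exact ⟨hjN, by omega, h⟩

lemma isBallot_letterCount (hy : IsBallotWord N s lam y) :
    IsBallot (rowCount N s) (fun v : Fin (N + 1) => lam v) (letterCount N s y) where
  support i hi := funext fun v => Nat.count_iff_forall_not.2 fun k hk h =>
    ((row_lt_rowCount hk).trans_le hi).ne h.1
  colSum_eq v := by
    rw [colSum_letterCount, ← hy.count_eq]
    exact count_congr fun k hk => and_iff_right (row_lt_rowCount hk)
  colSum_le k _ _ := hy.colSum_letterCount_le k

lemma le_length (hy : IsBallotWord N s lam y) (k : ℕ) : y k ≤ N := by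
  have := hy.apply_lt_or_eq_zero k
  omega

lemma rowOverlap_letterCount_pos (hy : IsBallotWord N s lam y) {i : ℕ}
    (hi : i + 1 < rowCount N s) : 0 < rowOverlap (letterCount N s y) i := by
  obtain ⟨k, hk, hrow, hs⟩ := exists_row_break (show i < row s (N - 1) by
    rw [rowCount] at hi; omega)
  have hlt := (hy.lt_succ_iff k (by omega)).2 hs
  have hle := hy.le_length (k + 1)
  refine overlap_pos_iff.2 ⟨⟨y k, by omega⟩, ⟨y (k + 1), by omega⟩, hlt,
    count_pos_iff.2 ⟨k, by omega, hrow, rfl⟩, count_pos_iff.2 ⟨k + 1, by omega, ?_, rfl⟩⟩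
  rw [row_succ, if_pos hs, hrow]

lemma letterCount_mem_rowClass (hy : IsBallotWord N s lam y) :
    letterCount N s y ∈
      rowClass (rowCount N s) (IsBallot (rowCount N s) fun v : Fin (N + 1) => lam v)
        (rowLength N s) :=
  ⟨hy.isBallot_letterCount, fun i _ => sum_letterCount (fun k _ => hy.le_length k) i,
    fun _ => hy.rowOverlap_letterCount_pos⟩

end IsBallotWord

lemma IsBallot.count_succ_le (hy : ∀ k < N, y k ≤ N) (hzero : ∀ k, N ≤ k → y k = 0)
    (h : IsBallot r (fun v : Fin (N + 1) => lam v) (letterCount N s y)) (n v : ℕ) :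
    Nat.count (y · = v + 1) n ≤ Nat.count (y · = v) n := by
  rcases (Nat.count (y · = v + 1) n).eq_zero_or_pos with h0 | hpos
  · omega
  obtain ⟨k, hk, hkv⟩ := count_pos_iff.1 hpos
  have hkN : k < N := by by_contra hkN; have := hzero k (by omega); omega
  have hv := hy k hkN
  set l := min n N - 1
  calc Nat.count (y · = v + 1) n
      ≤ Nat.count (fun j => row s j < row s l + 1 ∧ y j = v + 1) N :=
        count_le_count fun j hj hjv => by
          have hjN : j < N := by by_contra hjN; have := hzero j (by omega); omega
          exact ⟨hjN, Nat.lt_succ_of_le (row_mono s (by omega)), hjv⟩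
    _ = colSum (row s l + 1) (letterCount N s y) ⟨v + 1, by omega⟩ :=
        (colSum_letterCount (N := N) y _ ⟨v + 1, by omega⟩).symm
    _ ≤ colSum (row s l) (letterCount N s y) ⟨v, by omega⟩ :=
        h.colSum_le _ _ _ (Fin.covBy_iff.2 (Nat.covBy_iff_add_one_eq.2 rfl))
    _ = Nat.count (fun j => row s j < row s l ∧ y j = v) N := colSum_letterCount y _ _
    _ ≤ Nat.count (y · = v) n := count_le_count fun j _ h =>
        ⟨by have := (row_mono s).reflect_lt h.1; omega, h.2⟩

lemma lt_succ_iff_of_rowOverlap_pos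
    (hanti : ∀ k l, k ≤ l → l < N → row s k = row s l → y l ≤ y k)
    (hoverlap : ∀ i, i + 1 < rowCount N s → 0 < rowOverlap (letterCount N s y) i)
    (hk : k + 1 < N) : y k < y (k + 1) ↔ s k = true := by
  have hsucc := row_succ s k
  by_cases hs : s k = true
  · rw [if_pos hs] at hsucc
    obtain ⟨t, u, htu, ht, hu⟩ := overlap_pos_iff.1
      (hoverlap (row s k) (by have := row_lt_rowCount (s := s) hk; omega))
    obtain ⟨j, -, hjrow, hjt⟩ := count_pos_iff.1 ht
    obtain ⟨l, hl, hlrow, hlu⟩ := count_pos_iff.1 hu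
    have hjk : j ≤ k := by
      by_contra hjk
      have := row_mono s (show k + 1 ≤ j by omega)
      omega
    have hkl : k + 1 ≤ l := by
      by_contra hkl
      have := row_mono s (show l ≤ k by omega)
      omega
    have := hanti j k hjk (by omega) hjrow
    have := hanti (k + 1) l hkl hl (by omega)
    have : (t : ℕ) < u := htu
    exact iff_of_true (by omega) hs
  · rw [if_neg hs, add_zero] at hsucc
    have := hanti k (k + 1) (by omega) hk hsucc.symm
    exact iff_of_false (by omega) hs

lemma exists_ballotWord_letterCount_eq (hlam : ∀ v, N ≤ v → lam v = 0)
    {a : ℕ → Fin (N + 1) → ℕ}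
    (ha : a ∈ rowClass (rowCount N s) (IsBallot (rowCount N s) fun v : Fin (N + 1) => lam v)
        (rowLength N s)) :
    ∃ y, IsBallotWord N s lam y ∧ letterCount N s y = a := by
  obtain ⟨hballot, hrows, hoverlap⟩ := ha
  obtain ⟨y, hzero, hle, hanti, hletter⟩ := exists_letterCount_eq hrows
  have hya : letterCount N s y = a := by
    ext i v
    rcases lt_or_ge i (rowCount N s) with hi | hi
    · rw [hletter i hi]
    · rw [hballot.support i hi]
      exact Nat.count_iff_forall_not.2 fun k hk h => ((row_lt_rowCount hk).trans_le hi).ne h.1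
  subst hya
  refine ⟨y, ⟨hzero, hballot.count_succ_le (fun k _ => hle k) hzero, fun v => ?_, fun k =>
    lt_succ_iff_of_rowOverlap_pos hanti hoverlap⟩, rfl⟩
  rcases le_or_gt v N with hv | hv
  · rw [← hballot.colSum_eq ⟨v, by omega⟩, colSum_letterCount]
    exact count_congr fun k hk => (and_iff_right (row_lt_rowCount hk)).symm
  · rw [hlam v hv.le]
    exact Nat.count_iff_forall_not.2 fun k _ h => by have := hle k; omega

lemma rowClass_congr {ι : Type*} [Fintype ι] [LinearOrder ι] [Nonempty ι]
    {Q : (ℕ → ι → ℕ) → Prop} {α β : ℕ → ℕ} (h : ∀ i < r, α i = β i) :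
    rowClass r Q α = rowClass r Q β := by
  ext a
  exact and_congr_right' (and_congr_left' (forall₂_congr fun i hi => by rw [h i hi]))

theorem nonempty_embedding_ballotWords {t : ℕ → Bool} {β : ℕ → ℕ}
    (hs : Relation.ReflTransGen (BalancingStep (rowCount N s)) (rowLength N s) β)
    (hcount : rowCount N t = rowCount N s) (ht : ∀ i < rowCount N s, rowLength N t i = β i) :
    Nonempty (ballotWords N s lam ↪ ballotWords N t lam) := by
  rcases isEmpty_or_nonempty (ballotWords N s lam) with hempty | ⟨⟨y₀, hy₀⟩⟩
  · exact ⟨.ofIsEmpty⟩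
  obtain ⟨f⟩ := nonempty_embedding_of_reflTransGen_balancingStep
    (lowersInvariant_isBallot _ fun v : Fin (N + 1) => lam v) hs
  have hclass : rowClass (rowCount N t) (IsBallot (rowCount N t) fun v : Fin (N + 1) => lam v)
      (rowLength N t) = rowClass (rowCount N s)
        (IsBallot (rowCount N s) fun v : Fin (N + 1) => lam v) β := by
    rw [hcount]
    exact rowClass_congr ht
  have hword (y : ballotWords N s lam) : IsBallotWord N s lam y := y.2
  choose g hg hgf using fun y => exists_ballotWord_letterCount_eq (fun _ => hy₀.content_eq_zero)
    (hclass.superset (f ⟨_, (hword y).letterCount_mem_rowClass⟩).2)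
  refine ⟨fun y => ⟨g y, hg y⟩, fun y z hyz => ?_⟩
  have hf : letterCount N s y = letterCount N s z := by
    have := f.injective (Subtype.ext ((hgf y).symm.trans
      ((congrArg (letterCount N t) (congrArg Subtype.val hyz)).trans (hgf z))))
    exact congrArg Subtype.val this
  ext k
  rcases lt_or_ge k N with hk | hk
  · exact eq_of_letterCount_eq (fun k _ => (hword y).le_length k)
      (fun k _ => (hword z).le_length k) (fun _ _ => (hword y).antitone_of_row_eq)
      (fun _ _ => (hword z).antitone_of_row_eq) hf hk
  · exact ((hword y).eq_zero k hk).trans ((hword z).eq_zero k hk).symm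

end LetterCount

/-! ### Transposition and equitable patterns -/

section Transpose

variable {N n : ℕ} {s t : ℕ → Bool} {lam y : ℕ → ℕ}

lemma row_add_row_compl (s : ℕ → Bool) (k : ℕ) : row s k + row sᶜ k = k := by
  induction k with
  | zero => rfl
  | succ k ih =>
    rw [row_succ, row_succ, Pi.compl_apply]
    cases s k <;> simp <;> omega

lemma rowCount_add_rowCount_compl (hN : 0 < N) (s : ℕ → Bool) :
    rowCount N s + rowCount N sᶜ = N + 1 := by
  have := row_add_row_compl s (N - 1)
  rw [rowCount, rowCount]
  omega

/-- The conjugate of a content with at most `N` letters. -/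
def conjugateContent (N : ℕ) (lam : ℕ → ℕ) (v : ℕ) : ℕ := Nat.count (fun u => v < lam u) N

/-- The transpose of a ballot word: each letter is replaced by the number of its earlier
occurrences. It corresponds to transposing the standard Young tableau encoded by the word. -/
def transposeWord (N : ℕ) (y : ℕ → ℕ) (k : ℕ) : ℕ :=
  if k < N then Nat.count (y · = y k) k else 0

lemma transposeWord_of_lt {k : ℕ} (y : ℕ → ℕ) (hk : k < N) :
    transposeWord N y k = Nat.count (y · = y k) k := if_pos hk

lemma count_eq_count_add_one {p q : ℕ → Prop} [DecidablePred p] [DecidablePred q] {a : ℕ}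
    (ha : a < N) (hp : ¬p a) (hq : ∀ u, q u ↔ p u ∨ u = a) : Nat.count q N = Nat.count p N + 1 := by
  simp only [Nat.count_eq_card_filter_range]
  rw [← Finset.card_insert_of_notMem (a := a) (by simp [hp])]
  congr 1
  ext u
  simp only [Finset.mem_filter, Finset.mem_insert, hq]
  grind

lemma count_transposeWord (hy : ∀ k < N, y k < N) (hn : n ≤ N) (v : ℕ) :
    Nat.count (transposeWord N y · = v) n =
      Nat.count (fun u => v < Nat.count (y · = u) n) N := by
  induction n with
  | zero => simp
  | succ n ih =>
    rw [Nat.count_succ, ih (by omega), transposeWord_of_lt y (by omega)]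
    have hsucc u : Nat.count (y · = u) (n + 1) = Nat.count (y · = u) n + if y n = u then 1 else 0 :=
      Nat.count_succ _ _
    split_ifs with hv
    · refine (count_eq_count_add_one (hy n (by omega)) (by omega) fun u => ?_).symm
      rw [hsucc]
      split_ifs with hu
      · subst hu; omega
      · simp [Ne.symm hu]
    · refine count_congr fun u _ => ?_
      rw [hsucc]
      split_ifs with hu
      · subst hu; omega
      · rfl

namespace IsBallotWord

lemma count_antitone (hy : IsBallotWord N s lam y) (n : ℕ) :
    Antitone fun v => Nat.count (y · = v) n :=
  antitone_nat_of_succ_le fun v => hy.ballot n v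

lemma apply_lt (hy : IsBallotWord N s lam y) {k : ℕ} (hk : k < N) : y k < N :=
  (hy.apply_le k).trans_lt hk

lemma transposeWord_lt_succ_iff (hy : IsBallotWord N s lam y) {k : ℕ} (hk : k + 1 < N) :
    transposeWord N y k < transposeWord N y (k + 1) ↔ sᶜ k = true := by
  rw [transposeWord_of_lt y (by omega), transposeWord_of_lt y hk, Nat.count_succ, Pi.compl_apply]
  have hiff := hy.lt_succ_iff k hk
  rcases lt_or_ge (y k) (y (k + 1)) with hlt | hle
  · have := hy.count_antitone k hlt.le
    dsimp only at this
    rw [if_neg hlt.ne, hiff.1 hlt]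
    simpa
  · have := hy.count_antitone (k + 1) hle
    rw [Bool.eq_false_iff.2 (mt hiff.2 hle.not_gt)]
    simp only [Nat.count_succ, if_true] at this
    exact iff_of_true (by omega) rfl

lemma transpose (hy : IsBallotWord N s lam y) :
    IsBallotWord N sᶜ (conjugateContent N lam) (transposeWord N y) where
  eq_zero k hk := if_neg hk.not_gt
  ballot := ballot_of_forall_le (fun _ hk => if_neg hk.not_gt) fun n hn v => by
    rw [count_transposeWord (fun _ => hy.apply_lt) hn,
      count_transposeWord (fun _ => hy.apply_lt) hn]
    exact Nat.count_mono_left fun _ _ h => by omega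
  count_eq v := by
    rw [count_transposeWord (fun _ => hy.apply_lt) le_rfl]
    simp only [hy.count_eq]
    rfl
  lt_succ_iff k hk := hy.transposeWord_lt_succ_iff hk

lemma transposeWord_transposeWord (hy : IsBallotWord N s lam y) :
    transposeWord N (transposeWord N y) = y := by
  ext k
  rcases le_or_gt N k with hk | hk
  · rw [hy.eq_zero k hk]
    exact if_neg hk.not_gt
  rw [transposeWord_of_lt _ hk, count_transposeWord (fun _ => hy.apply_lt) hk.le,
    transposeWord_of_lt y hk]
  refine count_eq_of_iff_lt (hy.le_length k) fun u _ => ?_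
  rcases lt_or_ge u (y k) with hu | hu
  · have := hy.count_antitone (k + 1) hu.le
    simp only [Nat.count_succ, if_true, if_neg hu.ne'] at this
    exact iff_of_true (by omega) hu
  · have := hy.count_antitone k hu
    exact iff_of_false this.not_gt hu.not_gt

lemma conjugateContent_conjugateContent (hy : IsBallotWord N s lam y) :
    conjugateContent N (conjugateContent N lam) = lam := by
  ext v
  rw [← hy.count_eq, ← hy.transpose.transpose.count_eq, hy.transposeWord_transposeWord]

end IsBallotWord

lemma nonempty_embedding_ballotWords_compl (N : ℕ) (s : ℕ → Bool) (lam : ℕ → ℕ) :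
    Nonempty (ballotWords N s lam ↪ ballotWords N sᶜ (conjugateContent N lam)) :=
  ⟨fun y => ⟨transposeWord N y, IsBallotWord.transpose y.2⟩, fun y z hyz => Subtype.ext <| by
    have heq : transposeWord N y = transposeWord N z := congrArg Subtype.val hyz
    rw [← IsBallotWord.transposeWord_transposeWord y.2, heq,
      IsBallotWord.transposeWord_transposeWord z.2]⟩

lemma nonempty_embedding_ballotWords_of_compl
    (h : ∀ mu, Nonempty (ballotWords N sᶜ mu ↪ ballotWords N tᶜ mu)) (lam : ℕ → ℕ) :
    Nonempty (ballotWords N s lam ↪ ballotWords N t lam) := by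
  rcases isEmpty_or_nonempty (ballotWords N s lam) with hempty | ⟨⟨y, hy⟩⟩
  · exact ⟨.ofIsEmpty⟩
  obtain ⟨f⟩ := nonempty_embedding_ballotWords_compl N s lam
  obtain ⟨g⟩ := h (conjugateContent N lam)
  obtain ⟨e⟩ := nonempty_embedding_ballotWords_compl N tᶜ (conjugateContent N lam)
  rw [compl_compl, IsBallotWord.conjugateContent_conjugateContent hy] at e
  exact ⟨(f.trans g).trans e⟩

end Transpose

section Balanced

variable {N i : ℕ} {s t u : ℕ → Bool} {β : ℕ → ℕ}

/-- The rows cut out by a pattern have lengths differing by at most one. -/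
def RowBalanced (N : ℕ) (s : ℕ → Bool) : Prop :=
  ∀ i < rowCount N s, ∀ j < rowCount N s, rowLength N s i ≤ rowLength N s j + 1

/-- Both patterns have the same number of rows, and the ballot words with ascent pattern `s` embed
into those with ascent pattern `t`, content by content. -/
structure PatternLE (N : ℕ) (s t : ℕ → Bool) : Prop where
  rowCount_eq : rowCount N t = rowCount N s
  nonempty_embedding : ∀ lam, Nonempty (ballotWords N s lam ↪ ballotWords N t lam)

lemma PatternLE.trans (hst : PatternLE N s t) (htu : PatternLE N t u) : PatternLE N s u where
  rowCount_eq := htu.rowCount_eq.trans hst.rowCount_eq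
  nonempty_embedding lam :=
    (hst.nonempty_embedding lam).elim fun f => (htu.nonempty_embedding lam).map f.trans

lemma PatternLE.of_compl (hN : 0 < N) (h : PatternLE N sᶜ tᶜ) : PatternLE N s t where
  rowCount_eq := by
    have := h.rowCount_eq
    have := rowCount_add_rowCount_compl hN s
    have := rowCount_add_rowCount_compl hN t
    omega
  nonempty_embedding := nonempty_embedding_ballotWords_of_compl h.nonempty_embedding

lemma exists_patternLE (hN : 0 < N)
    (h : Relation.ReflTransGen (BalancingStep (rowCount N s)) (rowLength N s) β) :
    ∃ t, PatternLE N s t ∧ ∀ i < rowCount N s, rowLength N t i = β i := by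
  obtain ⟨t, hcount, ht⟩ := exists_pattern (Nat.succ_pos _)
    (fun i hi => pos_of_reflTransGen_balancingStep h (rowLength_pos hN hi))
    ((sum_eq_of_reflTransGen_balancingStep h).trans (sum_rowLength N s))
  exact ⟨t, ⟨hcount, fun lam => nonempty_embedding_ballotWords h hcount ht⟩, ht⟩

lemma exists_patternLE_rowBalanced (hN : 0 < N) (s : ℕ → Bool) :
    ∃ t, PatternLE N s t ∧ RowBalanced N t := by
  obtain ⟨β, h, hβ⟩ := exists_balanced (rowCount N s) (rowLength N s)
  obtain ⟨t, hst, ht⟩ := exists_patternLE hN h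
  refine ⟨t, hst, ?_⟩
  rw [RowBalanced, hst.rowCount_eq]
  intro i hi j hj
  rw [ht i hi, ht j hj]
  exact hβ i hi j hj

lemma rowLength_le_two (h : ∀ k, k + 2 < N → s k = true ∨ s (k + 1) = true) (i : ℕ) :
    rowLength N s i ≤ 2 := by
  by_contra! hlen
  have hle := rowStart_add_rowLength_le N s i
  set k := ∑ j ∈ Finset.range i, rowLength N s j
  have hrow o (ho : o < 3) : row s (k + o) = i := (row_eq_iff (N := N) (by omega)).2 (by omega)
  have h0 := hrow 0 (by omega)
  have h1 := row_succ s k ▸ hrow 1 (by omega)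
  have h2 := row_succ s (k + 1) ▸ hrow 2 (by omega)
  have h1' := hrow 1 (by omega)
  rcases h k (by omega) with hs | hs
  · rw [if_pos hs] at h1; rw [add_zero] at h0; omega
  · rw [if_pos hs] at h2; omega

lemma not_break_succ (h : ∀ i, 0 < i → i + 1 < rowCount N s → 2 ≤ rowLength N s i) {k : ℕ}
    (hk : k + 2 < N) (hs : s k = true) : s (k + 1) ≠ true := by
  intro hs'
  have hrow := row_succ s k
  have hrow' : row s (k + 2) = _ := row_succ s (k + 1)
  rw [if_pos hs] at hrow
  rw [if_pos hs'] at hrow'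
  have hlt := row_lt_rowCount (s := s) hk
  have hlen := h (row s (k + 1)) (by omega) (by omega)
  obtain ⟨hstart, -⟩ := (row_eq_iff (s := s) (i := row s (k + 1)) (show k + 1 < N by omega)).1 rfl
  have hle := rowStart_add_rowLength_le N s (row s (k + 1))
  set S := ∑ j ∈ Finset.range (row s (k + 1)), rowLength N s j
  have hS o (ho : o < 2) : row s (S + o) = row s (k + 1) :=
    (row_eq_iff (N := N) (by omega)).2 (by omega)
  have hfirst := hS 0 (by omega)
  have hsecond := hS 1 (by omega)
  rw [add_zero] at hfirst
  rcases hstart.lt_or_eq with hlt | heq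
  · have := row_mono s (show S ≤ k by omega)
    omega
  · rw [heq] at hsecond
    change row s (k + 2) = _ at hsecond
    omega

lemma rowBalanced_compl (hN : 0 < N)
    (h : ∀ i, 0 < i → i + 1 < rowCount N s → 2 ≤ rowLength N s i) : RowBalanced N sᶜ := by
  intro i _ j hj
  have hle := rowLength_le_two (s := sᶜ) (N := N) (fun k hk => ?_) i
  · have := rowLength_pos hN hj
    omega
  · have := not_break_succ h hk
    simp only [Pi.compl_apply]
    revert this
    cases s k <;> cases s (k + 1) <;> simp

lemma RowBalanced.two_le_rowLength (hs : RowBalanced N s) (hN : 2 * rowCount N s ≤ N)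
    (hi : i < rowCount N s) : 2 ≤ rowLength N s i := by
  by_contra! hlt
  have : ∑ j ∈ Finset.range (rowCount N s), rowLength N s j <
      ∑ j ∈ Finset.range (rowCount N s), 2 :=
    Finset.sum_lt_sum (fun j hj => (hs j (Finset.mem_range.1 hj) i hi).trans (by omega))
      ⟨i, Finset.mem_range.2 hi, hlt⟩
  rw [sum_rowLength, Finset.sum_const, Finset.card_range, smul_eq_mul] at this
  omega

lemma exists_rowBalanced_of_two_mul_rowCount_le (hN : 0 < N) (h : 2 * rowCount N s ≤ N) :
    ∃ t, PatternLE N s t ∧ RowBalanced N t ∧ RowBalanced N tᶜ := by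
  obtain ⟨t, hst, ht⟩ := exists_patternLE_rowBalanced hN s
  rw [← hst.rowCount_eq] at h
  exact ⟨t, hst, ht, rowBalanced_compl hN fun i _ hi => ht.two_le_rowLength h (by omega)⟩

lemma RowBalanced.exists_rowLength_eq_one (hs : RowBalanced N s) (hN : 2 * rowCount N s = N + 1) :
    ∃ x < rowCount N s, rowLength N s x = 1 ∧
      ∀ i < rowCount N s, i ≠ x → rowLength N s i = 2 := by
  have hsum := sum_rowLength N s
  obtain ⟨x, hx, hlt⟩ : ∃ x < rowCount N s, rowLength N s x < 2 := by
    by_contra! hge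
    have := Finset.sum_le_sum fun j (hj : j ∈ Finset.range (rowCount N s)) =>
      hge j (Finset.mem_range.1 hj)
    rw [hsum, Finset.sum_const, Finset.card_range, smul_eq_mul] at this
    omega
  have hone : rowLength N s x = 1 := by
    have := rowLength_pos (by omega) hx
    omega
  refine ⟨x, hx, hone, fun i hi hix => ?_⟩
  have hx' := Finset.mem_range.2 hx
  rw [← Finset.add_sum_erase _ _ hx', hone] at hsum
  refine (Finset.sum_eq_sum_iff_of_le (g := fun _ => 2) (s := (Finset.range (rowCount N s)).erase x)
    fun j hj => ?_).1 ?_ i (by simp [hi, hix])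
  · have := hs j (by simp at hj; omega) x hx
    omega
  · rw [Finset.sum_const, Finset.card_erase_of_mem hx', Finset.card_range, smul_eq_mul]
    omega

lemma row_lt_iff_of_rowLength_eq_one {x : ℕ} (hx : rowLength N s x = 1)
    (h : ∀ i < rowCount N s, i ≠ x → rowLength N s i = 2) (hi : i ≤ rowCount N s) {k : ℕ}
    (hk : k < N) : row s k < i ↔ k < 2 * i - if x < i then 1 else 0 := by
  have hsum : ∑ j ∈ Finset.range i, rowLength N s j = 2 * i - if x < i then 1 else 0 := by
    clear hk
    induction i with
    | zero => simp
    | succ i ih =>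
      rw [Finset.sum_range_succ, ih (by omega)]
      rcases eq_or_ne i x with rfl | hix
      · rw [hx]; simp
        omega
      · rw [h i (by omega) hix]
        split_ifs <;> omega
  rw [row_lt_iff hk, hsum]

lemma sum_rowLength_compl_of_rowLength_eq_one {x : ℕ} (hN : 2 * rowCount N s = N + 1)
    (hx0 : 0 < x) (hxr : x + 1 < rowCount N s) (hx : rowLength N s x = 1)
    (h : ∀ i < rowCount N s, i ≠ x → rowLength N s i = 2) (hi : i ≤ rowCount N s) :
    ∑ j ∈ Finset.range i, rowLength N sᶜ j =
      if i ≤ x then 2 * i - 1 else min (2 * i) N := by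
  refine (count_lt_eq_sum (row sᶜ) i N).symm.trans (count_eq_of_iff_lt ?_ fun k hk => ?_)
  · split_ifs <;> omega
  · have hcompl := row_add_row_compl s k
    have hlt := row_lt_rowCount (s := s) hk
    have hupper := row_lt_iff_of_rowLength_eq_one hx h (Nat.succ_le_of_lt hlt) hk
    have hlower := row_lt_iff_of_rowLength_eq_one hx h hlt.le hk
    grind

lemma exists_shift_of_rowLength_eq_one {x : ℕ} (hN : 2 * rowCount N s = N + 1)
    (hx0 : 0 < x) (hxr : x + 1 < rowCount N s) (hx : rowLength N s x = 1)
    (h : ∀ i < rowCount N s, i ≠ x → rowLength N s i = 2) :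
    ∃ β, Shift x 0 (rowLength N sᶜ) β ∧ (∀ i < rowCount N s, β i ≤ 2) ∧
      ∀ i, i + 1 < rowCount N s → β i = 2 := by
  have hcol i (hi : i < rowCount N s) : rowLength N sᶜ i =
      if i = 0 ∨ i + 1 = rowCount N s then 1 else if i = x then 3 else 2 := by
    have h0 := sum_rowLength_compl_of_rowLength_eq_one hN hx0 hxr hx h hi.le
    have h1 := sum_rowLength_compl_of_rowLength_eq_one hN hx0 hxr hx h hi
    rw [Finset.sum_range_succ, h0] at h1
    grind
  have hcol0 := hcol 0 (by omega)
  have hcolx := hcol x (by omega)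
  have hβ i (hi : i < rowCount N s) : (if i = 0 ∨ i = x then 2 else rowLength N sᶜ i) =
      if i + 1 = rowCount N s then 1 else 2 := by
    have := hcol i hi
    grind
  refine ⟨fun i => if i = 0 ∨ i = x then 2 else rowLength N sᶜ i, ⟨?_, ?_, ?_, ?_, ?_⟩, ?_, ?_⟩
  · grind
  · grind
  · grind
  · grind
  · intro k hk hkx
    have := hcol k (by omega)
    grind
  · exact fun i hi => (hβ i hi).trans_le (by split_ifs <;> omega)
  · exact fun i hi => (hβ i (by omega)).trans (if_neg hi.ne)

lemma exists_rowBalanced_of_two_mul_rowCount_eq (hN : 0 < N) (h : 2 * rowCount N s = N + 1) :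
    ∃ t, PatternLE N s t ∧ RowBalanced N t ∧ RowBalanced N tᶜ := by
  obtain ⟨t, hst, ht⟩ := exists_patternLE_rowBalanced hN s
  rw [← hst.rowCount_eq] at h
  obtain ⟨x, hxr, hx, hrest⟩ := ht.exists_rowLength_eq_one h
  by_cases hend : x = 0 ∨ x + 1 = rowCount N t
  · exact ⟨t, hst, ht, rowBalanced_compl hN fun i h0 hi => (hrest i (by omega) (by omega)).ge⟩
  · obtain ⟨β, hshift, hle, htwo⟩ :=
      exists_shift_of_rowLength_eq_one h (by omega) (by omega) hx hrest
    have hcompl : rowCount N tᶜ = rowCount N t := by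
      have := rowCount_add_rowCount_compl hN t
      omega
    obtain ⟨u, htu, hu⟩ := exists_patternLE (s := tᶜ) hN
      (.single ⟨x, 0, by omega, by omega, hshift⟩)
    rw [hcompl] at hu
    have hcount : rowCount N u = rowCount N t := htu.rowCount_eq.trans hcompl
    refine ⟨uᶜ, hst.trans (.of_compl hN (by rwa [compl_compl])), ?_, ?_⟩
    · refine rowBalanced_compl hN fun i _ hi => ?_
      rw [hcount] at hi
      rw [hu i (by omega), htwo i hi]
    · rw [compl_compl, RowBalanced, hcount]
      intro i hi j hj
      have := rowLength_pos hN (hcount ▸ hj)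
      have := hle i hi
      rw [← hu i hi] at this
      omega

theorem exists_rowBalanced_compl (hN : 0 < N) (s : ℕ → Bool) :
    ∃ t, PatternLE N s t ∧ RowBalanced N t ∧ RowBalanced N tᶜ := by
  have hcompl := rowCount_add_rowCount_compl hN s
  rcases le_or_gt (2 * rowCount N s) N with hle | hlt
  · exact exists_rowBalanced_of_two_mul_rowCount_le hN hle
  rcases le_or_gt (2 * rowCount N sᶜ) N with hle' | hlt'
  · obtain ⟨t, hst, ht, ht'⟩ := exists_rowBalanced_of_two_mul_rowCount_le hN hle'
    exact ⟨tᶜ, .of_compl hN (by rwa [compl_compl]), ht', by rwa [compl_compl]⟩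
  · exact exists_rowBalanced_of_two_mul_rowCount_eq hN (by omega)

end Balanced

/-! ### Contents forcing balanced patterns -/

section Content

variable {N k : ℕ} {s : ℕ → Bool} {lam y : ℕ → ℕ}

namespace IsBallotWord

lemma apply_le_row (hy : IsBallotWord N s lam y) (hk : k < N) : y k ≤ row s k := by
  induction k using Nat.strong_induction_on with
  | _ k ih =>
    rcases hv : y k with _ | v
    · exact Nat.zero_le _
    obtain ⟨j, hj, hjv⟩ := count_pos_iff.1
      ((count_pos_iff.2 ⟨k, k.lt_add_one, hv⟩).trans_le (hy.ballot (k + 1) v))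
    have hjk : j < k := (Nat.lt_succ_iff.1 hj).lt_of_ne (by rintro rfl; omega)
    have hrow : row s j < row s k := (row_mono s hjk.le).lt_of_ne fun heq => by
      have := hy.antitone_of_row_eq hjk.le hk heq
      omega
    have := ih j hjk (by omega)
    omega

lemma content_eq_zero_of_rowCount_le (hy : IsBallotWord N s lam y) {v : ℕ}
    (hv : rowCount N s ≤ v) : lam v = 0 := by
  rw [← hy.count_eq]
  refine Nat.count_iff_forall_not.2 fun k hk hkv => ?_
  have := hy.apply_le_row hk
  have := row_lt_rowCount (s := s) hk
  omega

lemma content_antitone (hy : IsBallotWord N s lam y) : Antitone lam := fun u v huv => by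
  rw [← hy.count_eq, ← hy.count_eq]
  exact hy.count_antitone N huv

lemma count_row_le_and_antitone (hy : IsBallotWord N s lam y) :
    Antitone fun i => Nat.count (fun k => row s k < i + 1 ∧ y k = i) N := by
  refine antitone_nat_of_succ_le fun i => ?_
  rcases lt_or_ge N (i + 1) with hi | hi
  · rw [Nat.count_iff_forall_not.2 fun k _ h => by have := hy.le_length k; omega]
    exact Nat.zero_le _
  have hcov : (⟨i, by omega⟩ : Fin (N + 1)) ⋖ ⟨i + 1, by omega⟩ :=
    Fin.covBy_iff.2 (Nat.covBy_iff_add_one_eq.2 rfl)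
  simpa only [colSum_letterCount] using hy.colSum_letterCount_le (i + 1) hcov

lemma content_le_rowLength (hy : IsBallotWord N s lam y) {i : ℕ} (hi : i < rowCount N s) :
    lam (rowCount N s - 1) ≤ rowLength N s i :=
  calc lam (rowCount N s - 1)
      = Nat.count (fun k => row s k < rowCount N s - 1 + 1 ∧ y k = rowCount N s - 1) N := by
        rw [← hy.count_eq]
        refine count_congr fun k hk => ?_
        have := row_lt_rowCount (s := s) hk
        omega
    _ ≤ Nat.count (fun k => row s k < i + 1 ∧ y k = i) N :=
        hy.count_row_le_and_antitone (Nat.le_sub_one_of_lt hi)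
    _ ≤ rowLength N s i := count_le_count fun k hk h => ⟨hk, by
        have := hy.apply_le_row hk
        omega⟩

lemma add_le_of_row_compl_eq (hy : IsBallotWord N s lam y) {d : ℕ} (hd : k + d < N)
    (h : row sᶜ k = row sᶜ (k + d)) : y k + d ≤ y (k + d) := by
  induction d with
  | zero => rfl
  | succ d ih =>
    have hmono := row_mono sᶜ (Nat.le_add_right k d)
    have hsucc : row sᶜ (k + (d + 1)) = _ := row_succ sᶜ (k + d)
    have hs : s (k + d) = true := by
      by_contra hs
      rw [if_pos (by simpa using hs)] at hsucc
      omega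
    rw [if_neg (by simpa using hs)] at hsucc
    have := ih (by omega) (by omega)
    have : _ < y (k + (d + 1)) := (hy.lt_succ_iff (k + d) hd).2 hs
    omega

lemma transposeWord_lt (hy : IsBallotWord N s lam y) (hk : k < N) :
    transposeWord N y k < lam 0 :=
  calc transposeWord N y k
      < Nat.count (y · = y k) (k + 1) := by
        rw [transposeWord_of_lt y hk, Nat.count_succ, if_pos rfl]
        exact Nat.lt_succ_self _
    _ ≤ Nat.count (y · = y k) N := Nat.count_monotone _ hk
    _ = lam (y k) := hy.count_eq _
    _ ≤ lam 0 := hy.content_antitone (Nat.zero_le _)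

lemma rowLength_le_content (hy : IsBallotWord N s lam y) (i : ℕ) : rowLength N s i ≤ lam 0 := by
  rcases (rowLength N s i).eq_zero_or_pos with hzero | hpos
  · omega
  have hle := rowStart_add_rowLength_le N s i
  set k := ∑ j ∈ Finset.range i, rowLength N s j
  have hrow o (ho : o < rowLength N s i) : row s (k + o) = i :=
    (row_eq_iff (N := N) (by omega)).2 (by omega)
  have hgrow := hy.transpose.add_le_of_row_compl_eq (k := k) (d := rowLength N s i - 1) (by omega)
    (by rw [compl_compl, ← add_zero k, hrow 0 (by omega), add_zero, hrow _ (by omega)])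
  have := hy.transposeWord_lt (k := k + (rowLength N s i - 1)) (by omega)
  omega

lemma rowBalanced (hy : IsBallotWord N s lam y)
    (h : lam 0 ≤ lam (rowCount N s - 1) + 1) : RowBalanced N s := fun i _ _ hj =>
  (hy.rowLength_le_content i).trans (h.trans (Nat.succ_le_succ (hy.content_le_rowLength hj)))

lemma eq_zero_of_not_break (hy : IsBallotWord N s lam y) (h : lam 0 + rowCount N s = N + 1)
    (hk : k + 1 < N) (hs : ¬s k = true) : y (k + 1) = 0 := by
  by_contra hne
  have hcompl := rowCount_add_rowCount_compl (show 0 < N by omega) s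
  have hzero : Nat.count (y · = 0) (N - 1 + 1) = lam 0 := by
    rw [Nat.sub_add_cancel (by omega), hy.count_eq]
  rw [Nat.count_succ', if_pos (Nat.le_zero.1 (hy.apply_le 0))] at hzero
  have hlt : Nat.count (fun j => y (j + 1) = 0) (N - 1) < row sᶜ (N - 1) := by
    simp only [row, Nat.count_eq_card_filter_range]
    refine Finset.card_lt_card (Finset.ssubset_iff_of_subset (fun j hj => ?_) |>.2 ⟨k, ?_, ?_⟩)
    · simp only [Finset.mem_filter, Finset.mem_range] at hj ⊢
      have := (hy.lt_succ_iff j (by omega)).not.1 (by omega)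
      exact ⟨hj.1, by simpa using this⟩
    · simpa [show k < N - 1 by omega] using hs
    · simp [hne]
  rw [rowCount, rowCount] at *
  omega

end IsBallotWord

/-- The matrix with `r` rows in which row `i` contains `q` letters `i`, and one more letter if `p i`
holds; these additional letters are `0, 1, 2, …`. -/
def balancedMatrix (N r q : ℕ) (p : ℕ → Prop) [DecidablePred p] (i : ℕ) (t : Fin (N + 1)) : ℕ :=
  if i < r then (if (t : ℕ) = i then q else 0) + if p i ∧ (t : ℕ) = Nat.count p i then 1 else 0
  else 0

section BalancedMatrix

variable {r q : ℕ} {p : ℕ → Prop} [DecidablePred p]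

lemma colSum_balancedMatrix (k : ℕ) (t : Fin (N + 1)) :
    colSum k (balancedMatrix N r q p) t =
      (if (t : ℕ) < min k r then q else 0) + if (t : ℕ) < Nat.count p (min k r) then 1 else 0 := by
  induction k with
  | zero => simp [colSum]
  | succ k ih =>
    rw [colSum_succ, ih, balancedMatrix]
    rcases lt_or_ge k r with hk | hk
    · rw [if_pos hk, min_eq_left hk.le, min_eq_left hk, Nat.count_succ]
      by_cases hp : p k <;> simp only [hp, true_and, false_and, if_true, if_false] <;>
        split_ifs <;> omega
    · rw [if_neg hk.not_gt, min_eq_right hk, min_eq_right (by omega), add_zero]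

lemma isBallot_balancedMatrix :
    IsBallot r (fun t : Fin (N + 1) =>
      (if (t : ℕ) < r then q else 0) + if (t : ℕ) < Nat.count p r then 1 else 0)
      (balancedMatrix N r q p) where
  support i hi := funext fun t => if_neg hi.not_gt
  colSum_eq t := by rw [colSum_balancedMatrix, min_self]
  colSum_le k t u htu := by
    have hu : (u : ℕ) = t + 1 := (Nat.covBy_iff_add_one_eq.1 (Fin.covBy_iff.1 htu)).symm
    have hmin : min (k + 1) r ≤ min k r + 1 := by omega
    have hcount := Nat.count_monotone p hmin
    have hsucc := Nat.count_succ p (min k r)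
    rw [colSum_balancedMatrix, colSum_balancedMatrix, hu]
    split_ifs at hsucc ⊢ <;> omega

lemma sum_balancedMatrix (hr : r ≤ N) {i : ℕ} (hi : i < r) :
    ∑ t, balancedMatrix N r q p i t = q + if p i then 1 else 0 := by
  have hcount : Nat.count p i ≤ i := Nat.count_le _
  simp only [balancedMatrix, if_pos hi, Finset.sum_add_distrib]
  rw [Fin.sum_univ_eq_sum_range (fun t => if t = i then q else 0),
    Fin.sum_univ_eq_sum_range (fun t => if p i ∧ t = Nat.count p i then 1 else 0),
    Finset.sum_ite_eq', if_pos (Finset.mem_range.2 (by omega))]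
  by_cases hp : p i
  · rw [Finset.sum_congr rfl fun t _ => if_congr (and_iff_right hp) rfl rfl, Finset.sum_ite_eq',
      if_pos (Finset.mem_range.2 (by omega)), if_pos hp]
  · simp [hp]

lemma balancedMatrix_mem_rowClass {β : ℕ → ℕ} (hq : 0 < q) (hr : r ≤ N)
    (hβ : ∀ i < r, β i = q + if p i then 1 else 0) :
    balancedMatrix N r q p ∈ rowClass r (IsBallot r fun t : Fin (N + 1) =>
      (if (t : ℕ) < r then q else 0) + if (t : ℕ) < Nat.count p r then 1 else 0) β := by
  refine ⟨isBallot_balancedMatrix, fun i hi => (sum_balancedMatrix hr hi).trans (hβ i hi).symm,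
    fun i hi => overlap_pos_iff.2 ⟨⟨i, by omega⟩, ⟨i + 1, by omega⟩, ?_, ?_, ?_⟩⟩
  · exact Fin.mk_lt_mk.2 i.lt_succ_self
  · simp [balancedMatrix, hq, show i < r by omega]
  · simp [balancedMatrix, hq, hi]

end BalancedMatrix

lemma RowBalanced.exists_rowLength_eq (hs : RowBalanced N s) (hN : 0 < N) :
    ∃ q > 0, ∀ i < rowCount N s,
      rowLength N s i = q + if rowLength N s i = q + 1 then 1 else 0 := by
  obtain ⟨i₀, hi₀, hmin⟩ := Finset.exists_min_image (Finset.range (rowCount N s)) (rowLength N s)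
    ⟨0, Finset.mem_range.2 (Nat.succ_pos _)⟩
  simp only [Finset.mem_range] at hi₀ hmin
  refine ⟨rowLength N s i₀, rowLength_pos hN hi₀, fun i hi => ?_⟩
  have := hmin i hi
  have := hs i hi i₀ hi₀
  split_ifs <;> omega

lemma rowCount_le (hN : 0 < N) (s : ℕ → Bool) : rowCount N s ≤ N := by
  have := rowCount_add_rowCount_compl hN s
  have : 0 < rowCount N sᶜ := Nat.succ_pos _
  omega

lemma RowBalanced.exists_isBallotWord (hs : RowBalanced N s) (hN : 0 < N) :
    ∃ lam y, IsBallotWord N s lam y ∧ 0 < lam (rowCount N s - 1) ∧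
      lam 0 ≤ lam (rowCount N s - 1) + 1 := by
  obtain ⟨q, hq, hlen⟩ := hs.exists_rowLength_eq hN
  have hr := rowCount_le hN s
  have hr' : 0 < rowCount N s := Nat.succ_pos _
  set p := fun i => rowLength N s i = q + 1
  have hcount : Nat.count p (rowCount N s) ≤ _ := Nat.count_le _
  obtain ⟨y, hy, -⟩ := exists_ballotWord_letterCount_eq
    (lam := fun v => (if v < rowCount N s then q else 0) +
      if v < Nat.count p (rowCount N s) then 1 else 0)
    (fun v hv => by rw [if_neg (by omega), if_neg (by omega)])
    (balancedMatrix_mem_rowClass hq hr hlen)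
  refine ⟨_, y, hy, ?_, ?_⟩ <;> split_ifs <;> omega

lemma IsBallotWord.conjugateContent_zero (hy : IsBallotWord N s lam y) (hN : 0 < N)
    (h : 0 < lam (rowCount N s - 1)) : conjugateContent N lam 0 = rowCount N s :=
  count_eq_of_iff_lt (rowCount_le hN s) fun v _ =>
    ⟨fun hv => by by_contra hle; rw [hy.content_eq_zero_of_rowCount_le (by omega)] at hv; omega,
      fun hv => h.trans_le (hy.content_antitone (by omega))⟩

theorem RowBalanced.exists_content (hs : RowBalanced N s) (hN : 0 < N) :
    ∃ lam, (ballotWords N s lam).Nonempty ∧ conjugateContent N lam 0 = rowCount N s ∧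
      ∀ t, rowCount N t = rowCount N s → (ballotWords N t lam).Nonempty → RowBalanced N t := by
  obtain ⟨lam, y, hy, hpos, hle⟩ := hs.exists_isBallotWord hN
  exact ⟨lam, ⟨y, hy⟩, hy.conjugateContent_zero hN hpos,
    fun t ht ⟨z, hz⟩ => IsBallotWord.rowBalanced hz (ht ▸ hle)⟩

theorem RowBalanced.exists_content_compl (hs : RowBalanced N sᶜ) (hN : 0 < N) :
    ∃ lam, (ballotWords N s lam).Nonempty ∧ lam 0 + rowCount N s = N + 1 ∧
      ∀ t, rowCount N t = rowCount N s → (ballotWords N t lam).Nonempty → RowBalanced N tᶜ := by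
  obtain ⟨lam, ⟨y, hy⟩, hzero, huniv⟩ := hs.exists_content hN
  have hcompl := rowCount_add_rowCount_compl hN s
  refine ⟨conjugateContent N lam, ⟨transposeWord N y, ?_⟩, by omega, fun t ht ⟨z, hz⟩ => ?_⟩
  · exact compl_compl s ▸ IsBallotWord.transpose hy
  · have hcompl' := rowCount_add_rowCount_compl hN t
    refine huniv tᶜ (by omega) ⟨transposeWord N z, ?_⟩
    exact IsBallotWord.conjugateContent_conjugateContent hy ▸ IsBallotWord.transpose hz

end Content

/-! ### Fillings of connected skew shapes -/

section ReadingOrder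

variable {A : SkewShape} {N k l : ℕ} {cell : ℕ → ℕ × ℕ}

/-- The values `cell 0, …, cell (N - 1)` are the boxes of `A`, read from right to left along rows
and from top to bottom; the other values of `cell` are irrelevant. -/
structure IsReadingOrder (A : SkewShape) (N : ℕ) (cell : ℕ → ℕ × ℕ) : Prop where
  mem : ∀ k < N, cell k ∈ A.cells
  exists_eq : ∀ c ∈ A.cells, ∃ k < N, cell k = c
  lt : ∀ k l, k < l → l < N →
    (cell k).1 < (cell l).1 ∨ (cell k).1 = (cell l).1 ∧ (cell l).2 < (cell k).2

lemma exists_isReadingOrder (A : SkewShape) : ∃ cell, IsReadingOrder A A.size cell := by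
  have : IsTrans (ℕ × ℕ) ReadsBefore := ⟨fun a b c hab hbc => by unfold ReadsBefore at *; omega⟩
  have : Std.Antisymm (α := ℕ × ℕ) ReadsBefore :=
    ⟨fun a b hab hba => by unfold ReadsBefore at *; ext <;> omega⟩
  have : Std.Total (α := ℕ × ℕ) ReadsBefore := ⟨fun a b => by unfold ReadsBefore; omega⟩
  set l := A.cells.sort ReadsBefore
  have hlen : l.length = A.size := Finset.length_sort _
  have hget k (hk : k < l.length) : l.getD k 0 = l[k] := List.getD_eq_getElem _ _ hk
  refine ⟨fun k => l.getD k 0, fun k hk => ?_, fun c hc => ?_, fun k m hkm hm => ?_⟩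
  · rw [hget k (by omega)]
    exact (Finset.mem_sort _).1 (List.getElem_mem _)
  · obtain ⟨k, hk, rfl⟩ := List.mem_iff_getElem.1 ((Finset.mem_sort ReadsBefore).2 hc)
    exact ⟨k, hlen ▸ hk, hget k hk⟩
  · rw [hget k (by omega), hget m (by omega)]
    have hsorted : l.Pairwise ReadsBefore := A.cells.pairwise_sort ReadsBefore
    have hnodup : l.Nodup := A.cells.sort_nodup ReadsBefore
    have hreads := List.pairwise_iff_getElem.1 hsorted k m (by omega) (by omega) hkm
    have hne : l[k] ≠ l[m] := fun h => hkm.ne (hnodup.getElem_inj_iff.1 h)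
    have := mt Prod.ext_iff.2 hne
    unfold ReadsBefore at hreads
    omega

namespace IsReadingOrder

lemma injOn (h : IsReadingOrder A N cell) : Set.InjOn cell (Set.Iio N) := by
  intro k hk l hl heq
  rcases lt_trichotomy k l with hlt | rfl | hlt
  · have := heq ▸ h.lt k l hlt hl
    omega
  · rfl
  · have := heq ▸ h.lt l k hlt hk
    omega

lemma readsBefore_iff (h : IsReadingOrder A N cell) (hk : k < N) (hl : l < N) :
    ReadsBefore (cell k) (cell l) ↔ k ≤ l := by
  unfold ReadsBefore
  rcases lt_trichotomy k l with hlt | rfl | hlt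
  · have := h.lt k l hlt hl
    omega
  · omega
  · have := h.lt l k hlt hk
    omega

lemma fst_le (h : IsReadingOrder A N cell) (hkl : k ≤ l) (hl : l < N) :
    (cell k).1 ≤ (cell l).1 := by
  rcases (h.readsBefore_iff (by omega) hl).2 hkl with hlt | heq
  exacts [hlt.le, heq.1.le]

lemma card_filter_eq_count (h : IsReadingOrder A N cell) (p : ℕ × ℕ → Prop) [DecidablePred p] :
    (A.cells.filter p).card = Nat.count (fun k => p (cell k)) N := by
  rw [Nat.count_eq_card_filter_range]
  refine (Finset.card_bij (fun k _ => cell k) (fun k hk => ?_) (fun k hk l hl => ?_)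
    fun c hc => ?_).symm
  · simp only [Finset.mem_filter, Finset.mem_range] at hk ⊢
    exact ⟨h.mem k hk.1, hk.2⟩
  · simp only [Finset.mem_filter, Finset.mem_range] at hk hl
    exact fun heq => h.injOn hk.1 hl.1 heq
  · obtain ⟨hc, hp⟩ := Finset.mem_filter.1 hc
    obtain ⟨k, hk, rfl⟩ := h.exists_eq c hc
    exact ⟨k, by simp [hk, hp], rfl⟩

lemma size_eq (h : IsReadingOrder A N cell) : A.size = N := by
  have := h.card_filter_eq_count fun _ => True
  rwa [Finset.filter_true, Nat.count_true] at this

lemma card_filter_readsBefore (h : IsReadingOrder A N cell) (p : ℕ × ℕ → Prop) [DecidablePred p]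
    (hk : k < N) : (A.cells.filter fun c => p c ∧ ReadsBefore c (cell k)).card =
      Nat.count (fun j => p (cell j)) (k + 1) := by
  rw [h.card_filter_eq_count]
  refine (count_le_count fun j hj hp => ?_).antisymm (count_le_count fun j hj hp => ?_)
  · exact ⟨Nat.lt_succ_of_le ((h.readsBefore_iff hj hk).1 hp.2), hp.1⟩
  · exact ⟨by omega, hp, (h.readsBefore_iff (by omega) hk).2 (by omega)⟩

end IsReadingOrder

/-- The pattern telling after which boxes a reading order moves on to another row. -/
def rowEnds (cell : ℕ → ℕ × ℕ) (k : ℕ) : Bool := (cell k).1 ≠ (cell (k + 1)).1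

lemma rowEnds_eq_true_iff : rowEnds cell k = true ↔ (cell k).1 ≠ (cell (k + 1)).1 :=
  decide_eq_true_iff

lemma mem_cells_of_le_of_le {a b c : ℕ × ℕ} (ha : a ∈ A.cells) (hb : b ∈ A.cells) (hac : a ≤ c)
    (hcb : c ≤ b) : c ∈ A.cells := by
  rw [SkewShape.cells, Finset.mem_sdiff] at *
  exact ⟨A.outer.isLowerSet hcb hb.1, fun hc => ha.2 (A.inner.isLowerSet hac hc)⟩

lemma exists_column_crossing (hA : A.Connected) {a b : ℕ × ℕ} (ha : a ∈ A.cells)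
    (hb : b ∈ A.cells) (hab : a.1 < b.1) :
    ∃ c ∈ A.cells, ∃ d ∈ A.cells, c.1 ≤ a.1 ∧ a.1 < d.1 ∧ c.2 = d.2 := by
  by_contra! hno
  refine hA.2 ⟨A.cells.filter fun c => c.1 ≤ a.1, A.cells.filter fun c => ¬c.1 ≤ a.1,
    ⟨a, by simp [ha]⟩, ⟨b, by simp [hb, hab]⟩, Finset.filter_union_filter_not_eq _ _,
    Finset.disjoint_iff_inter_eq_empty.1 (Finset.disjoint_filter_filter_not _ _ _), ?_⟩
  intro c hc d hd
  simp only [Finset.mem_filter, not_le] at hc hd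
  exact ⟨by omega, hno c hc.1 d hd.1 hc.2 hd.2⟩

lemma IsReadingOrder.exists_row_overlap (h : IsReadingOrder A N cell) (hA : A.Connected)
    (hk : k + 1 < N) (hrow : (cell k).1 ≠ (cell (k + 1)).1) :
    (cell (k + 1)).1 = (cell k).1 + 1 ∧ ∃ j, (cell k).2 ≤ j ∧ j ≤ (cell (k + 1)).2 ∧
      ((cell k).1, j) ∈ A.cells ∧ ((cell k).1 + 1, j) ∈ A.cells := by
  have hlt : (cell k).1 < (cell (k + 1)).1 := (h.fst_le k.le_succ hk).lt_of_ne hrow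
  obtain ⟨c, hc, d, hd, hcrow, hdrow, hcol⟩ :=
    exists_column_crossing hA (h.mem k (by omega)) (h.mem _ hk) hlt
  have hupper : ((cell k).1, c.2) ∈ A.cells :=
    mem_cells_of_le_of_le hc hd ⟨hcrow, le_rfl⟩ ⟨hdrow.le, hcol.le⟩
  have hlower : ((cell k).1 + 1, c.2) ∈ A.cells :=
    mem_cells_of_le_of_le hc hd ⟨by simp; omega, le_rfl⟩ ⟨hdrow, hcol.le⟩
  obtain ⟨p, hp, hpc⟩ := h.exists_eq _ hupper
  obtain ⟨q, hq, hqd⟩ := h.exists_eq _ hlower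
  have hpk : p ≤ k := by
    by_contra hkp
    have := hpc ▸ h.fst_le (show k + 1 ≤ p by omega) hp
    dsimp only at this
    omega
  have hkq : k + 1 ≤ q := by
    by_contra hqk
    have := hqd ▸ h.fst_le (show q ≤ k by omega) (by omega)
    dsimp only at this
    omega
  have hfirst := hpc ▸ (h.readsBefore_iff hp (by omega)).2 hpk
  have hsecond := hqd ▸ (h.readsBefore_iff hk hq).2 hkq
  unfold ReadsBefore at hfirst hsecond
  dsimp only at hfirst hsecond
  exact ⟨by omega, c.2, by omega, by omega, hupper, hlower⟩

end ReadingOrder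

lemma exists_part_eq {N : ℕ} {lam : ℕ → ℕ} (hanti : Antitone lam) (hzero : ∀ v, N ≤ v → lam v = 0) :
    ∃ mu : Multiset ℕ, 0 ∉ mu ∧ part mu = lam := by
  set n := Nat.count (0 < lam ·) N
  have hn : n ≤ N := Nat.count_le _
  have hpos v (hv : v < N) : v < n ↔ 0 < lam v :=
    lt_count_iff (fun k _ hk l hl => hk.trans_le (hanti hl.le)) hv
  have hsort : (((List.range n).map lam : List ℕ) : Multiset ℕ).sort (· ≥ ·) =
      (List.range n).map lam := by
    refine List.Perm.eq_of_pairwise' (r := (· ≥ ·)) (Multiset.pairwise_sort _ _) ?_ ?_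
    · exact List.pairwise_map.2 (List.pairwise_lt_range.imp fun hab => hanti hab.le)
    · rw [← Multiset.coe_eq_coe, Multiset.sort_eq]
  refine ⟨((List.range n).map lam : List ℕ), ?_, ?_⟩
  · simp only [Multiset.mem_coe, List.mem_map, List.mem_range, not_exists, not_and]
    exact fun v hv => ((hpos v (by omega)).1 hv).ne'
  · funext v
    rw [part, hsort]
    rcases lt_or_ge v n with hv | hv
    · simp [hv]
    · rw [List.getD_eq_default _ _ (by simpa using hv)]
      by_contra hne
      have hvN : v < N := not_le.1 fun h => hne (hzero v h).symm
      exact hv.not_gt ((hpos v hvN).2 (by omega))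

section Filling

variable {A : SkewShape} {N k : ℕ} {cell : ℕ → ℕ × ℕ} {T T' : ℕ × ℕ → ℕ}

lemma isLR_congr (h : ∀ c ∈ A.cells, T c = T' c) (hT : A.IsLR T) : A.IsLR T' := by
  obtain ⟨⟨hpos, hrow, hcol⟩, hballot⟩ := hT
  have hcard d v : (A.cells.filter fun c => T c = v ∧ ReadsBefore c d) =
      A.cells.filter fun c => T' c = v ∧ ReadsBefore c d :=
    Finset.filter_congr fun c hc => by rw [h c hc]
  refine ⟨⟨fun c hc => h c hc ▸ hpos c hc, fun i j j' hj hj' => ?_, fun i i' j hi hi' => ?_⟩,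
    fun d hd v => ?_⟩
  · rw [← h _ hj, ← h _ hj']
    exact hrow i j j' hj hj'
  · rw [← h _ hi, ← h _ hi']
    exact hcol i i' j hi hi'
  · rw [← hcard, ← hcard]
    exact hballot d hd v

lemma content_congr (h : ∀ c ∈ A.cells, T c = T' c) (v : ℕ) : A.content T v = A.content T' v :=
  congrArg Finset.card (Finset.filter_congr fun c hc => by rw [h c hc])

lemma mem_supp_iff {mu : Multiset ℕ} : mu ∈ A.supp ↔ 0 ∉ mu ∧ (A.LRset mu).Nonempty := by
  refine and_congr_right fun _ => ⟨fun ⟨T, hT, hcontent⟩ => ?_, fun ⟨T, hT, _, hcontent⟩ =>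
    ⟨T, hT, hcontent⟩⟩
  have heq : ∀ c ∈ A.cells, T c = (A.cells : Set (ℕ × ℕ)).indicator T c :=
    fun c hc => (Set.indicator_of_mem (Finset.mem_coe.2 hc) T).symm
  refine ⟨_, isLR_congr heq hT, fun c hc => Set.indicator_of_notMem (by simpa using hc) T,
    fun i => ?_⟩
  rw [← hcontent i, content_congr heq]

/-- The word read off from a filling along a reading order, with letters starting from `0`. -/
def readingWord (N : ℕ) (cell : ℕ → ℕ × ℕ) (T : ℕ × ℕ → ℕ) (k : ℕ) : ℕ :=
  if k < N then T (cell k) - 1 else 0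

lemma readingWord_of_lt (hk : k < N) : readingWord N cell T k = T (cell k) - 1 := if_pos hk

namespace IsReadingOrder

variable {lam : ℕ → ℕ}

lemma readingWord_add_one (h : IsReadingOrder A N cell) (hT : A.IsSsyt T) (hk : k < N) :
    readingWord N cell T k + 1 = T (cell k) := by
  rw [readingWord_of_lt hk, Nat.sub_add_cancel (hT.1 _ (h.mem k hk))]

lemma lt_succ_iff_rowEnds (h : IsReadingOrder A N cell) (hA : A.Connected) (hT : A.IsSsyt T)
    (hk : k + 1 < N) : T (cell k) < T (cell (k + 1)) ↔ rowEnds cell k = true := by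
  rw [rowEnds_eq_true_iff]
  have hmem := h.mem k (by omega)
  have hmem' := h.mem (k + 1) hk
  refine ⟨fun hlt hrow => hlt.not_ge ?_, fun hrow => ?_⟩
  · have hlt := h.lt k (k + 1) k.lt_succ_self hk
    have hle := hT.2.1 (cell k).1 (cell (k + 1)).2 (cell k).2 (hrow ▸ hmem') hmem (by omega)
    rwa [hrow, Prod.mk.eta, ← hrow, Prod.mk.eta] at hle
  · obtain ⟨hrow', j, hj, hj', hupper, hlower⟩ := h.exists_row_overlap hA hk hrow
    rw [← hrow'] at hlower
    calc T (cell k) ≤ T ((cell k).1, j) := hT.2.1 _ _ _ hmem hupper hj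
      _ < T ((cell (k + 1)).1, j) := hT.2.2 _ _ _ hupper hlower (by omega)
      _ ≤ T (cell (k + 1)) := hT.2.1 _ _ _ hlower hmem' hj'

lemma isBallotWord_readingWord (h : IsReadingOrder A N cell) (hA : A.Connected) (hT : A.IsLR T)
    (hcontent : ∀ v, A.content T (v + 1) = lam v) :
    IsBallotWord N (rowEnds cell) lam (readingWord N cell T) := by
  have hword {k} (hk : k < N) := h.readingWord_add_one hT.1 hk
  have hcount {n} (hn : n ≤ N) v : Nat.count (readingWord N cell T · = v) n =
      Nat.count (fun k => T (cell k) = v + 1) n :=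
    count_congr fun k hk => by rw [← hword (hk.trans_le hn), Nat.add_right_cancel_iff]
  have hzero k (hk : N ≤ k) : readingWord N cell T k = 0 := if_neg hk.not_gt
  refine ⟨hzero, ballot_of_forall_le hzero fun n hn v => ?_, fun v => ?_, fun k hk => ?_⟩
  · rcases n with _ | n
    · simp
    rw [hcount hn, hcount hn, ← h.card_filter_readsBefore (T · = v + 2) hn,
      ← h.card_filter_readsBefore (T · = v + 1) hn]
    exact hT.2 _ (h.mem n hn) v
  · rw [hcount le_rfl, ← hcontent v, SkewShape.content, h.card_filter_eq_count]
  · rw [← h.lt_succ_iff_rowEnds hA hT.1 hk, ← hword hk, ← hword (k.lt_succ_self.trans hk),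
      Nat.add_lt_add_iff_right]

lemma nonempty_embedding_LRset (h : IsReadingOrder A N cell) (hA : A.Connected)
    (mu : Multiset ℕ) : Nonempty (A.LRset mu ↪ ballotWords N (rowEnds cell) (part mu)) := by
  refine ⟨fun T => ⟨readingWord N cell T, h.isBallotWord_readingWord hA T.2.1 T.2.2.2⟩,
    fun T T' hword => Subtype.ext (funext fun c => ?_)⟩
  have heq : readingWord N cell T = readingWord N cell T' := congrArg Subtype.val hword
  by_cases hc : c ∈ A.cells
  · obtain ⟨k, hk, rfl⟩ := h.exists_eq c hc
    rw [← h.readingWord_add_one T.2.1.1 hk, ← h.readingWord_add_one T'.2.1.1 hk, heq]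
  · rw [T.2.2.1 c hc, T'.2.2.1 c hc]

end IsReadingOrder

end Filling

section Finite

variable {N : ℕ} {s : ℕ → Bool} {lam : ℕ → ℕ}

instance finite_ballotWords : Finite (ballotWords N s lam) := by
  refine Finite.of_injective (β := Fin N → Fin N)
    (fun y k => ⟨y.1 k, IsBallotWord.apply_lt y.2 k.2⟩)
    fun y z hyz => Subtype.ext (funext fun k => ?_)
  rcases lt_or_ge k N with hk | hk
  · exact congrArg Fin.val (congrFun hyz ⟨k, hk⟩)
  · rw [y.2.eq_zero k hk, z.2.eq_zero k hk]

end Finite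

/-! ### Ribbons -/

section RibbonPath

variable {A : SkewShape} {N k : ℕ} {cell : ℕ → ℕ × ℕ}

/-- Each of the first `N` boxes is followed by its left or its lower neighbour: the reading order
of a ribbon. -/
def IsRibbonPath (N : ℕ) (cell : ℕ → ℕ × ℕ) : Prop :=
  ∀ k, k + 1 < N →
    (cell (k + 1)).1 = (cell k).1 ∧ (cell (k + 1)).2 + 1 = (cell k).2 ∨
    (cell (k + 1)).1 = (cell k).1 + 1 ∧ (cell (k + 1)).2 = (cell k).2

lemma IsReadingOrder.exists_of_mem_image (h : IsReadingOrder A N cell) {f : ℕ × ℕ → ℕ} {i : ℕ}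
    (hi : i ∈ A.cells.image f) : ∃ k < N, f (cell k) = i := by
  obtain ⟨c, hc, rfl⟩ := Finset.mem_image.1 hi
  obtain ⟨k, hk, rfl⟩ := h.exists_eq c hc
  exact ⟨k, hk, rfl⟩

lemma IsReadingOrder.isRibbonPath (h : IsReadingOrder A N cell) (hA : A.Ribbon) :
    IsRibbonPath N cell := by
  intro k hk
  have hmem := h.mem k (by omega)
  have hmem' := h.mem (k + 1) hk
  by_cases hrow : (cell k).1 = (cell (k + 1)).1
  · have hlt := h.lt k (k + 1) k.lt_succ_self hk
    have hleft : ((cell k).1, (cell k).2 - 1) ∈ A.cells :=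
      mem_cells_of_le_of_le hmem' hmem ⟨hrow.ge, by dsimp only; omega⟩
        ⟨le_rfl, Nat.sub_le _ _⟩
    obtain ⟨p, hp, hleft⟩ := h.exists_eq _ hleft
    have hkp : ¬p ≤ k := fun hpk => by
      have := hleft ▸ (h.readsBefore_iff hp (k.lt_succ_self.trans hk)).2 hpk
      simp only [ReadsBefore] at this
      omega
    have hpk : p ≤ k + 1 := (h.readsBefore_iff hp hk).1 <| hleft ▸ .inr ⟨hrow, by dsimp only; omega⟩
    obtain rfl : p = k + 1 := by omega
    exact .inl ⟨hrow.symm, by rw [hleft]; dsimp only; omega⟩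
  · obtain ⟨hsucc, j, hj, hj', -⟩ := h.exists_row_overlap hA.1 hk hrow
    refine .inr ⟨hsucc, (hj.trans hj').antisymm' ?_⟩
    by_contra! hlt
    have hmem'' : ((cell k).1 + 1, (cell (k + 1)).2) ∈ A.cells := hsucc ▸ hmem'
    refine hA.2 (cell k).1 (cell k).2 ⟨hmem, ?_, ?_, ?_⟩ <;>
    exact mem_cells_of_le_of_le hmem hmem'' ⟨by simp, by simp⟩ ⟨by simp, by dsimp only; omega⟩

namespace IsRibbonPath

lemma fst_eq (h : IsRibbonPath N cell) (hk : k < N) :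
    (cell k).1 = (cell 0).1 + row (rowEnds cell) k := by
  induction k with
  | zero => rfl
  | succ k ih =>
    rw [row_succ, ← add_assoc, ← ih (by omega)]
    have := h k hk
    split_ifs with hs <;> rw [rowEnds_eq_true_iff] at hs <;> omega

lemma snd_add_eq (h : IsRibbonPath N cell) (hk : k < N) :
    (cell k).2 + row (rowEnds cell)ᶜ k = (cell 0).2 := by
  induction k with
  | zero => rfl
  | succ k ih =>
    rw [← ih (by omega)]
    have hrow := row_add_row_compl (rowEnds cell) k
    have hrow' := row_add_row_compl (rowEnds cell) (k + 1)
    have := h.fst_eq hk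
    have := h.fst_eq (k.lt_succ_self.trans hk)
    have := h k hk
    omega


lemma rowLen_eq (h : IsRibbonPath N cell) (hA : IsReadingOrder A N cell) (hk : k < N) :
    A.rowLen (cell k).1 = rowLength N (rowEnds cell) (row (rowEnds cell) k) := by
  rw [SkewShape.rowLen, hA.card_filter_eq_count]
  refine count_congr fun l hl => ?_
  rw [h.fst_eq hk, h.fst_eq hl, Nat.add_left_cancel_iff]

lemma colLen_eq (h : IsRibbonPath N cell) (hA : IsReadingOrder A N cell) (hk : k < N) :
    A.colLen (cell k).2 = rowLength N (rowEnds cell)ᶜ (row (rowEnds cell)ᶜ k) := by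
  rw [SkewShape.colLen, hA.card_filter_eq_count]
  refine count_congr fun l hl => ?_
  have := h.snd_add_eq hk
  have := h.snd_add_eq hl
  omega

lemma rowEquitable (h : IsRibbonPath N cell) (hA : IsReadingOrder A N cell)
    (hs : RowBalanced N (rowEnds cell)) : A.RowEquitable := by
  intro i hi i' hi'
  obtain ⟨k, hk, rfl⟩ := hA.exists_of_mem_image hi
  obtain ⟨l, hl, rfl⟩ := hA.exists_of_mem_image hi'
  rw [h.rowLen_eq hA hk, h.rowLen_eq hA hl]
  exact hs _ (row_lt_rowCount hk) _ (row_lt_rowCount hl)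

lemma colEquitable (h : IsRibbonPath N cell) (hA : IsReadingOrder A N cell)
    (hs : RowBalanced N (rowEnds cell)ᶜ) : A.ColEquitable := by
  intro j hj j' hj'
  obtain ⟨k, hk, rfl⟩ := hA.exists_of_mem_image hj
  obtain ⟨l, hl, rfl⟩ := hA.exists_of_mem_image hj'
  rw [h.colLen_eq hA hk, h.colLen_eq hA hl]
  exact hs _ (row_lt_rowCount hk) _ (row_lt_rowCount hl)

lemma connected (h : IsRibbonPath N cell) (hA : IsReadingOrder A N cell) (hN : 0 < N) :
    A.Connected := by
  refine ⟨⟨cell 0, hA.mem 0 hN⟩, ?_⟩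
  rintro ⟨B, C, ⟨b, hb⟩, ⟨c, hc⟩, hunion, -, hdisj⟩
  have hmem k (hk : k < N) : cell k ∈ B ∨ cell k ∈ C := by
    rw [← Finset.mem_union, hunion]
    exact hA.mem k hk
  have hstep k (hk : k + 1 < N) : cell k ∈ B ↔ cell (k + 1) ∈ B := by
    have hadj := h k hk
    refine ⟨fun hkB => (hmem (k + 1) hk).resolve_right fun hkC => ?_,
      fun hkB => (hmem k (by omega)).resolve_right fun hkC => ?_⟩
    · have := hdisj _ hkB _ hkC
      omega
    · have := hdisj _ hkB _ hkC
      omega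
  have hall k (hk : k < N) : cell 0 ∈ B ↔ cell k ∈ B := by
    induction k with
    | zero => rfl
    | succ k ih => exact (ih (by omega)).trans (hstep k hk)
  obtain ⟨p, hp, rfl⟩ := hA.exists_eq b (hunion ▸ Finset.mem_union_left C hb)
  obtain ⟨q, hq, rfl⟩ := hA.exists_eq c (hunion ▸ Finset.mem_union_right B hc)
  have hqB : cell q ∈ B := (hall q hq).1 ((hall p hp).2 hb)
  exact (hdisj _ hqB _ hc).1 rfl

lemma ribbon (h : IsRibbonPath N cell) (hA : IsReadingOrder A N cell) (hN : 0 < N) :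
    A.Ribbon := by
  refine ⟨h.connected hA hN, ?_⟩
  rintro i j ⟨hupper, -, -, hlower⟩
  obtain ⟨k, hk, hkc⟩ := hA.exists_eq _ hupper
  obtain ⟨l, hl, hlc⟩ := hA.exists_eq _ hlower
  have hkrow := hkc ▸ h.fst_eq hk
  have hlrow := hlc ▸ h.fst_eq hl
  have hkcol := hkc ▸ h.snd_add_eq hk
  have hlcol := hlc ▸ h.snd_add_eq hl
  have hkl := row_add_row_compl (rowEnds cell) k
  have hlk := row_add_row_compl (rowEnds cell) l
  obtain rfl : k = l := by omega
  omega

end IsRibbonPath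

/-- The filling of the boxes `cell 0, …, cell (N - 1)` by the letters of a word, shifted so as to
be positive. -/
def wordFilling (N : ℕ) (cell : ℕ → ℕ × ℕ) (y : ℕ → ℕ) (c : ℕ × ℕ) : ℕ :=
  ∑ k ∈ Finset.range N, if cell k = c then y k + 1 else 0

namespace IsReadingOrder

variable {lam y : ℕ → ℕ}

lemma wordFilling_cell (hA : IsReadingOrder A N cell) (y : ℕ → ℕ) (hk : k < N) :
    wordFilling N cell y (cell k) = y k + 1 := by
  rw [wordFilling, Finset.sum_eq_single_of_mem k (Finset.mem_range.2 hk), if_pos rfl]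
  exact fun l hl hlk => if_neg fun heq => hlk (hA.injOn (Finset.mem_range.1 hl) hk heq)

lemma wordFilling_of_notMem (hA : IsReadingOrder A N cell) (y : ℕ → ℕ) {c : ℕ × ℕ}
    (hc : c ∉ A.cells) : wordFilling N cell y c = 0 :=
  Finset.sum_eq_zero fun k hk =>
    if_neg fun heq : cell k = c => hc (heq ▸ hA.mem k (Finset.mem_range.1 hk))

lemma isSsyt_wordFilling (hA : IsReadingOrder A N cell) (h : IsRibbonPath N cell)
    (hy : IsBallotWord N (rowEnds cell) lam y) : A.IsSsyt (wordFilling N cell y) := by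
  refine ⟨fun c hc => ?_, fun i j j' hj hj' hle => ?_, fun i i' j hi hi' hlt => ?_⟩
  · obtain ⟨k, hk, rfl⟩ := hA.exists_eq c hc
    rw [hA.wordFilling_cell y hk]
    exact Nat.le_add_left 1 _
  · obtain ⟨k, hk, hkc⟩ := hA.exists_eq _ hj
    obtain ⟨l, hl, hlc⟩ := hA.exists_eq _ hj'
    have hlk : l ≤ k := (hA.readsBefore_iff hl hk).1 (hkc ▸ hlc ▸ .inr ⟨rfl, hle⟩)
    have hkrow := hkc ▸ h.fst_eq hk
    have hlrow := hlc ▸ h.fst_eq hl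
    rw [← hkc, ← hlc, hA.wordFilling_cell y hk, hA.wordFilling_cell y hl]
    exact Nat.add_le_add_right (hy.antitone_of_row_eq hlk hk (by omega)) 1
  · obtain ⟨k, hk, hkc⟩ := hA.exists_eq _ hi
    obtain ⟨l, hl, hlc⟩ := hA.exists_eq _ hi'
    have hkl : k ≤ l := (hA.readsBefore_iff hk hl).1 (hkc ▸ hlc ▸ .inl hlt)
    have hne : k ≠ l := by
      rintro rfl
      exact hlt.ne (congrArg Prod.fst (hkc.symm.trans hlc))
    have hkcol := hkc ▸ h.snd_add_eq hk
    have hlcol := hlc ▸ h.snd_add_eq hl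
    obtain ⟨d, rfl⟩ := Nat.exists_eq_add_of_le hkl
    rw [← hkc, ← hlc, hA.wordFilling_cell y hk, hA.wordFilling_cell y hl]
    have := hy.add_le_of_row_compl_eq hl (by omega)
    omega

lemma wordFilling_mem_LRset (hA : IsReadingOrder A N cell) (h : IsRibbonPath N cell)
    {mu : Multiset ℕ} (hy : IsBallotWord N (rowEnds cell) (part mu) y) :
    wordFilling N cell y ∈ A.LRset mu := by
  have hcount {n} (hn : n ≤ N) v :
      Nat.count (fun k => wordFilling N cell y (cell k) = v + 1) n = Nat.count (y · = v) n :=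
    count_congr fun k hk => by
      rw [hA.wordFilling_cell y (hk.trans_le hn), Nat.add_right_cancel_iff]
  refine ⟨⟨hA.isSsyt_wordFilling h hy, fun d hd v => ?_⟩, fun c => hA.wordFilling_of_notMem y,
    fun v => ?_⟩
  · obtain ⟨k, hk, rfl⟩ := hA.exists_eq d hd
    rw [hA.card_filter_readsBefore (wordFilling N cell y · = v + 2) hk,
      hA.card_filter_readsBefore (wordFilling N cell y · = v + 1) hk, hcount hk, hcount hk]
    exact hy.ballot (k + 1) v
  · rw [SkewShape.content, hA.card_filter_eq_count, hcount le_rfl, hy.count_eq]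

lemma nonempty_embedding_ballotWords_LRset (hA : IsReadingOrder A N cell)
    (h : IsRibbonPath N cell) (mu : Multiset ℕ) :
    Nonempty (ballotWords N (rowEnds cell) (part mu) ↪ A.LRset mu) := by
  refine ⟨fun y => ⟨wordFilling N cell y, hA.wordFilling_mem_LRset h y.2⟩,
    fun y z hyz => Subtype.ext (funext fun k => ?_)⟩
  have heq : wordFilling N cell y = wordFilling N cell z := congrArg Subtype.val hyz
  rcases lt_or_ge k N with hk | hk
  · rw [← Nat.add_right_cancel_iff, ← hA.wordFilling_cell y hk, ← hA.wordFilling_cell z hk, heq]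
  · rw [y.2.eq_zero k hk, z.2.eq_zero k hk]

end IsReadingOrder

end RibbonPath

section Rim

/-- The Young diagram generated by a finite set of boxes. -/
def lowerHull (t : Finset (ℕ × ℕ)) : YoungDiagram where
  cells := t.biUnion Finset.Iic
  isLowerSet b a hab hb := by
    simp only [Finset.coe_biUnion, Set.mem_iUnion, Finset.coe_Iic, Set.mem_Iic] at hb ⊢
    obtain ⟨d, hd, hbd⟩ := hb
    exact ⟨d, hd, hab.trans hbd⟩

lemma mem_lowerHull {t : Finset (ℕ × ℕ)} {c : ℕ × ℕ} : c ∈ lowerHull t ↔ ∃ d ∈ t, c ≤ d := by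
  rw [← YoungDiagram.mem_cells, lowerHull]
  simp only [Finset.mem_biUnion, Finset.mem_Iic]

/-- The rim of a Young diagram: its boxes without a diagonal neighbour to the south-east. -/
def rim (Y : YoungDiagram) : SkewShape where
  outer := Y
  inner :=
    { cells := Y.cells.filter fun c => c + (1, 1) ∈ Y
      isLowerSet b a hab hb := by
        simp only [Finset.coe_filter, Set.mem_ofPred_eq] at hb ⊢
        exact ⟨Y.isLowerSet hab hb.1, Y.isLowerSet (add_le_add_left hab _) hb.2⟩ }
  inner_le := Finset.filter_subset _ _

lemma mem_cells_rim {Y : YoungDiagram} {c : ℕ × ℕ} :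
    c ∈ (rim Y).cells ↔ c ∈ Y ∧ c + (1, 1) ∉ Y := by
  simp only [SkewShape.cells, rim, Finset.mem_sdiff, Finset.mem_filter, YoungDiagram.mem_cells]
  tauto

/-- The boxes of the ribbon with pattern `s`, in reading order. Its last box lies in column `0`. -/
def ribbonCell (N : ℕ) (s : ℕ → Bool) (k : ℕ) : ℕ × ℕ := (row s k, row sᶜ (N - 1) - row sᶜ k)

variable {N k l : ℕ} {s : ℕ → Bool}

lemma ribbonCell_snd_add (hk : k < N) : (ribbonCell N s k).2 + row sᶜ k = row sᶜ (N - 1) :=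
  Nat.sub_add_cancel (row_mono sᶜ (by omega))

lemma rowEnds_ribbonCell (N : ℕ) (s : ℕ → Bool) : rowEnds (ribbonCell N s) = s := by
  funext k
  rw [Bool.eq_iff_iff, rowEnds_eq_true_iff, ribbonCell, ribbonCell, row_succ]
  split_ifs with hs <;> simp [hs]

lemma isRibbonPath_ribbonCell (N : ℕ) (s : ℕ → Bool) : IsRibbonPath N (ribbonCell N s) := by
  intro k hk
  have hcol := ribbonCell_snd_add (s := s) (k.lt_succ_self.trans hk)
  have hcol' := ribbonCell_snd_add (s := s) hk
  have hrow := row_add_row_compl s k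
  have hrow' := row_add_row_compl s (k + 1)
  have hsucc := row_succ s k
  change row s (k + 1) = row s k ∧ _ ∨ row s (k + 1) = row s k + 1 ∧ _
  split_ifs at hsucc <;> omega

lemma not_ribbonCell_add_le (hk : k < N) (hl : l < N) :
    ¬ribbonCell N s k + (1, 1) ≤ ribbonCell N s l := by
  rintro ⟨hrow, hcol⟩
  have hkcol := ribbonCell_snd_add (s := s) hk
  have hlcol := ribbonCell_snd_add (s := s) hl
  simp only [Prod.fst_add, Prod.snd_add] at hrow hcol
  rcases le_total k l with hkl | hlk
  · have := row_mono sᶜ hkl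
    omega
  · have : (ribbonCell N s l).1 ≤ (ribbonCell N s k).1 := row_mono s hlk
    omega

lemma mem_cells_rim_iff {c : ℕ × ℕ} :
    c ∈ (rim (lowerHull ((Finset.range N).image (ribbonCell N s)))).cells ↔
      ∃ k < N, ribbonCell N s k = c := by
  simp only [mem_cells_rim, mem_lowerHull, Finset.exists_mem_image, Finset.mem_range]
  refine ⟨fun ⟨⟨l, hl, hcl⟩, hnot⟩ => ?_, ?_⟩
  · have hdiag k (hk : k < N) :
        (ribbonCell N s k).1 + row sᶜ (N - 1) = (ribbonCell N s k).2 + k := by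
      rw [← ribbonCell_snd_add hk]
      have : (ribbonCell N s k).1 + row sᶜ k = k := row_add_row_compl s k
      omega
    have hlast : (ribbonCell N s l).1 ≤ row s (N - 1) := row_mono s (by omega)
    have hcol := ribbonCell_snd_add (s := s) hl
    have hsum := row_add_row_compl s (N - 1)
    obtain ⟨hrow, hcol'⟩ := hcl
    obtain ⟨k, hkN, hk⟩ : ∃ k < N, c.1 + row sᶜ (N - 1) = c.2 + k :=
      ⟨c.1 + row sᶜ (N - 1) - c.2, by omega, by omega⟩
    have hkdiag := hdiag k hkN
    have hge : (ribbonCell N s k).1 ≤ c.1 := by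
      by_contra! hlt
      exact hnot ⟨k, hkN, ⟨hlt, show c.2 + 1 ≤ _ by omega⟩⟩
    have hle : c.1 ≤ (ribbonCell N s k).1 := by
      by_contra! hlt
      exact not_ribbonCell_add_le hkN hl
        ⟨hlt.trans_le hrow, (show _ + 1 ≤ c.2 by omega).trans hcol'⟩
    exact ⟨k, hkN, Prod.ext (by omega) (by omega)⟩
  · rintro ⟨k, hk, rfl⟩
    exact ⟨⟨k, hk, le_rfl⟩, fun ⟨l, hl, hle⟩ => not_ribbonCell_add_le hk hl hle⟩

lemma isReadingOrder_ribbonCell (N : ℕ) (s : ℕ → Bool) :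
    IsReadingOrder (rim (lowerHull ((Finset.range N).image (ribbonCell N s)))) N
      (ribbonCell N s) := by
  refine ⟨fun k hk => mem_cells_rim_iff.2 ⟨k, hk, rfl⟩, fun c => mem_cells_rim_iff.1,
    fun k l hkl hl => ?_⟩
  have hk := ribbonCell_snd_add (s := s) (hkl.trans hl)
  have hlast := ribbonCell_snd_add (s := s) hl
  have hrow : (ribbonCell N s k).1 ≤ (ribbonCell N s l).1 := row_mono s hkl.le
  have hksum : (ribbonCell N s k).1 + row sᶜ k = k := row_add_row_compl s k
  have hlsum : (ribbonCell N s l).1 + row sᶜ l = l := row_add_row_compl s l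
  omega

end Rim

section Maximality

variable {A R : SkewShape} {N : ℕ} {cell : ℕ → ℕ × ℕ} {lam y : ℕ → ℕ}

lemma exists_mem_LRset_of_ballotWords (hR : IsReadingOrder R N cell) (hpath : IsRibbonPath N cell)
    (hsupp : R.supp ⊆ A.supp) (hlam : (ballotWords N (rowEnds cell) lam).Nonempty) :
    ∃ mu T, part mu = lam ∧ T ∈ A.LRset mu := by
  obtain ⟨y, hy⟩ := hlam
  obtain ⟨mu, hmu, rfl⟩ := exists_part_eq (N := N) (IsBallotWord.content_antitone hy)
    fun _ => IsBallotWord.content_eq_zero hy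
  obtain ⟨-, T, hT⟩ :=
    mem_supp_iff.1 (hsupp (mem_supp_iff.2 ⟨hmu, _, hR.wordFilling_mem_LRset hpath hy⟩))
  exact ⟨mu, T, rfl, hT⟩

lemma IsReadingOrder.eq_one_of_left_mem (h : IsReadingOrder A N cell) (hA : A.Connected)
    {mu : Multiset ℕ} {T : ℕ × ℕ → ℕ} (hT : T ∈ A.LRset mu)
    (hmu : part mu 0 + rowCount N (rowEnds cell) = N + 1) {i j : ℕ} (hmem : (i, j) ∈ A.cells)
    (hright : (i, j + 1) ∈ A.cells) : T (i, j) = 1 := by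
  obtain ⟨k, hk, hkc⟩ := h.exists_eq _ hmem
  obtain ⟨p, hp, hpc⟩ := h.exists_eq _ hright
  have hpk : p < k := by
    refine ((h.readsBefore_iff hp hk).1 ?_).lt_of_ne fun heq => ?_
    · rw [hpc, hkc]
      exact .inr ⟨rfl, j.le_succ⟩
    · subst heq
      simpa using congrArg Prod.snd (hkc.symm.trans hpc)
  obtain ⟨q, rfl⟩ := Nat.exists_eq_add_one_of_ne_zero (by omega : k ≠ 0)
  have hq : ¬rowEnds cell q = true := by
    have hpq := hpc ▸ h.fst_le (show p ≤ q by omega) (by omega)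
    have hqk := hkc ▸ h.fst_le q.le_succ hk
    rw [rowEnds_eq_true_iff, hkc]
    exact not_not.2 (hqk.antisymm hpq)
  have hzero := (h.isBallotWord_readingWord hA hT.1 hT.2.2).eq_zero_of_not_break hmu hk hq
  rw [← hkc, ← h.readingWord_add_one hT.1.1 hk, hzero]

lemma IsReadingOrder.ribbon_of_mem_LRset (h : IsReadingOrder A N cell) (hA : A.Connected)
    {mu : Multiset ℕ} {T : ℕ × ℕ → ℕ} (hT : T ∈ A.LRset mu)
    (hmu : part mu 0 + rowCount N (rowEnds cell) = N + 1) : A.Ribbon := by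
  refine ⟨hA, fun i j ⟨hmem, _, hbelow, hdiag⟩ => ?_⟩
  have hone := h.eq_one_of_left_mem hA hT hmu hbelow hdiag
  have hpos := hT.1.1.1 _ hmem
  have hlt := hT.1.1.2.2 i (i + 1) j hmem hbelow i.lt_succ_self
  omega

lemma IsReadingOrder.ribbon_equitable_of_supp_subset {cellR : ℕ → ℕ × ℕ}
    (h : IsReadingOrder A N cell) (hA : A.Connected) (hN : 0 < N)
    (hR : IsReadingOrder R N cellR) (hpath : IsRibbonPath N cellR)
    (hcount : rowCount N (rowEnds cellR) = rowCount N (rowEnds cell))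
    (hrow : RowBalanced N (rowEnds cellR)) (hcol : RowBalanced N (rowEnds cellR)ᶜ)
    (hsupp : R.supp ⊆ A.supp) : A.Ribbon ∧ A.Equitable := by
  obtain ⟨lam, hlam, -, hbalanced⟩ := hrow.exists_content hN
  obtain ⟨mu, T, rfl, hT⟩ := exists_mem_LRset_of_ballotWords hR hpath hsupp hlam
  have hrow' := hbalanced _ hcount.symm ⟨_, h.isBallotWord_readingWord hA hT.1 hT.2.2⟩
  obtain ⟨lam, hlam, hfirst, hbalanced⟩ := hcol.exists_content_compl hN
  obtain ⟨mu, T, rfl, hT⟩ := exists_mem_LRset_of_ballotWords hR hpath hsupp hlam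
  have hcol' := hbalanced _ hcount.symm ⟨_, h.isBallotWord_readingWord hA hT.1 hT.2.2⟩
  have hribbon := h.ribbon_of_mem_LRset hA hT (hcount ▸ hfirst)
  have hpathA := h.isRibbonPath hribbon
  exact ⟨hribbon, hpathA.rowEquitable h hrow', hpathA.colEquitable h hcol'⟩

theorem exists_equitable_ribbon (hA : A.Connected) (hne : ¬(A.Ribbon ∧ A.Equitable)) :
    ∃ R : SkewShape, R.Ribbon ∧ R.Equitable ∧ R.size = A.size ∧ R.SchurPosDiff A ∧
      A.supp ⊂ R.supp ∧ ∀ mu, (R.LRset mu).Finite := by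
  have hN : 0 < A.size := Finset.card_pos.2 hA.1
  obtain ⟨cell, h⟩ := exists_isReadingOrder A
  obtain ⟨s, hle, hrow, hcol⟩ := exists_rowBalanced_compl hN (rowEnds cell)
  have hR := isReadingOrder_ribbonCell A.size s
  have hpath := isRibbonPath_ribbonCell A.size s
  rw [← rowEnds_ribbonCell A.size s] at hle hrow hcol
  set R := rim (lowerHull ((Finset.range A.size).image (ribbonCell A.size s)))
  have hribbon := hpath.ribbon hR hN
  have hfinite mu : (R.LRset mu).Finite :=
    have ⟨f⟩ := hR.nonempty_embedding_LRset hribbon.1 mu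
    Finite.of_injective f f.injective
  have hembedding mu : Nonempty (A.LRset mu ↪ R.LRset mu) :=
    have ⟨f⟩ := h.nonempty_embedding_LRset hA mu
    have ⟨g⟩ := hle.nonempty_embedding (part mu)
    have ⟨e⟩ := hR.nonempty_embedding_ballotWords_LRset hpath mu
    ⟨(f.trans g).trans e⟩
  refine ⟨R, hribbon, ⟨hpath.rowEquitable hR hrow, hpath.colEquitable hR hcol⟩, hR.size_eq,
    fun mu => ?_, ⟨fun mu hmu => ?_, fun hsupp => ?_⟩, hfinite⟩
  · obtain ⟨f⟩ := hembedding mu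
    have : Finite (R.LRset mu) := hfinite mu
    exact Nat.card_le_card_of_injective f f.injective
  · obtain ⟨f⟩ := hembedding mu
    rw [mem_supp_iff] at hmu ⊢
    exact ⟨hmu.1, hmu.2.elim fun T hT => ⟨f ⟨T, hT⟩, (f ⟨T, hT⟩).2⟩⟩
  · exact hne (h.ribbon_equitable_of_supp_subset hA hN hR hpath hle.rowCount_eq hrow hcol hsupp)

lemma not_schurPosDiff_of_supp_ssubset (hfinite : ∀ mu, (R.LRset mu).Finite)
    (hsupp : A.supp ⊂ R.supp) : ¬A.SchurPosDiff R := by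
  intro hpos
  obtain ⟨mu, hR, hA⟩ := Set.exists_of_ssubset hsupp
  rw [mem_supp_iff] at hR hA
  have hempty : A.LRset mu = ∅ := Set.not_nonempty_iff_eq_empty.1 fun h => hA ⟨hR.1, h⟩
  have hle := hpos mu
  rw [hempty, Set.ncard_empty] at hle
  exact ((Set.ncard_pos (hfinite mu)).2 hR.2).not_ge hle

end Maximality

end RibbonMaximality

/-- If `A` is a connected skew shape with `N` boxes that is not an
equitable ribbon, then there exists an equitable ribbon `R` with `N` boxes such
that `s_R − s_A` is Schur-positive and `supp A` is strictly contained in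
`supp R`.  Consequently, every connected skew shape that is maximal among
connected skew shapes of size `N` in the Schur-positivity order, or in the
support-containment order, is an equitable ribbon. -/
theorem maximal_connected_is_equitable_ribbon (N : ℕ) :
    (∀ A : SkewShape, A.Connected → A.size = N → ¬ (A.Ribbon ∧ A.Equitable) →
      ∃ R : SkewShape, R.Ribbon ∧ R.Equitable ∧ R.size = N ∧
        R.SchurPosDiff A ∧ A.supp ⊂ R.supp) ∧
    (∀ A : SkewShape, A.Connected → A.size = N →
      ((¬ ∃ B : SkewShape, B.Connected ∧ B.size = N ∧
          B.SchurPosDiff A ∧ ¬ A.SchurPosDiff B) ∨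
       (¬ ∃ B : SkewShape, B.Connected ∧ B.size = N ∧
          A.supp ⊆ B.supp ∧ A.supp ≠ B.supp)) →
      A.Ribbon ∧ A.Equitable) := by
  constructor
  · rintro A hA rfl hne
    obtain ⟨R, hribbon, hequitable, hsize, hpos, hsupp, -⟩ :=
      RibbonMaximality.exists_equitable_ribbon hA hne
    exact ⟨R, hribbon, hequitable, hsize, hpos, hsupp⟩
  · rintro A hA rfl hmax
    by_contra hne
    obtain ⟨R, hribbon, -, hsize, hpos, hsupp, hfinite⟩ :=
      RibbonMaximality.exists_equitable_ribbon hA hne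
    rcases hmax with hmax | hmax
    · exact hmax ⟨R, hribbon.1, hsize, hpos,
        RibbonMaximality.not_schurPosDiff_of_supp_ssubset hfinite hsupp⟩
    · exact hmax ⟨R, hribbon.1, hsize, hsupp.subset, hsupp.ne⟩
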